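/- arXiv:1308.4631 — 9 statements merged into one kernel-verified Lean document; each statement's English description precedes it below -/
import Mathlib

section
/- Let n ≥ 1 and let b be an n×n real upper triangular matrix such that Δ^m_k(b) > 0 for all 1 ≤ k ≤ m ≤ n. Then there exist unique vectors w^m ∈ (ℝ_{>0})^{n−m+1}, 1 ≤ m ≤ n, such that b = E_1(w^1) E_2(w^2) ⋯ E_n(w^n); moreover they are given explicitly by w^m_1 = Δ^m_1(b) and w^m_i = (Δ^{m+i−1}_i(b) · Δ^{m+i−2}_{i−2}(b)) / (Δ^{m+i−1}_{i−1}(b) · Δ^{m+i−2}_{i−1}(b)) for 1 < i ≤ n−m+1. -/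
/-- The minor `Δ^m_k(b)`: determinant of the `k × k` submatrix of `b` with rows `1,…,k`
and columns `m−k+1,…,m` (1-based), i.e. rows `0,…,k−1` and columns `m−k,…,m−1` (0-based).
For `k = 0` this is the determinant of the empty matrix, namely `1`. -/
noncomputable def Delta {n : ℕ} (b : Matrix (Fin n) (Fin n) ℝ) (k m : ℕ) : ℝ :=
  Matrix.det (Matrix.of fun i j : Fin k =>
    if h : (i : ℕ) < n ∧ m - k + (j : ℕ) < n then b ⟨i, h.1⟩ ⟨m - k + (j : ℕ), h.2⟩ else 0)

/-- `E_{p+1}(w)` (1-based index `m = p+1`): the block-diagonal matrix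
`diag(I_p, ε^{n-p}(w))`, where `w 0, w 1, …` are the entries `w_1, w_2, …`. -/
def Emat {n : ℕ} (p : ℕ) (w : ℕ → ℝ) : Matrix (Fin n) (Fin n) ℝ :=
  Matrix.of fun i j =>
    if (i : ℕ) < p then (if j = i then 1 else 0)
    else if j = i then w ((i : ℕ) - p)
    else if (j : ℕ) = (i : ℕ) + 1 then 1 else 0

/-!
The product `E_1(w^1) ⋯ E_n(w^n)` equals `E_1(w^1) · diag(1, c)`, where `c` is the same product one
size smaller. Left multiplication by `E_1(w^1)` adds to each row of `c` a multiple of the preceding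
one, so `Δ^{m+1}_k(b) = Δ^m_k(c)`, while comparing diagonals gives `b_{ii} = w^1_i c_{i-1,i-1}`,
which expresses `w^1` by minors of `b`. Conversely, removing the first column of `b` leaves an upper
Hessenberg matrix, whose leading principal minors are the nonzero `Δ^{k+1}_k(b)`; Gaussian
elimination on it, which subtracts from each row a multiple of the preceding one, produces `c`.
-/

section Minors

variable {R : Type*} [CommRing R] {n : ℕ}

/-- The `ℕ × ℕ` matrix with `b` in its top left corner and zeros elsewhere, so that entries and
minors can be indexed by natural numbers without proofs of bounds. -/
def zeroExtend (b : Matrix (Fin n) (Fin n) R) : ℕ → ℕ → R := fun i j =>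
  if h : i < n ∧ j < n then b ⟨i, h.1⟩ ⟨j, h.2⟩ else 0

/-- The leading principal `k × k` minor of an infinite matrix. -/
def leadingMinor (X : ℕ → ℕ → R) (k : ℕ) : R :=
  (Matrix.of fun i j : Fin k => X i j).det

/-- The minor `Δ^m_k(b)` over any commutative ring, definitionally equal to `Delta` over `ℝ`;
meaningful for `k ≤ m ≤ n`. -/
def topMinor (b : Matrix (Fin n) (Fin n) R) (k m : ℕ) : R :=
  leadingMinor (fun i j => zeroExtend b i (m - k + j)) k

@[simp]
lemma zeroExtend_val (b : Matrix (Fin n) (Fin n) R) (i j : Fin n) : zeroExtend b i j = b i j := by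
  simp [zeroExtend]

lemma zeroExtend_of_le_row (b : Matrix (Fin n) (Fin n) R) {i : ℕ} (hi : n ≤ i) (j : ℕ) :
    zeroExtend b i j = 0 :=
  dif_neg fun h => h.1.not_ge hi

lemma zeroExtend_mul (a b : Matrix (Fin n) (Fin n) R) (i j : ℕ) :
    zeroExtend (a * b) i j = ∑ l ∈ Finset.range n, zeroExtend a i l * zeroExtend b l j := by
  rw [← Fin.sum_univ_eq_sum_range fun l => zeroExtend a i l * zeroExtend b l j]
  by_cases hi : i < n <;> by_cases hj : j < n <;> simp [zeroExtend, hi, hj, Matrix.mul_apply]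

lemma zeroExtend_eq_zero_of_lt {b : Matrix (Fin n) (Fin n) R} (hb : b.IsUpperTriangular) {i j : ℕ}
    (hij : j < i) : zeroExtend b i j = 0 := by
  unfold zeroExtend
  split_ifs with h
  exacts [hb hij, rfl]

@[simp]
lemma leadingMinor_zero (X : ℕ → ℕ → R) : leadingMinor X 0 = 1 :=
  Matrix.det_fin_zero

@[simp]
lemma leadingMinor_one (X : ℕ → ℕ → R) : leadingMinor X 1 = X 0 0 :=
  Matrix.det_fin_one _

lemma leadingMinor_succ_of_upper {X : ℕ → ℕ → R} {k : ℕ}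
    (hX : ∀ i ≤ k, ∀ j < i, X i j = 0) :
    leadingMinor X (k + 1) = leadingMinor X k * X k k := by
  have h_corner (l : ℕ) (hl : l ≤ k + 1) :
      (Matrix.of fun i j : Fin l => X i j).IsUpperTriangular :=
    fun i j hij => hX i (by omega) j hij
  rw [leadingMinor, leadingMinor, Matrix.det_of_isUpperTriangular (h_corner (k + 1) le_rfl),
    Matrix.det_of_isUpperTriangular (h_corner k k.le_succ), Fin.prod_univ_castSucc]
  rfl

lemma leadingMinor_eq_of_rows {X Y : ℕ → ℕ → R} (a : ℕ → R) (h_zero : ∀ j, X 0 j = Y 0 j)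
    (h_succ : ∀ i j, X (i + 1) j = a i * Y i j + Y (i + 1) j) (k : ℕ) :
    leadingMinor X k = leadingMinor Y k := by
  rcases k with _ | k
  · simp only [leadingMinor_zero]
  · refine (Matrix.det_eq_of_forall_row_eq_smul_add_pred (fun i => -a i) (fun j => ?_)
      fun i j => ?_).symm
    · simpa using (h_zero j).symm
    · simp only [Matrix.of_apply, Fin.val_succ, Fin.val_castSucc, h_succ]
      ring

lemma topMinor_zero (b : Matrix (Fin n) (Fin n) R) (m : ℕ) : topMinor b 0 m = 1 :=
  leadingMinor_zero _

lemma topMinor_one (b : Matrix (Fin n) (Fin n) R) (m : ℕ) :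
    topMinor b 1 (m + 1) = zeroExtend b 0 m :=
  leadingMinor_one _

lemma topMinor_self (b : Matrix (Fin n) (Fin n) R) (k : ℕ) :
    topMinor b k k = leadingMinor (zeroExtend b) k := by
  simp [topMinor]

lemma topMinor_succ_self {b : Matrix (Fin n) (Fin n) R} (hb : b.IsUpperTriangular) (k : ℕ) :
    topMinor b (k + 1) (k + 1) = topMinor b k k * zeroExtend b k k := by
  simp only [topMinor_self]
  exact leadingMinor_succ_of_upper fun i _ j hij => zeroExtend_eq_zero_of_lt hb hij

end Minors

section Factors

variable {R : Type*} [CommRing R] {n : ℕ}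

/-- The factor `E_{p+1}(w)` over any commutative ring, definitionally equal to `Emat` over `ℝ`. -/
def blockBidiag (p : ℕ) (w : ℕ → R) : Matrix (Fin n) (Fin n) R :=
  Matrix.of fun i j =>
    if (i : ℕ) < p then (if j = i then 1 else 0)
    else if j = i then w ((i : ℕ) - p)
    else if (j : ℕ) = (i : ℕ) + 1 then 1 else 0

/-- The block-diagonal matrix `diag(1, A)`, as a homomorphism in `A`. -/
def border : Matrix (Fin n) (Fin n) R →* Matrix (Fin (n + 1)) (Fin (n + 1)) R where
  toFun A := Matrix.of (Fin.cons (Pi.single 0 1) fun i => Fin.cons 0 (A i))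
  map_one' := by
    ext i j
    cases i using Fin.cases <;> cases j using Fin.cases <;> simp [Matrix.one_apply, Fin.ext_iff]
  map_mul' A B := by
    ext i j
    cases i using Fin.cases <;> cases j using Fin.cases <;>
      simp [Matrix.mul_apply, Fin.sum_univ_succ]

/-- The product `E_1(w^1) ⋯ E_n(w^n)`, with `w m i` standing for `w^{m+1}_{i+1}`. -/
def bidiagProd (n : ℕ) (w : ℕ → ℕ → R) : Matrix (Fin n) (Fin n) R :=
  ((List.finRange n).map fun m : Fin n => blockBidiag (m : ℕ) (w m)).prod

lemma blockBidiag_congr {p : ℕ} {v w : ℕ → R} (h : ∀ i < n - p, v i = w i) :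
    (blockBidiag p v : Matrix (Fin n) (Fin n) R) = blockBidiag p w := by
  ext i j
  by_cases hi : (i : ℕ) < p
  · simp [blockBidiag, hi]
  · simp [blockBidiag, hi, h (i - p) (by omega)]

lemma blockBidiag_isUpperTriangular (p : ℕ) (w : ℕ → R) :
    (blockBidiag p w : Matrix (Fin n) (Fin n) R).IsUpperTriangular := by
  intro i j (hij : j < i)
  have hne : (j : ℕ) ≠ i + 1 := by omega
  simp [blockBidiag, hij.ne, hne]

lemma bidiagProd_isUpperTriangular (w : ℕ → ℕ → R) : (bidiagProd n w).IsUpperTriangular := by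
  refine List.prod_induction Matrix.IsUpperTriangular (fun _ _ => Matrix.BlockTriangular.mul)
    Matrix.blockTriangular_one fun x hx => ?_
  obtain ⟨m, -, rfl⟩ := List.mem_map.1 hx
  exact blockBidiag_isUpperTriangular _ _

lemma zeroExtend_blockBidiag_zero_mul (v : ℕ → R) (A : Matrix (Fin n) (Fin n) R) (i j : ℕ) :
    zeroExtend (blockBidiag 0 v * A) i j = v i * zeroExtend A i j + zeroExtend A (i + 1) j := by
  rcases lt_or_ge i n with hi | hi
  swap
  · simp only [zeroExtend_of_le_row _ hi, zeroExtend_of_le_row _ (Nat.le_succ_of_le hi), mul_zero,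
      add_zero]
  have h_entry : ∀ l ∈ Finset.range n, zeroExtend (blockBidiag 0 v : Matrix (Fin n) (Fin n) R) i l =
      (if l = i then v i else 0) + if l = i + 1 then 1 else 0 := by
    intro l hl
    by_cases hli : l = i <;> simp_all [zeroExtend, blockBidiag]
  rw [zeroExtend_mul, Finset.sum_congr rfl fun l hl => by rw [h_entry l hl]]
  simp only [add_mul, ite_mul, zero_mul, one_mul, Finset.sum_add_distrib, Finset.sum_ite_eq',
    Finset.mem_range, hi, if_true]
  split_ifs with hi'
  · rfl
  · rw [zeroExtend_of_le_row _ (not_lt.1 hi')]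

@[simp]
lemma zeroExtend_border_zero_zero (A : Matrix (Fin n) (Fin n) R) :
    zeroExtend (border A) 0 0 = 1 := by
  simp [zeroExtend, border]

@[simp]
lemma zeroExtend_border_zero_succ (A : Matrix (Fin n) (Fin n) R) (j : ℕ) :
    zeroExtend (border A) 0 (j + 1) = 0 := by
  simp [zeroExtend, border, Fin.ext_iff]

@[simp]
lemma zeroExtend_border_succ_zero (A : Matrix (Fin n) (Fin n) R) (i : ℕ) :
    zeroExtend (border A) (i + 1) 0 = 0 := by
  by_cases hi : i < n
  · exact dif_pos (And.intro (Nat.succ_lt_succ hi) n.succ_pos)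
  · simp [zeroExtend, hi]

@[simp]
lemma zeroExtend_border_succ_succ (A : Matrix (Fin n) (Fin n) R) (i j : ℕ) :
    zeroExtend (border A) (i + 1) (j + 1) = zeroExtend A i j := by
  simp only [zeroExtend, Nat.succ_lt_succ_iff]
  rfl

lemma border_blockBidiag (p : ℕ) (w : ℕ → R) :
    border (blockBidiag p w : Matrix (Fin n) (Fin n) R) = blockBidiag (p + 1) w := by
  ext i j
  cases i using Fin.cases <;> cases j using Fin.cases <;>
    simp [border, blockBidiag, Fin.ext_iff]

lemma bidiagProd_succ (w : ℕ → ℕ → R) :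
    bidiagProd (n + 1) w = blockBidiag 0 (w 0) * border (bidiagProd n fun m => w (m + 1)) := by
  simp [bidiagProd, List.finRange_succ, map_list_prod, Function.comp_def, border_blockBidiag]

lemma topMinor_blockBidiag_mul_border (v : ℕ → R) (c : Matrix (Fin n) (Fin n) R) {k m : ℕ}
    (hkm : k ≤ m) : topMinor (blockBidiag 0 v * border c) k (m + 1) = topMinor c k m := by
  unfold topMinor
  have h_col (j : ℕ) : m + 1 - k + j = m - k + j + 1 := by omega
  refine leadingMinor_eq_of_rows (fun i => v (i + 1)) (fun j => ?_) (fun i j => ?_) k <;>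
    simp only [h_col, zeroExtend_blockBidiag_zero_mul, zeroExtend_border_zero_succ,
      zeroExtend_border_succ_succ, mul_zero, zero_add]

end Factors

section Elimination

variable {K : Type*} [Field K]

/-- Gaussian elimination on an upper Hessenberg matrix: each row is cleared below the diagonal by
subtracting a multiple of the preceding reduced row. Division by a zero pivot gives junk. -/
def hessenbergElim (X : ℕ → ℕ → K) : ℕ → ℕ → K
  | 0 => X 0
  | i + 1 => X (i + 1) - (X (i + 1) i / hessenbergElim X i i) • hessenbergElim X i

lemma eq_mul_hessenbergElim_add (X : ℕ → ℕ → K) (i j : ℕ) :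
    X (i + 1) j = X (i + 1) i / hessenbergElim X i i * hessenbergElim X i j +
      hessenbergElim X (i + 1) j := by
  simp [hessenbergElim]

lemma leadingMinor_hessenbergElim (X : ℕ → ℕ → K) (k : ℕ) :
    leadingMinor (hessenbergElim X) k = leadingMinor X k :=
  (leadingMinor_eq_of_rows (X := X) (Y := hessenbergElim X) _ (fun _ => rfl)
    (eq_mul_hessenbergElim_add X) k).symm

lemma hessenbergElim_eq_zero {X : ℕ → ℕ → K} {N : ℕ} (hX : ∀ i j, j + 1 < i → X i j = 0)
    (hne : ∀ k ≤ N, leadingMinor X k ≠ 0) {i : ℕ} (hi : i ≤ N) {j : ℕ} (hj : j < i) :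
    hessenbergElim X i j = 0 := by
  induction i using Nat.strong_induction_on generalizing j with
  | _ i ih =>
  obtain ⟨i, rfl⟩ := Nat.exists_eq_add_one_of_ne_zero (Nat.ne_zero_of_lt hj)
  rcases (Nat.lt_succ_iff.1 hj).lt_or_eq with hji | rfl
  · simp [hessenbergElim, hX (i + 1) j (by omega), ih i (by omega) (by omega) hji]
  · have h_minor : leadingMinor (hessenbergElim X) (j + 1) =
        leadingMinor (hessenbergElim X) j * hessenbergElim X j j :=
      leadingMinor_succ_of_upper fun i' hi' j' hj' => ih i' (by omega) (by omega) hj'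
    have h_pivot : hessenbergElim X j j ≠ 0 := by
      rw [leadingMinor_hessenbergElim] at h_minor
      exact right_ne_zero_of_mul (h_minor ▸ hne (j + 1) hi)
    simp [hessenbergElim, h_pivot]

lemma exists_eq_blockBidiag_mul_border {n : ℕ} {b : Matrix (Fin (n + 1)) (Fin (n + 1)) K}
    (hb : b.IsUpperTriangular) (hne : ∀ k ≤ n, topMinor b k (k + 1) ≠ 0) :
    ∃ (v : ℕ → K) (c : Matrix (Fin n) (Fin n) K),
      c.IsUpperTriangular ∧ b = blockBidiag 0 v * border c := by
  set X : ℕ → ℕ → K := fun i j => zeroExtend b i (1 + j) with hX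
  have h_zero {i j : ℕ} (hi : i ≤ n) (hj : j < i) : hessenbergElim X i j = 0 :=
    hessenbergElim_eq_zero (fun i j hij => zeroExtend_eq_zero_of_lt hb (by omega))
      (fun k hk => by simpa [topMinor] using hne k hk) hi hj
  let v : ℕ → K
    | 0 => zeroExtend b 0 0
    | i + 1 => X (i + 1) i / hessenbergElim X i i
  let c : Matrix (Fin n) (Fin n) K := Matrix.of fun i j => hessenbergElim X i j
  have hc {i j : ℕ} (hi : i ≤ n) (hj : j < n) : zeroExtend c i j = hessenbergElim X i j := by
    rcases hi.lt_or_eq with hi | rfl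
    · simp [zeroExtend, c, hi, hj]
    · rw [zeroExtend_of_le_row c le_rfl, h_zero le_rfl hj]
  refine ⟨v, c, fun i j hij => h_zero i.2.le hij, ?_⟩
  ext i j
  rw [← zeroExtend_val b, ← zeroExtend_val (_ * _), zeroExtend_blockBidiag_zero_mul]
  cases i using Fin.cases with
  | zero =>
    cases j using Fin.cases with
    | zero => simp [v]
    | succ j => simp [hc (Nat.zero_le n) j.2, hessenbergElim, hX, add_comm]
  | succ i =>
    cases j using Fin.cases with
    | zero => simpa using zeroExtend_eq_zero_of_lt hb (Nat.succ_pos i)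
    | succ j =>
      simp only [Fin.val_succ, zeroExtend_border_succ_succ, hc i.2.le j.2, hc i.2 j.2, v,
        ← eq_mul_hessenbergElim_add]
      simp only [hX, add_comm]

end Elimination

section Parameters

variable {K : Type*} [Field K] {n : ℕ}

/-- The parameter `w^{m+1}_{i+1}` of the factorization, as a ratio of minors. At `i = 0` the
subtraction `i - 1` truncates, three of the minors are empty and the ratio is `Δ^{m+1}_1(b)`. -/
def bidiagParam (b : Matrix (Fin n) (Fin n) K) (m i : ℕ) : K :=
  topMinor b (i + 1) (m + i + 1) * topMinor b (i - 1) (m + i) /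
    (topMinor b i (m + i + 1) * topMinor b i (m + i))

lemma bidiagParam_zero (b : Matrix (Fin n) (Fin n) K) (m : ℕ) :
    bidiagParam b m 0 = topMinor b 1 (m + 1) := by
  simp [bidiagParam, topMinor_zero]

lemma bidiagParam_pos [LinearOrder K] [IsStrictOrderedRing K] {b : Matrix (Fin n) (Fin n) K}
    (hpos : ∀ k m, 1 ≤ k → k ≤ m → m ≤ n → 0 < topMinor b k m) {m i : ℕ} (hmi : m + i < n) :
    0 < bidiagParam b m i := by
  have hpos' : ∀ k m, k ≤ m → m ≤ n → 0 < topMinor b k m := by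
    rintro (_ | k) m hkm hmn
    · exact topMinor_zero b m ▸ one_pos
    · exact hpos _ _ k.succ_pos hkm hmn
  exact div_pos (mul_pos (hpos' _ _ (by omega) (by omega)) (hpos' _ _ (by omega) (by omega)))
    (mul_pos (hpos' _ _ (by omega) (by omega)) (hpos' _ _ (by omega) (by omega)))

lemma bidiagParam_succ_blockBidiag_mul_border (v : ℕ → K) (c : Matrix (Fin n) (Fin n) K)
    (m i : ℕ) : bidiagParam (blockBidiag 0 v * border c) (m + 1) i = bidiagParam c m i := by
  simp only [bidiagParam, Nat.succ_add]
  iterate 4 rw [topMinor_blockBidiag_mul_border _ _ (by omega)]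

lemma bidiagParam_zero_blockBidiag_mul_border {v : ℕ → K} {c : Matrix (Fin n) (Fin n) K}
    (hb : (blockBidiag 0 v * border c).IsUpperTriangular) (hc : c.IsUpperTriangular)
    (hne : ∀ k m, k ≤ m → m ≤ n + 1 → topMinor (blockBidiag 0 v * border c) k m ≠ 0)
    {i : ℕ} (hi : i ≤ n) : bidiagParam (blockBidiag 0 v * border c) 0 i = v i := by
  rcases i with _ | i
  · simp [bidiagParam_zero, topMinor_one, zeroExtend_blockBidiag_zero_mul]
  set b := blockBidiag 0 v * border c with hbdef
  have h_diag : zeroExtend b (i + 1) (i + 1) = v (i + 1) * zeroExtend c i i := by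
    simp [hbdef, zeroExtend_blockBidiag_zero_mul, zeroExtend_eq_zero_of_lt hc i.lt_succ_self]
  have h_next : topMinor b (i + 1) (i + 2) = topMinor b i (i + 1) * zeroExtend c i i := by
    simp only [hbdef, topMinor_blockBidiag_mul_border _ _ le_rfl, topMinor_succ_self hc]
  have h_den := mul_ne_zero (hne (i + 1) (i + 2) (by omega) (by omega))
    (hne (i + 1) (i + 1) le_rfl (by omega))
  simp only [bidiagParam, zero_add, Nat.add_sub_cancel]
  rw [div_eq_iff h_den, topMinor_succ_self hb, h_diag, h_next]
  ring

theorem eq_bidiagProd_iff {b : Matrix (Fin n) (Fin n) K} (hb : b.IsUpperTriangular)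
    (hne : ∀ k m, k ≤ m → m ≤ n → topMinor b k m ≠ 0) (w : ℕ → ℕ → K) :
    b = bidiagProd n w ↔ ∀ m i, m + i < n → w m i = bidiagParam b m i := by
  induction n generalizing w with
  | zero => exact ⟨fun _ m i hmi => by omega, fun _ => Subsingleton.elim _ _⟩
  | succ n ih =>
    have hne_c {v : ℕ → K} {c : Matrix (Fin n) (Fin n) K} (hbc : b = blockBidiag 0 v * border c)
        (k m : ℕ) (hkm : k ≤ m) (hmn : m ≤ n) : topMinor c k m ≠ 0 := by
      rw [← topMinor_blockBidiag_mul_border v c hkm, ← hbc]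
      exact hne k (m + 1) (by omega) (by omega)
    rw [bidiagProd_succ]
    constructor
    · intro hbw m i hmi
      have hc := bidiagProd_isUpperTriangular (n := n) fun m => w (m + 1)
      have h_params := (ih hc (hne_c hbw) _).1 rfl
      rcases m with _ | m
      · subst hbw
        exact (bidiagParam_zero_blockBidiag_mul_border hb hc hne (by omega)).symm
      · rw [hbw, bidiagParam_succ_blockBidiag_mul_border]
        exact h_params m i (by omega)
    · intro hw
      obtain ⟨v, c, hc, hbc⟩ := exists_eq_blockBidiag_mul_border hb
        fun k hk => hne k (k + 1) (by omega) (by omega)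
      have h_head : ∀ i < n + 1, v i = w 0 i := by
        intro i hi
        rw [hw 0 i (by omega)]
        subst hbc
        exact (bidiagParam_zero_blockBidiag_mul_border hb hc hne (by omega)).symm
      have h_tail : c = bidiagProd n fun m => w (m + 1) := by
        refine (ih hc (hne_c hbc) _).2 fun m i hmi => ?_
        rw [hw (m + 1) i (by omega), hbc, bidiagParam_succ_blockBidiag_mul_border]
      rw [hbc, blockBidiag_congr h_head, ← h_tail]

theorem stmt0_general {b : Matrix (Fin n) (Fin n) K} (hb : b.IsUpperTriangular)
    (hne : ∀ k m, 1 ≤ k → k ≤ m → m ≤ n → topMinor b k m ≠ 0)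
    (w : (m : Fin n) → Fin (n - (m : ℕ)) → K) :
    b = ((List.finRange n).map fun m : Fin n =>
        blockBidiag (m : ℕ) fun l => if h : l < n - (m : ℕ) then w m ⟨l, h⟩ else 0).prod ↔
      ∀ m i, w m i = bidiagParam b m i := by
  let W (m l : ℕ) : K :=
    if hm : m < n then if h : l < n - m then w ⟨m, hm⟩ ⟨l, h⟩ else 0 else 0
  have hW (m : Fin n) : W m = fun l => if h : l < n - (m : ℕ) then w m ⟨l, h⟩ else 0 := by
    simp [W]
  have hne' : ∀ k m, k ≤ m → m ≤ n → topMinor b k m ≠ 0 := by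
    rintro (_ | k) m hkm hmn
    · exact topMinor_zero b m ▸ one_ne_zero
    · exact hne _ _ k.succ_pos hkm hmn
  simp only [← hW]
  refine (eq_bidiagProd_iff hb hne' W).trans ⟨fun (h : ∀ m i, _) m i => ?_, fun h m i hmi => ?_⟩
  · simpa [W] using h m i (by omega)
  · simpa [W, show m < n by omega, show i < n - m by omega] using
      h ⟨m, by omega⟩ ⟨i, Nat.lt_sub_iff_add_lt'.2 hmi⟩

end Parameters

/-- If `b` is upper triangular with all minors `Δ^m_k(b) > 0`
(`1 ≤ k ≤ m ≤ n`), then there are unique positive vectors `w^m ∈ ℝ^{n-m+1}` with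
`b = E_1(w^1) ⋯ E_n(w^n)`, and they are given explicitly in terms of the minors. -/
theorem stmt0 (n : ℕ) (hn : 1 ≤ n) (b : Matrix (Fin n) (Fin n) ℝ)
    (htri : ∀ i j : Fin n, j < i → b i j = 0)
    (hpos : ∀ k m : ℕ, 1 ≤ k → k ≤ m → m ≤ n → 0 < Delta b k m) :
    (∃! w : (m : Fin n) → Fin (n - (m : ℕ)) → ℝ,
      (∀ m i, 0 < w m i) ∧
      b = ((List.finRange n).map (fun (m : Fin n) =>
        Emat (n := n) (m : ℕ) (fun l => if h : l < n - (m : ℕ) then w m ⟨l, h⟩ else 0))).prod) ∧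
    (∀ w : (m : Fin n) → Fin (n - (m : ℕ)) → ℝ,
      (∀ m i, 0 < w m i) →
      b = ((List.finRange n).map (fun (m : Fin n) =>
        Emat (n := n) (m : ℕ) (fun l => if h : l < n - (m : ℕ) then w m ⟨l, h⟩ else 0))).prod →
      ∀ (m : Fin n) (i : Fin (n - (m : ℕ))),
        if (i : ℕ) = 0 then w m i = Delta b 1 ((m : ℕ) + 1)
        else w m i =
          Delta b ((i : ℕ) + 1) ((m : ℕ) + (i : ℕ) + 1) * Delta b ((i : ℕ) - 1) ((m : ℕ) + (i : ℕ)) /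
            (Delta b (i : ℕ) ((m : ℕ) + (i : ℕ) + 1) * Delta b (i : ℕ) ((m : ℕ) + (i : ℕ)))) := by
  have h := stmt0_general (fun i j => htri i j) fun k m hk hkm hmn =>
    (hpos k m hk hkm hmn).ne'
  refine ⟨⟨fun m i => bidiagParam b m i, ⟨fun m i => bidiagParam_pos hpos (by omega),
    (h _).2 fun _ _ => rfl⟩, fun w hw => funext₂ ((h w).1 hw.2)⟩, fun w _ hw m i => ?_⟩
  split_ifs with hi
  · rw [(h w).1 hw, hi, bidiagParam_zero]; rfl
  · exact (h w).1 hw m i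
end

section
/- For all 1 ≤ k ≤ m ≤ n and t > 0, Δ^m_k(b(t)) = ∫_{Ω^m_k(t)} e^{E_η(φ_1)+⋯+E_η(φ_k)} dφ_1⋯dφ_k, where Ω^m_k(t) is the set of k-tuples (φ_1,…,φ_k) with φ_r ∈ Ω_{r, m−k+r}(t) for 1 ≤ r ≤ k, whose associated step functions satisfy φ_1(u) < φ_2(u) < ⋯ < φ_k(u) for every u ∈ [0,t] (that is, k non-intersecting down-right paths starting at heights m−k+1,…,m at time 0 and ending at heights 1,…,k at time t), and the integral is with respect to Lebesgue measure on this set. -/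
open MeasureTheory

/-- `Ω_{ij}(t)` for a path with `d = j - i` jump times, parametrised in increasing order:
`u 0 = s_{j-1} < u 1 = s_{j-2} < ⋯ < u (d-1) = s_i`, all lying in `(0, t)`. -/
def chainSet (d : ℕ) (t : ℝ) : Set (Fin d → ℝ) :=
  {u | StrictMono u ∧ ∀ l, u l ∈ Set.Ioo (0 : ℝ) t}

/-- The energy `E_η(φ)` of the down-right path from level `j` (at time `0`) to level `i`
(at time `t`), with jump times `u 0 < u 1 < ⋯ < u (j-i-1)` (so `u l = s_{j-1-l}`, with the
convention `s_{i-1} = t`):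
`E_η(φ) = η_j(s_{j-1}) + Σ_{l=i}^{j-1} (η_l(s_{l-1}) − η_l(s_l))`.
When `i = j` this is `η_i(t)`. -/
noncomputable def pathE (η : ℝ → ℕ → ℝ) (i j : ℕ) (t : ℝ) (u : ℕ → ℝ) : ℝ :=
  let v : ℕ → ℝ := fun l => if l < j - i then u l else t
  η (v 0) j + ∑ r ∈ Finset.range (j - i),
    (η (v (j - i - r)) (i + r) - η (v (j - i - 1 - r)) (i + r))

/-- The matrix `b(t)` of the continuous-time geometric RSK correspondence:
`b_{ii}(t) = e^{η_i(t)}`, `b_{ij}(t) = ∫_{Ω_{ij}(t)} e^{E_η(φ)} dφ` for `i < j`,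
and `b_{ij}(t) = 0` for `i > j` (indices `1,…,n`; row `p` of the Lean matrix is row `p+1`). -/
noncomputable def grsk (n : ℕ) (η : ℝ → ℕ → ℝ) (t : ℝ) : Matrix (Fin n) (Fin n) ℝ :=
  Matrix.of fun i j : Fin n =>
    if (i : ℕ) = (j : ℕ) then Real.exp (η t ((i : ℕ) + 1))
    else if (i : ℕ) < (j : ℕ) then
      ∫ u in chainSet ((j : ℕ) - (i : ℕ)) t,
        Real.exp (pathE η ((i : ℕ) + 1) ((j : ℕ) + 1) t
          (fun l => if h : l < (j : ℕ) - (i : ℕ) then u ⟨l, h⟩ else 0))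
    else 0

/-- The step function associated to the down-right path starting at level `j` with `d`
jump times `u`: its value at time `s` is `j` minus the number of jump times `≤ s`. -/
noncomputable def pathStep (j d : ℕ) (u : Fin d → ℝ) (s : ℝ) : ℕ :=
  j - (Finset.univ.filter (fun l : Fin d => u l ≤ s)).card

/-- `Ω^m_k(t)`: the set of `k`-tuples of non-intersecting down-right paths, the `r`-th
path (`r = 1,…,k`) going from level `m−k+r` at time `0` to level `r` at time `t`
(so each has `m−k` jump times), whose step functions are strictly increasing in `r`
at every time `s ∈ [0,t]`. -/
def nonint (m k : ℕ) (t : ℝ) : Set (Fin k → Fin (m - k) → ℝ) :=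
  {φ | (∀ r, φ r ∈ chainSet (m - k) t) ∧
    ∀ s ∈ Set.Icc (0 : ℝ) t, ∀ r r' : Fin k, r < r' →
      pathStep (m - k + (r : ℕ) + 1) (m - k) (φ r) s <
        pathStep (m - k + (r' : ℕ) + 1) (m - k) (φ r') s}


/-!
The entries of `b(t)` are `e^{η_i(t)}` times iterated integrals `a_{ij}(t)` of the jump weights
`w_h(s) = e^{η_{h+1}(s) - η_h(s)}`, which satisfy `a_{ij}(y) - a_{ij}(x) = ∫_x^y w_i a_{i+1,j}`.
Consider the determinant with rows `a_{r,·}(τ_r)`, `1 ≤ r ≤ k`, and columns `d + 1, …, d + k`,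
where `0 ≤ τ_1 ≤ ⋯ ≤ τ_k` and `d ≥ 1`. Since `a_{1,·}(0) = 0` on these columns, row `1` is the
integral over `s_1 ∈ [0, τ_1)` of `w_1(s_1) a_{2,·}(s_1)`. Once row `1` is `a_{2,·}(s_1)`, it can be
subtracted from row `2`, which becomes an integral over `s_2 ∈ [s_1, τ_2)`, and so on: the
determinant is the integral, over nondecreasing `s_r < τ_r`, of the product of the weights and the
same kind of determinant with one jump less per path. Iterating peels off the jump times layer by
layer and leaves the integral over the families of paths whose `l`-th jump times are nondecreasing
in `r` for each `l`. This interlacing of jump times is exactly non-intersection.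
-/

namespace NonintersectingPaths

section Fubini

variable {X α β F : Type*} [MeasurableSpace X] [MeasurableSpace α] [MeasurableSpace β]
  [NormedAddCommGroup F]

theorem integrableOn_fintype_prod {ι : Type*} [Fintype ι] {M : ι → Type*}
    [∀ i, MeasureSpace (M i)] [∀ i, SigmaFinite (volume : Measure (M i))] {f : ∀ i, M i → ℝ}
    {s : ∀ i, Set (M i)} (hf : ∀ i, IntegrableOn (f i) (s i)) :
    IntegrableOn (fun x : ∀ i, M i => ∏ i, f i (x i)) (Set.univ.pi s) := by
  rw [IntegrableOn, volume_pi, Measure.restrict_pi_pi]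
  exact .fintype_prod_dep hf

theorem setIntegral_eq_setIntegral_fiber [NormedSpace ℝ F] {μ : Measure X} {ν : Measure α}
    {ρ : Measure β} [SFinite ν] [SFinite ρ] {e : X ≃ᵐ α × β}
    (he : MeasurePreserving e μ (ν.prod ρ)) {S : Set X} {P : Set α} {Q : α → Set β}
    (hS : MeasurableSet S) (hP : MeasurableSet P)
    (hmem : ∀ a b, e.symm (a, b) ∈ S ↔ a ∈ P ∧ b ∈ Q a) {f : X → F} (hf : IntegrableOn f S μ) :
    ∫ x in S, f x ∂μ = ∫ a in P, ∫ b in Q a, f (e.symm (a, b)) ∂ρ ∂ν := by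
  have he' : MeasurePreserving e.symm (ν.prod ρ) μ := he.symm e
  have hint : Integrable (fun p => S.indicator f (e.symm p)) (ν.prod ρ) :=
    (he'.integrable_comp_emb e.symm.measurableEmbedding).2 ((integrable_indicator_iff hS).2 hf)
  rw [← integral_indicator hS, ← he'.integral_comp' (S.indicator f), integral_prod _ hint,
    ← integral_indicator hP]
  congr 1 with a
  by_cases ha : a ∈ P
  · have hQ : (fun b => e.symm (a, b)) ⁻¹' S = Q a := by ext b; simp [hmem, ha]
    have hQ_meas : MeasurableSet ((fun b => e.symm (a, b)) ⁻¹' S) :=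
      (e.symm.measurable.comp measurable_prodMk_left) hS
    rw [Set.indicator_of_mem ha, ← hQ, ← integral_indicator hQ_meas]
    rfl
  · simp [Set.indicator, hmem, ha]

theorem intervalIntegrable_of_locallyIntegrable {f : ℝ → F} (hf : LocallyIntegrable f) (a b : ℝ) :
    IntervalIntegrable f volume a b :=
  (hf.integrableOn_isCompact isCompact_uIcc).intervalIntegrable

end Fubini

section MonotoneBox

open Set

variable {k : ℕ}

/-- The vectors `x ≤ s_1 ≤ ⋯ ≤ s_k` with `s_r < τ_r`: the domain over which the `r`-th row of a
determinant is integrated when one jump of each of `k` paths is peeled off. -/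
def monotoneBox (x : ℝ) (τ : Fin k → ℝ) : Set (Fin k → ℝ) :=
  {s | Monotone s ∧ ∀ r, s r ∈ Ico x (τ r)}

theorem monotone_cons_iff {a : ℝ} {s : Fin k → ℝ} :
    Monotone (Fin.cons a s : Fin (k + 1) → ℝ) ↔ (∀ r, a ≤ s r) ∧ Monotone s := by
  refine ⟨fun h => ⟨fun r => h (Fin.zero_le r.succ), fun i j hij => h (Fin.succ_le_succ_iff.2 hij)⟩,
    fun h i j => ?_⟩
  cases i using Fin.cases <;> cases j using Fin.cases
  · simp
  · simpa using h.1 _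
  · simp
  · simpa using @h.2 _ _

theorem cons_mem_monotoneBox_iff {x a : ℝ} {τ : Fin (k + 1) → ℝ} {s : Fin k → ℝ} :
    (Fin.cons a s : Fin (k + 1) → ℝ) ∈ monotoneBox x τ ↔
      a ∈ Ico x (τ 0) ∧ s ∈ monotoneBox a (Fin.tail τ) := by
  simp only [monotoneBox, mem_ofPred_eq, monotone_cons_iff, Fin.forall_fin_succ, Fin.cons_zero,
    Fin.cons_succ, mem_Ico, Fin.tail]
  constructor
  · rintro ⟨⟨has, hs⟩, ha, hsτ⟩
    exact ⟨ha, hs, fun r => ⟨has r, (hsτ r).2⟩⟩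
  · rintro ⟨ha, hs, hsτ⟩
    exact ⟨⟨fun r => (hsτ r).1, hs⟩, ha, fun r => ⟨ha.1.trans (hsτ r).1, (hsτ r).2⟩⟩

theorem measurableSet_setOf_monotone_and_forall_mem {I : Fin k → Set ℝ}
    (hI : ∀ r, MeasurableSet (I r)) :
    MeasurableSet {s : Fin k → ℝ | Monotone s ∧ ∀ r, s r ∈ I r} := by
  convert isClosed_monotone.measurableSet.inter (MeasurableSet.univ_pi hI) using 1
  ext s
  simp

theorem measurableSet_monotoneBox (x : ℝ) (τ : Fin k → ℝ) : MeasurableSet (monotoneBox x τ) :=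
  measurableSet_setOf_monotone_and_forall_mem fun _ => measurableSet_Ico

theorem monotoneBox_ae_eq (x : ℝ) (τ : Fin k → ℝ) :
    monotoneBox x τ =ᵐ[volume] {s | Monotone s ∧ ∀ r, s r ∈ Ioo x (τ r)} := by
  have hbox : {s : Fin k → ℝ | ∀ r, s r ∈ Ico x (τ r)} =ᵐ[volume] {s | ∀ r, s r ∈ Ioo x (τ r)} := by
    simpa only [Set.pi, mem_univ, true_imp_iff, volume_pi] using
      Measure.ae_eq_set_pi (I := univ) fun r _ => (Ioo_ae_eq_Ico (a := x) (b := τ r)).symm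
  exact (ae_eq_refl {s : Fin k → ℝ | Monotone s}).inter hbox

variable {E F : Type*} [NormedAddCommGroup E] [NormedSpace ℝ E]
  [NormedAddCommGroup F] [NormedSpace ℝ F]

theorem setIntegral_monotoneBox_succ {x : ℝ} {τ : Fin (k + 1) → ℝ} {g : (Fin (k + 1) → ℝ) → F}
    (hg : IntegrableOn g (monotoneBox x τ)) :
    ∫ s in monotoneBox x τ, g s =
      ∫ a in Ico x (τ 0), ∫ s in monotoneBox a (Fin.tail τ), g (Fin.cons a s) := by
  have he (a : ℝ) (s : Fin k → ℝ) :
      (MeasurableEquiv.piFinSuccAbove (fun _ => ℝ) 0).symm (a, s) = Fin.cons a s :=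
    Fin.insertNth_zero' a s
  rw [setIntegral_eq_setIntegral_fiber (volume_preserving_piFinSuccAbove (fun _ => ℝ) 0)
    (measurableSet_monotoneBox x τ) measurableSet_Ico
    (fun a s => by rw [he, cons_mem_monotoneBox_iff]) hg]
  simp only [he]

theorem integrableOn_monotoneBox_smul {w : Fin k → ℝ → ℝ} (hw : ∀ r, LocallyIntegrable (w r))
    {g : (Fin k → ℝ) → F} (hg : Continuous g) (x : ℝ) (τ : Fin k → ℝ) :
    IntegrableOn (fun s => (∏ r, w r (s r)) • g s) (monotoneBox x τ) := by
  have hIcc : IntegrableOn (fun s => (∏ r, w r (s r)) • g s) (univ.pi fun r => Icc x (τ r)) :=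
    (integrableOn_fintype_prod fun r =>
      (hw r).integrableOn_isCompact isCompact_Icc).smul_continuousOn
        hg.continuousOn (isCompact_univ_pi fun _ => isCompact_Icc)
  exact hIcc.mono_set fun s hs r _ => Ico_subset_Icc_self (hs.2 r)

theorem map_intervalIntegral_smul [CompleteSpace E] [CompleteSpace F] (L : E →L[ℝ] F)
    {w : ℝ → ℝ} (hw : LocallyIntegrable w) {c : ℝ → E} (hc : Continuous c) {x y : ℝ} (hxy : x ≤ y) :
    L (∫ s in x..y, w s • c s) = ∫ s in Ico x y, w s • L (c s) := by
  have hint : IntervalIntegrable (fun s => w s • c s) volume x y :=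
    (intervalIntegrable_of_locallyIntegrable hw x y).smul_continuousOn hc.continuousOn
  rw [← L.intervalIntegral_comp_comm hint, intervalIntegral.integral_of_le hxy,
    integral_Ico_eq_integral_Ioo, integral_Ioc_eq_integral_Ioo]
  simp only [map_smul]

theorem map_cons_eq_setIntegral [CompleteSpace E] [CompleteSpace F]
    (f : E [⋀^Fin (k + 1)]→L[ℝ] F) {w : ℝ → ℝ} (hw : LocallyIntegrable w) {b c : ℝ → E}
    (hc : Continuous c) {x y : ℝ} (hxy : x ≤ y) (hb : b y - b x = ∫ s in x..y, w s • c s)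
    {v : Fin k → E} (hx : f (Fin.cons (b x) v) = 0) :
    f (Fin.cons (b y) v) = ∫ s in Ico x y, w s • f (Fin.cons (c s) v) := by
  let L : E →L[ℝ] F := (ContinuousAlternatingMap.apply ℝ E F v) ∘L f.curryLeft
  calc f (Fin.cons (b y) v) = L (b y) - L (b x) := by
        rw [show L (b x) = 0 from hx, sub_zero]
        rfl
    _ = ∫ s in Ico x y, w s • L (c s) := by
        rw [← map_sub, hb, map_intervalIntegral_smul L hw hc hxy]

theorem curryLeft_apply_eq_zero {f : E [⋀^Fin (k + 1)]→L[ℝ] F} {a : E} {v : Fin k → E}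
    (ha : a ∈ range v) : f.curryLeft a v = 0 := by
  obtain ⟨j, rfl⟩ := ha
  exact f.map_eq_zero_of_eq (Fin.cons (v j) v) (by simp) (Fin.succ_ne_zero j).symm

theorem map_eq_setIntegral_monotoneBox [CompleteSpace E] [CompleteSpace F]
    (f : E [⋀^Fin k]→L[ℝ] F) {w : ℕ → ℝ → ℝ} {b : ℕ → ℝ → E}
    (hw : ∀ r, LocallyIntegrable (w r)) (hb : ∀ r, Continuous (b r))
    (hwb : ∀ r x y, b r y - b r x = ∫ s in x..y, w r s • b (r + 1) s)
    {x : ℝ} {τ : Fin k → ℝ} (hτ : Monotone τ) (hx : ∀ r, x ≤ τ r)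
    (hf : ∀ v : Fin k → E, b 0 x ∈ range v → f v = 0) :
    f (fun r => b r (τ r)) =
      ∫ s in monotoneBox x τ, (∏ r : Fin k, w r (s r)) • f (fun r => b (r + 1) (s r)) := by
  induction k generalizing w b x with
  | zero =>
    have hbox : monotoneBox x τ = univ := by ext; simp [monotoneBox, Subsingleton.monotone]
    have hconst (s : Fin 0 → ℝ) : f (fun r => b (r + 1) (s r)) = f fun r => b r (τ r) :=
      congrArg f (Subsingleton.elim _ _)
    simp [hbox, hconst, measureReal_def, volume_pi]
  | succ k ih =>
    have hfiber (s : ℝ) (hs : s ∈ Ico x (τ 0)) :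
        f (Fin.cons (b 1 s) fun r => b (r + 1) (τ r.succ)) =
          ∫ s' in monotoneBox s (Fin.tail τ), (∏ r : Fin k, w (r + 1) (s' r)) •
            f (Fin.cons (b 1 s) fun r => b (r + 2) (s' r)) :=
      ih (f.curryLeft (b 1 s)) (w := fun r => w (r + 1)) (b := fun r => b (r + 1))
        (fun r => hw _) (fun r => hb _) (fun r => hwb _)
        (hτ.comp Fin.strictMono_succ.monotone) (fun r => hs.2.le.trans (hτ (Fin.zero_le _)))
        fun v => curryLeft_apply_eq_zero
    calc f (fun r => b r (τ r)) = f (Fin.cons (b 0 (τ 0)) fun r => b (r + 1) (τ r.succ)) := by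
          congr 1 with r
          cases r using Fin.cases <;> simp
      _ = ∫ s in Ico x (τ 0), w 0 s • f (Fin.cons (b 1 s) fun r => b (r + 1) (τ r.succ)) :=
          map_cons_eq_setIntegral f (hw 0) (hb 1) (hx 0) (hwb 0 _ _) (hf _ ⟨0, rfl⟩)
      _ = ∫ s in Ico x (τ 0), ∫ s' in monotoneBox s (Fin.tail τ),
            (∏ r : Fin (k + 1), w r ((Fin.cons s s' : Fin (k + 1) → ℝ) r)) •
              f (fun r => b (r + 1) ((Fin.cons s s' : Fin (k + 1) → ℝ) r)) := by
          refine setIntegral_congr_fun measurableSet_Ico fun s hs => ?_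
          simp only [hfiber s hs, ← integral_smul, smul_smul, Fin.prod_univ_succ]
          congr! 4 with s'
          ext r
          cases r using Fin.cases <;> simp
      _ = _ := by
          rw [setIntegral_monotoneBox_succ
            (integrableOn_monotoneBox_smul (fun r => hw r) (by fun_prop) x τ)]

end MonotoneBox

section Kernel

/-- The iterated integral `a_{ij}(t) = ∫ w_{j-1}(s_{j-1}) ⋯ w_i(s_i)` over
`0 < s_{j-1} < ⋯ < s_i < t`: the total weight of the down-right paths from level `j` to level `i`.
It is `1` for `i = j` and `0` for `i > j`. -/
noncomputable def pathKernel (w : ℕ → ℝ → ℝ) (i j : ℕ) (t : ℝ) : ℝ :=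
  if i < j then ∫ s in 0..t, w i s * pathKernel w (i + 1) j s else if i = j then 1 else 0
termination_by j - i

variable {w : ℕ → ℝ → ℝ}

theorem pathKernel_of_lt {i j : ℕ} (h : i < j) (t : ℝ) :
    pathKernel w i j t = ∫ s in 0..t, w i s * pathKernel w (i + 1) j s := by
  rw [pathKernel, if_pos h]

@[simp]
theorem pathKernel_self (i : ℕ) (t : ℝ) : pathKernel w i i t = 1 := by
  simp [pathKernel]

theorem pathKernel_of_gt {i j : ℕ} (h : j < i) (t : ℝ) : pathKernel w i j t = 0 := by
  rw [pathKernel, if_neg h.not_gt, if_neg h.ne']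

theorem pathKernel_zero {i j : ℕ} (h : i < j) : pathKernel w i j 0 = 0 := by
  rw [pathKernel_of_lt h, intervalIntegral.integral_same]

theorem continuous_pathKernel (hw : ∀ i, LocallyIntegrable (w i)) (i j : ℕ) :
    Continuous (pathKernel w i j) := by
  rcases lt_trichotomy i j with h | rfl | h
  · have hint : LocallyIntegrable fun s => w i s * pathKernel w (i + 1) j s :=
      (hw i).mul_continuous (continuous_pathKernel hw (i + 1) j)
    simpa only [← pathKernel_of_lt h] using
      intervalIntegral.continuous_primitive (intervalIntegrable_of_locallyIntegrable hint) 0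
  · simpa only [funext (pathKernel_self i)] using continuous_const
  · simpa only [funext (pathKernel_of_gt h)] using continuous_const
termination_by j - i

theorem intervalIntegrable_mul_pathKernel (hw : ∀ i, LocallyIntegrable (w i)) (h i j : ℕ)
    (x y : ℝ) :
    IntervalIntegrable (fun s => w h s * pathKernel w i j s) volume x y :=
  (intervalIntegrable_of_locallyIntegrable (hw h) x y).mul_continuousOn
    (continuous_pathKernel hw i j).continuousOn

theorem pathKernel_sub_pathKernel (hw : ∀ i, LocallyIntegrable (w i)) (i j : ℕ) (x y : ℝ) :
    pathKernel w i j y - pathKernel w i j x = ∫ s in x..y, w i s * pathKernel w (i + 1) j s := by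
  have hint := intervalIntegrable_mul_pathKernel hw i (i + 1) j
  rcases lt_trichotomy i j with h | rfl | h
  · rw [pathKernel_of_lt h, pathKernel_of_lt h,
      intervalIntegral.integral_interval_sub_left (hint 0 y) (hint 0 x)]
  · simp [pathKernel_of_gt (Nat.lt_succ_self i)]
  · simp [pathKernel_of_gt h, pathKernel_of_gt (h.trans (Nat.lt_succ_self i))]

/-- The determinant as a continuous alternating map of the rows of a matrix. -/
noncomputable def detRow (k : ℕ) : (Fin k → ℝ) [⋀^Fin k]→L[ℝ] ℝ :=
  { Matrix.detRowAlternating with cont := Continuous.matrix_det continuous_id }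

theorem detRow_apply {k : ℕ} (M : Fin k → Fin k → ℝ) : detRow k M = Matrix.det (Matrix.of M) := rfl

theorem det_pathKernel_zero (i k : ℕ) (τ : Fin k → ℝ) :
    Matrix.det (.of fun r c : Fin k => pathKernel w (i + r) (i + c) (τ r)) = 1 := by
  rw [Matrix.det_of_isUpperTriangular]
  · simp
  · intro r c hcr
    exact pathKernel_of_gt (by simpa using hcr) _

theorem det_pathKernel_succ (hw : ∀ i, LocallyIntegrable (w i)) (i d : ℕ) {k : ℕ}
    {τ : Fin k → ℝ} (hτ : Monotone τ) (hτ0 : ∀ r, 0 ≤ τ r) :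
    Matrix.det (.of fun r c : Fin k => pathKernel w (i + r) (i + (d + 1) + c) (τ r)) =
      ∫ s in monotoneBox 0 τ, (∏ r : Fin k, w (i + r) (s r)) *
        Matrix.det (.of fun r c : Fin k => pathKernel w (i + 1 + r) (i + 1 + d + c) (s r)) := by
  let row (r : ℕ) (s : ℝ) : Fin k → ℝ := fun c => pathKernel w (i + r) (i + (d + 1) + c) s
  have hrow (r : ℕ) : Continuous (row r) := continuous_pi fun c => continuous_pathKernel hw _ _
  have hprim (r : ℕ) (x y : ℝ) : row r y - row r x = ∫ s in x..y, w (i + r) s • row (r + 1) s := by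
    have hint : IntervalIntegrable (fun s => w (i + r) s • row (r + 1) s) volume x y :=
      (intervalIntegrable_of_locallyIntegrable (hw _) _ _).smul_continuousOn (hrow _).continuousOn
    ext c
    rw [← ContinuousLinearMap.proj_apply (R := ℝ) c (∫ s in x..y, w (i + r) s • row (r + 1) s),
      ← ContinuousLinearMap.intervalIntegral_comp_comm _ hint]
    exact pathKernel_sub_pathKernel hw _ _ _ _
  have hzero : row 0 0 = 0 := funext fun c => pathKernel_zero (by lia)
  have key := map_eq_setIntegral_monotoneBox (detRow k) (fun r => hw (i + r)) hrow hprim hτ hτ0 (by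
    rintro v ⟨r, hr⟩
    exact (detRow k).map_coord_zero r (hr.trans hzero))
  have hleft (r : ℕ) : i + 1 + r = i + (r + 1) := by ring
  have hright : i + 1 + d = i + (d + 1) := by ring
  simpa only [detRow_apply, smul_eq_mul, hleft, hright] using key

end Kernel

section Interlacing

open Set

variable {k d : ℕ}

theorem strictMono_snoc_iff {u : Fin d → ℝ} {a : ℝ} :
    StrictMono (Fin.snoc u a : Fin (d + 1) → ℝ) ↔ (∀ l, u l < a) ∧ StrictMono u := by
  refine ⟨fun h => ⟨fun l => by simpa using h (Fin.castSucc_lt_last l),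
    fun i j hij => by simpa using h (Fin.castSucc_lt_castSucc_iff.2 hij)⟩, fun h i j => ?_⟩
  cases i using Fin.lastCases <;> cases j using Fin.lastCases
  · simp
  · simp [Fin.le_last]
  · simpa using h.1 _
  · simpa using @h.2 _ _

theorem snoc_mem_chainSet_iff {u : Fin d → ℝ} {a t : ℝ} :
    (Fin.snoc u a : Fin (d + 1) → ℝ) ∈ chainSet (d + 1) t ↔ a ∈ Ioo 0 t ∧ u ∈ chainSet d a := by
  simp only [chainSet, mem_ofPred_eq, strictMono_snoc_iff, Fin.forall_fin_succ',
    Fin.snoc_castSucc, Fin.snoc_last, mem_Ioo]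
  constructor
  · rintro ⟨⟨hua, hu⟩, hut, ha⟩
    exact ⟨ha, hu, fun l => ⟨(hut l).1, hua l⟩⟩
  · rintro ⟨ha, hu, hua⟩
    exact ⟨⟨fun l => (hua l).2, hu⟩, fun l => ⟨(hua l).1, (hua l).2.trans ha.2⟩, ha⟩

/-- The `k`-tuples of chains, the `r`-th one with `d` jump times in `(0, τ_r)`, whose `l`-th jump
times are nondecreasing in `r` for every `l`: non-intersection in terms of jump times. -/
def interlacing (k d : ℕ) (τ : Fin k → ℝ) : Set (Fin k → Fin d → ℝ) :=
  {φ | (∀ r, φ r ∈ chainSet d (τ r)) ∧ ∀ l, Monotone fun r => φ r l}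

theorem measurableSet_chainSet (d : ℕ) (t : ℝ) : MeasurableSet (chainSet d t) := by
  simp only [chainSet, StrictMono, mem_Ioo]
  measurability

theorem measurableSet_interlacing (τ : Fin k → ℝ) : MeasurableSet (interlacing k d τ) := by
  simp only [interlacing, Monotone]
  have := measurableSet_chainSet d
  measurability

/-- Splits each of `k` vectors of jump times into its last entry and the remaining ones. -/
def splitLast (k d : ℕ) : (Fin k → Fin (d + 1) → ℝ) ≃ᵐ (Fin k → ℝ) × (Fin k → Fin d → ℝ) :=
  (MeasurableEquiv.piCongrRight fun _ =>
    MeasurableEquiv.piFinSuccAbove (fun _ => ℝ) (Fin.last d)).trans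
    (MeasurableEquiv.arrowProdEquivProdArrow ℝ (Fin d → ℝ) (Fin k))

theorem splitLast_symm_apply (s : Fin k → ℝ) (ψ : Fin k → Fin d → ℝ) (r : Fin k) :
    (splitLast k d).symm (s, ψ) r = Fin.snoc (ψ r) (s r) :=
  Fin.insertNth_last' (s r) (ψ r)

theorem measurePreserving_splitLast (k d : ℕ) : MeasurePreserving (splitLast k d) :=
  (volume_measurePreserving_arrowProdEquivProdArrow ℝ (Fin d → ℝ) (Fin k)).comp
    (volume_preserving_pi fun _ => volume_preserving_piFinSuccAbove (fun _ => ℝ) (Fin.last d))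

theorem splitLast_symm_mem_interlacing_iff {τ s : Fin k → ℝ} {ψ : Fin k → Fin d → ℝ} :
    (splitLast k d).symm (s, ψ) ∈ interlacing k (d + 1) τ ↔
      (Monotone s ∧ ∀ r, s r ∈ Ioo 0 (τ r)) ∧ ψ ∈ interlacing k d s := by
  simp only [interlacing, mem_ofPred_eq, splitLast_symm_apply, snoc_mem_chainSet_iff,
    Fin.forall_fin_succ', Fin.snoc_castSucc, Fin.snoc_last, forall_and]
  exact ⟨fun h => ⟨⟨h.2.2, h.1.1⟩, h.1.2, h.2.1⟩, fun h => ⟨⟨h.1.2, h.2.1⟩, h.2.2, h.1.1⟩⟩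

theorem integrableOn_interlacing {w : Fin k → Fin d → ℝ → ℝ}
    (hw : ∀ r l, LocallyIntegrable (w r l)) (τ : Fin k → ℝ) :
    IntegrableOn (fun φ : Fin k → Fin d → ℝ => ∏ r, ∏ l, w r l (φ r l)) (interlacing k d τ) := by
  have hbox : IntegrableOn (fun φ : Fin k → Fin d → ℝ => ∏ r, ∏ l, w r l (φ r l))
      (univ.pi fun r => univ.pi fun _ => Icc 0 (τ r)) :=
    integrableOn_fintype_prod (f := fun r (u : Fin d → ℝ) => ∏ l, w r l (u l)) fun r =>
      integrableOn_fintype_prod fun l => (hw r l).integrableOn_isCompact isCompact_Icc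
  exact hbox.mono_set fun φ hφ r _ l _ => Ioo_subset_Icc_self ((hφ.1 r).2 l)

theorem setIntegral_interlacing_succ {τ : Fin k → ℝ} {g : (Fin k → Fin (d + 1) → ℝ) → ℝ}
    (hg : IntegrableOn g (interlacing k (d + 1) τ)) :
    ∫ φ in interlacing k (d + 1) τ, g φ =
      ∫ s in monotoneBox 0 τ, ∫ ψ in interlacing k d s, g fun r => Fin.snoc (ψ r) (s r) := by
  rw [setIntegral_congr_set (monotoneBox_ae_eq 0 τ),
    setIntegral_eq_setIntegral_fiber (measurePreserving_splitLast k d)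
      (measurableSet_interlacing τ)
      (measurableSet_setOf_monotone_and_forall_mem fun _ => measurableSet_Ioo)
      (fun _ _ => splitLast_symm_mem_interlacing_iff) hg]
  simp only [funext (splitLast_symm_apply _ _)]

theorem det_pathKernel_eq_setIntegral {w : ℕ → ℝ → ℝ} (hw : ∀ i, LocallyIntegrable (w i)) (i d : ℕ)
    {k : ℕ} {τ : Fin k → ℝ} (hτ : Monotone τ) (hτ0 : ∀ r, 0 ≤ τ r) :
    Matrix.det (.of fun r c : Fin k => pathKernel w (i + r) (i + d + c) (τ r)) =
      ∫ φ in interlacing k d τ, ∏ r : Fin k, ∏ l : Fin d, w (i + r + l.rev) (φ r l) := by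
  induction d generalizing i τ with
  | zero =>
    have huniv : interlacing k 0 τ = univ := by
      ext φ; simp [interlacing, chainSet, Subsingleton.strictMono]
    have hvol : volume (univ : Set (Fin k → Fin 0 → ℝ)) = 1 := by
      rw [volume_pi, Measure.pi_univ]
      simp [volume_pi]
    simp [huniv, hvol, det_pathKernel_zero, measureReal_def]
  | succ d ih =>
    rw [det_pathKernel_succ hw i d hτ hτ0,
      setIntegral_interlacing_succ (integrableOn_interlacing (fun _ _ => hw _) τ)]
    refine setIntegral_congr_fun (measurableSet_monotoneBox 0 τ) fun s hs => ?_
    have hindex (r l : ℕ) : i + r + (l + 1) = i + 1 + r + l := by ring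
    simp only [ih (i + 1) hs.1 fun r => (hs.2 r).1, ← integral_const_mul, ← Finset.prod_mul_distrib,
      Fin.prod_univ_castSucc, Fin.snoc_castSucc, Fin.snoc_last, Fin.rev_castSucc, Fin.rev_last,
      Fin.val_succ, Fin.val_zero, add_zero, hindex, mul_comm]

theorem setIntegral_chainSet_prod {w : ℕ → ℝ → ℝ} (hw : ∀ i, LocallyIntegrable (w i)) (i d : ℕ)
    {t : ℝ} (ht : 0 ≤ t) :
    ∫ u in chainSet d t, ∏ l, w (i + l.rev) (u l) = pathKernel w i (i + d) t := by
  have hpre : (MeasurableEquiv.funUnique (Fin 1) (Fin d → ℝ)) ⁻¹' chainSet d t =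
      interlacing 1 d fun _ => t := by
    ext φ; simp [interlacing, Subsingleton.monotone]
  have h := det_pathKernel_eq_setIntegral hw i d (k := 1) (τ := fun _ => t) monotone_const
    fun _ => ht
  rw [← (volume_preserving_funUnique (Fin 1) (Fin d → ℝ)).setIntegral_preimage_emb
    (MeasurableEquiv.measurableEmbedding _), hpre]
  simp only [Matrix.det_unique, Matrix.of_apply, Fin.prod_univ_one, Fin.default_eq_zero,
    Fin.val_zero, add_zero] at h
  exact h.symm

end Interlacing

section Encoding

open Set

theorem pathStep_lt_pathStep_iff {d p q : ℕ} {u v : Fin d → ℝ} {s : ℝ} :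
    pathStep (d + p + 1) d u s < pathStep (d + q + 1) d v s ↔
      p + Finset.card {l | v l ≤ s} < q + Finset.card {l | u l ≤ s} := by
  have hcard (u : Fin d → ℝ) : Finset.card {l | u l ≤ s} ≤ d := by
    simpa using Finset.card_filter_le Finset.univ (u · ≤ s)
  have hu := hcard u
  have hv := hcard v
  simp only [pathStep]
  lia

theorem nonint_eq_interlacing (m k : ℕ) (t : ℝ) :
    nonint m k t = interlacing k (m - k) fun _ => t := by
  ext φ
  refine and_congr_right fun hφ => ⟨fun h l => ?_, fun h s _ r r' hr => ?_⟩
  · refine (monotone_iff_forall_covBy _).2 fun r r' hr => ?_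
    have hsucc : (r : ℕ) + 1 = r' := Nat.covBy_iff_add_one_eq.1 (Fin.covBy_iff.1 hr)
    have hcard := pathStep_lt_pathStep_iff.1
      (h (φ r' l) (Ioo_subset_Icc_self ((hφ r').2 l)) r r' hr.lt)
    have hl := (Tuple.lt_card_le_iff_apply_le_of_monotone (hφ r').1.monotone).2 (le_refl (φ r' l))
    exact (Tuple.lt_card_le_iff_apply_le_of_monotone (hφ r).1.monotone).1 (by lia)
  · have hcard : Finset.card {l | φ r' l ≤ s} ≤ Finset.card {l | φ r l ≤ s} :=
      Finset.card_le_card (Finset.monotone_filter_right _ fun l _ => (h l hr.le).trans)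
    exact pathStep_lt_pathStep_iff.2 (add_lt_add_of_lt_of_le hr hcard)

theorem pathE_eq_add_sum (η : ℝ → ℕ → ℝ) {i j d : ℕ} (hj : j = i + d) (t : ℝ) (u : Fin d → ℝ) :
    pathE η i j t (fun l => if h : l < d then u ⟨l, h⟩ else 0) =
      η t i + ∑ l : Fin d, (η (u l) (i + l.rev + 1) - η (u l) (i + l.rev)) := by
  subst hj
  let v (l : ℕ) : ℝ := if h : l < d then u ⟨l, h⟩ else t
  have hv (l : ℕ) : (if l < d then if h : l < d then u ⟨l, h⟩ else 0 else t) = v l := by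
    simp only [v]; split_ifs <;> rfl
  have hvd : v d = t := by simp [v]
  have hvrev (l : Fin d) : v (d - 1 - l.rev) = u l := by
    have hl : d - 1 - l.rev = l := by rw [Fin.val_rev]; lia
    simp only [v, hl, l.isLt, dite_true]
  have htelescope : η (v 0) (i + d) + ∑ r ∈ Finset.range d, η (v (d - r)) (i + r) =
      η t i + ∑ r ∈ Finset.range d, η (v (d - 1 - r)) (i + r + 1) := by
    have h := Finset.sum_range_succ (fun r => η (v (d - r)) (i + r)) d
    rw [Finset.sum_range_succ'] at h
    simp only [Nat.sub_self, Nat.sub_zero, hvd, add_zero] at h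
    have hsub (r : ℕ) : d - 1 - r = d - (r + 1) := by lia
    simp only [hsub, add_assoc]
    linarith
  have hreindex (F : ℕ → ℝ) : ∑ r ∈ Finset.range d, F r = ∑ l : Fin d, F l.rev := by
    rw [← Fin.sum_univ_eq_sum_range, ← Equiv.sum_comp Fin.revPerm]
    rfl
  simp only [pathE, Nat.add_sub_cancel_left, hv]
  rw [Finset.sum_sub_distrib, ← add_sub_assoc, htelescope, add_sub_assoc, ← Finset.sum_sub_distrib,
    hreindex]
  simp only [hvrev]

/-- The weight `e^{η_{h+1}(s) - η_h(s)}` of a jump from level `h + 1` to level `h` at time `s`,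
extended by zero to all levels `h` and times `s ∈ ℝ` that no path ending at time `t` and starting at
a level at most `m` can use, so that it is locally integrable for every `h`. -/
noncomputable def jumpWeight (η : ℝ → ℕ → ℝ) (m : ℕ) (t : ℝ) (h : ℕ) : ℝ → ℝ :=
  if h ∈ Ico 1 m then (Ioo 0 t).indicator fun s => Real.exp (η s (h + 1) - η s h) else 0

variable {η : ℝ → ℕ → ℝ} {m : ℕ} {t : ℝ}

theorem locallyIntegrable_jumpWeight
    (hη : ∀ i ∈ Ico 1 m, IntegrableOn (fun s => Real.exp (η s (i + 1) - η s i)) (Ioo 0 t)) (h : ℕ) :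
    LocallyIntegrable (jumpWeight η m t h) := by
  unfold jumpWeight
  split_ifs with hh
  · exact ((hη h hh).integrable_indicator measurableSet_Ioo).locallyIntegrable
  · exact locallyIntegrable_const 0

theorem exp_pathE {i j d : ℕ} (hi : 1 ≤ i) (hj : j = i + d) (hjm : j ≤ m) {u : Fin d → ℝ}
    (hu : u ∈ chainSet d t) :
    Real.exp (pathE η i j t fun l => if h : l < d then u ⟨l, h⟩ else 0) =
      Real.exp (η t i) * ∏ l : Fin d, jumpWeight η m t (i + l.rev) (u l) := by
  rw [pathE_eq_add_sum η hj, Real.exp_add, Real.exp_sum]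
  congr 1
  refine Finset.prod_congr rfl fun l _ => ?_
  have hl : i + l.rev ∈ Ico 1 m := ⟨by lia, by lia⟩
  rw [jumpWeight, if_pos hl, indicator_of_mem (hu.2 l)]

theorem grsk_apply {n : ℕ}
    (hη : ∀ i ∈ Ico 1 m, IntegrableOn (fun s => Real.exp (η s (i + 1) - η s i)) (Ioo 0 t))
    (ht : 0 ≤ t) (i j : Fin n) (hjm : j < m) :
    grsk n η t i j =
      Real.exp (η t (i + 1)) * pathKernel (jumpWeight η m t) (i + 1) (j + 1) t := by
  simp only [grsk, Matrix.of_apply]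
  rcases lt_trichotomy (i : ℕ) j with h | h | h
  · rw [if_neg h.ne, if_pos h, setIntegral_congr_fun (measurableSet_chainSet _ _) fun u hu =>
      exp_pathE (by lia) (by lia) hjm hu, integral_const_mul,
      setIntegral_chainSet_prod (locallyIntegrable_jumpWeight hη) _ _ ht]
    congr 2
    lia
  · rw [if_pos h, h, pathKernel_self, mul_one]
  · rw [if_neg h.ne', if_neg h.not_gt, pathKernel_of_gt (by lia), mul_zero]

end Encoding
end NonintersectingPaths

open NonintersectingPaths in
theorem stmt2_general (n : ℕ) (η : ℝ → ℕ → ℝ) (k m : ℕ) (hkm : k ≤ m) (hm : m ≤ n) (t : ℝ)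
    (hη : ∀ i ∈ Set.Ico 1 m, IntegrableOn (fun s => Real.exp (η s (i + 1) - η s i)) (Set.Ioo 0 t))
    (ht : 0 ≤ t) :
    Delta (grsk n η t) k m =
      ∫ φ in nonint m k t,
        Real.exp (∑ r : Fin k, pathE η ((r : ℕ) + 1) (m - k + (r : ℕ) + 1) t
          (fun l => if h : l < m - k then φ r ⟨l, h⟩ else 0)) := by
  calc Delta (grsk n η t) k m
      = (∏ r : Fin k, Real.exp (η t (r + 1))) *
          Matrix.det (.of fun r c : Fin k =>
            pathKernel (jumpWeight η m t) (1 + r) (1 + (m - k) + c) t) := by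
        rw [Delta, ← Matrix.det_mul_column]
        congr with r c
        have hr : (r : ℕ) < n ∧ m - k + (c : ℕ) < n := by lia
        rw [Matrix.of_apply, dif_pos hr, grsk_apply hη ht _ _ (by dsimp only; lia)]
        congr 2 <;> dsimp only <;> ring
    _ = ∫ φ in interlacing k (m - k) fun _ => t, (∏ r : Fin k, Real.exp (η t (r + 1))) *
          ∏ r : Fin k, ∏ l : Fin (m - k), jumpWeight η m t (1 + r + l.rev) (φ r l) := by
        rw [det_pathKernel_eq_setIntegral (locallyIntegrable_jumpWeight hη) 1 (m - k)
          monotone_const fun _ => ht, integral_const_mul]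
    _ = _ := by
        rw [nonint_eq_interlacing]
        refine setIntegral_congr_fun (measurableSet_interlacing _) fun φ hφ => ?_
        simp only [Real.exp_sum, ← Finset.prod_mul_distrib, add_comm 1]
        refine Finset.prod_congr rfl fun r _ => ?_
        rw [exp_pathE (m := m) (by lia) (by lia) (by lia) (hφ.1 r)]

/-- Karlin–McGregor / Lindström–Gessel–Viennot type formula:
`Δ^m_k(b(t)) = ∫_{Ω^m_k(t)} e^{E_η(φ_1)+⋯+E_η(φ_k)} dφ_1⋯dφ_k`. -/
theorem stmt2 (n : ℕ) (η : ℝ → ℕ → ℝ)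
    (hη : ∀ i, 1 ≤ i → i ≤ n → ContinuousOn (fun s => η s i) (Set.Ici 0))
    (hη0 : ∀ i, η 0 i = 0)
    (k m : ℕ) (hk : 1 ≤ k) (hkm : k ≤ m) (hm : m ≤ n) (t : ℝ) (ht : 0 < t) :
    Delta (grsk n η t) k m =
      ∫ φ in nonint m k t,
        Real.exp (∑ r : Fin k, pathE η ((r : ℕ) + 1) (m - k + (r : ℕ) + 1) t
          (fun l => if h : l < m - k then φ r ⟨l, h⟩ else 0)) := by
  refine stmt2_general n η k m hkm hm t (fun i hi => ?_) ht.le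
  have hcont (j : ℕ) (hj : 1 ≤ j) (hjm : j ≤ m) : ContinuousOn (fun s => η s j) (Set.Icc 0 t) :=
    (hη j hj (hjm.trans hm)).mono Set.Icc_subset_Ici_self
  exact (((hcont (i + 1) (by lia) hi.2).sub (hcont i hi.1 hi.2.le)).rexp.integrableOn_Icc).mono_set
    Set.Ioo_subset_Icc_self
end

section
/- Let η : [0,∞) → ℝ^n be smooth and let x^m_i : [0,∞) → ℝ (1 ≤ i ≤ m ≤ n) be differentiable functions satisfying the system (dyn-rsk) driven by η. For 1 ≤ m ≤ n define w^m(t) ∈ ℝ^{n−m+1} by w^m_1(t) = e^{x^m_1(t)} and w^m_i(t) = e^{x^{m+i−1}_i(t) − x^{m+i−2}_{i−1}(t)} for 1 < i ≤ n−m+1, and set b(t) = E_1(w^1(t)) E_2(w^2(t)) ⋯ E_n(w^n(t)). Then b is differentiable and b'(t) = ε_{η'(t)} · b(t) for all t ≥ 0. -/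
/-- `ε_λ`: the matrix with diagonal `λ`, `1`s on the superdiagonal, `0` elsewhere. -/
def eps {n : ℕ} (lam : Fin n → ℝ) : Matrix (Fin n) (Fin n) ℝ :=
  Matrix.of fun i j : Fin n =>
    if (j : ℕ) = (i : ℕ) then lam i else if (j : ℕ) = (i : ℕ) + 1 then 1 else 0

/-- The Gelfand–Tsetlin parameters (1-based): `w^m_1 = e^{x^m_1}` and
`w^m_i = e^{x^{m+i-1}_i − x^{m+i-2}_{i-1}}` for `i > 1`. -/
noncomputable def wfun (x : ℕ → ℕ → ℝ → ℝ) (m i : ℕ) (t : ℝ) : ℝ :=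
  if i = 1 then Real.exp (x m 1 t)
  else Real.exp (x (m + i - 1) i t - x (m + i - 2) (i - 1) t)

/-- `b(t) = E_1(w^1(t)) ⋯ E_n(w^n(t))`. -/
noncomputable def bMat (n : ℕ) (x : ℕ → ℕ → ℝ → ℝ) (t : ℝ) : Matrix (Fin n) (Fin n) ℝ :=
  ((List.finRange n).map (fun p : Fin n =>
    Emat (n := n) (p : ℕ) (fun l => wfun x ((p : ℕ) + 1) (l + 1) t))).prod

/-!
Each factor `E_m` satisfies a Lax-type equation `E_m' = A_m E_m - E_m A_{m+1}`, where
`A_m = diag(0, ε(λ^m))` with `λ^m_1 = (x^m_1)'` and `λ^m_i = (x^{m+i-1}_i)' + w^m_i` for `i > 1`.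
The system (dyn-rsk) says exactly that `A_1 = ε_{η'}` and that also
`λ^{m+1}_i = (x^{m+i-1}_i)' + w^m_{i+1}`. In the derivative of `E_1 ⋯ E_n` the inner terms cancel in
pairs, leaving `A_1 b - b A_{n+1}`, and `A_{n+1} = 0`.
-/

section Derivatives

variable {𝕜 : Type*} [NontriviallyNormedField 𝕜] {S : Set 𝕜} {t : 𝕜}

theorem hasDerivWithinAt_matrix {m n E : Type*} [Finite m] [Finite n] [NormedAddCommGroup E]
    [NormedSpace 𝕜 E] {M : 𝕜 → Matrix m n E} {M' : Matrix m n E} :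
    HasDerivWithinAt M M' S t ↔ ∀ i j, HasDerivWithinAt (fun s => M s i j) (M' i j) S t := by
  have := Fintype.ofFinite m
  have := Fintype.ofFinite n
  exact hasDerivWithinAt_pi.trans <| forall_congr' fun _ => hasDerivWithinAt_pi

theorem hasDerivWithinAt_prod_finRange_of_lax {𝔸 : Type*} [NormedRing 𝔸] [NormedAlgebra 𝕜 𝔸]
    {n : ℕ} {M : Fin n → 𝕜 → 𝔸} {A : Fin (n + 1) → 𝔸}
    (h : ∀ p, HasDerivWithinAt (M p) (A p.castSucc * M p t - M p t * A p.succ) S t) :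
    HasDerivWithinAt (fun s => ((List.finRange n).map fun p => M p s).prod)
      (A 0 * ((List.finRange n).map fun p => M p t).prod -
        ((List.finRange n).map fun p => M p t).prod * A (Fin.last n)) S t := by
  induction n with
  | zero => simpa using hasDerivWithinAt_const t S (1 : 𝔸)
  | succ n ih =>
    have tail := ih (M := fun p => M p.succ) (A := fun p => A p.succ) fun p => h p.succ
    simp only [List.finRange_succ, List.map_cons, List.map_map, Function.comp_def, List.prod_cons]
    refine ((h 0).fun_mul tail).congr_deriv ?_
    simp only [Fin.castSucc_zero, Fin.succ_last]
    noncomm_ring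

end Derivatives

section Superdiagonal

variable {R : Type*} {n : ℕ}

/-- The `n × n` matrix with entry `u i` at position `(i, i + 1)` and `0` elsewhere. Sequences are
indexed by `ℕ` so that shifting an index needs no bound. -/
def superdiagonal [Zero R] (n : ℕ) (u : ℕ → R) : Matrix (Fin n) (Fin n) R :=
  Matrix.of fun i j => if (j : ℕ) = i + 1 then u i else 0

theorem superdiagonal_apply [Zero R] (u : ℕ → R) (i j : Fin n) :
    superdiagonal n u i j = if (j : ℕ) = i + 1 then u i else 0 :=
  rfl

theorem superdiagonal_add [AddZeroClass R] (u v : ℕ → R) :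
    superdiagonal n (fun i => u i + v i) = superdiagonal n u + superdiagonal n v := by
  ext i j
  simp only [Matrix.add_apply, superdiagonal_apply]
  split_ifs <;> simp only [add_zero]

theorem diagonal_mul_superdiagonal [NonUnitalNonAssocSemiring R] (d u : ℕ → R) :
    Matrix.diagonal (fun i : Fin n => d i) * superdiagonal n u =
      superdiagonal n fun i => d i * u i := by
  ext i j
  simp only [Matrix.diagonal_mul, superdiagonal_apply, mul_ite, mul_zero]

theorem superdiagonal_mul_diagonal [NonUnitalNonAssocSemiring R] (u d : ℕ → R) :
    superdiagonal n u * Matrix.diagonal (fun i : Fin n => d i) =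
      superdiagonal n fun i => u i * d (i + 1) := by
  ext i j
  simp +contextual only [Matrix.mul_diagonal, superdiagonal_apply, ite_mul, zero_mul]

theorem superdiagonal_mul_superdiagonal_apply [NonUnitalNonAssocSemiring R] (u v : ℕ → R)
    (i j : Fin n) :
    (superdiagonal n u * superdiagonal n v) i j =
      if (j : ℕ) = i + 2 then u i * v (i + 1) else 0 := by
  simp only [Matrix.mul_apply, superdiagonal_apply, ite_mul, zero_mul]
  by_cases hi : (i : ℕ) + 1 < n
  · rw [Finset.sum_eq_single (⟨i + 1, hi⟩ : Fin n)]
    · simp [add_assoc]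
    · exact fun k _ hk => if_neg fun h => hk (Fin.ext h)
    · simp
  · rw [Finset.sum_eq_zero fun k _ => if_neg (by omega), if_neg (by omega)]

theorem bidiagonal_mul_sub_mul_bidiagonal [NonUnitalNonAssocRing R] {a d a' α u α' : ℕ → R}
    (h_first : ∀ i, a i * u i + α i * d (i + 1) = d i * α' i + u i * a' (i + 1))
    (h_second : ∀ i, α i * u (i + 1) = u i * α' (i + 1)) :
    (Matrix.diagonal (fun i : Fin n => a i) + superdiagonal n α) *
          (Matrix.diagonal (fun i : Fin n => d i) + superdiagonal n u) -
        (Matrix.diagonal (fun i : Fin n => d i) + superdiagonal n u) *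
          (Matrix.diagonal (fun i : Fin n => a' i) + superdiagonal n α') =
      Matrix.diagonal fun i : Fin n => a i * d i - d i * a' i := by
  have first : superdiagonal n (fun i => a i * u i) + superdiagonal n (fun i => α i * d (i + 1)) =
      superdiagonal n (fun i => d i * α' i) + superdiagonal n (fun i => u i * a' (i + 1)) := by
    simp only [← superdiagonal_add, h_first]
  have second : superdiagonal n α * superdiagonal n u = superdiagonal n u * superdiagonal n α' := by
    ext i j
    simp only [superdiagonal_mul_superdiagonal_apply, h_second]
  simp only [add_mul, mul_add, Matrix.diagonal_mul_diagonal, diagonal_mul_superdiagonal,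
    superdiagonal_mul_diagonal, second, ← Matrix.diagonal_sub]
  linear_combination (norm := abel) first

end Superdiagonal

section PadBidiagonal

/-- The sequence `c, …, c, w 0, w 1, …` starting with `p` copies of `c`. -/
def padSeq {R : Type*} (p : ℕ) (c : R) (w : ℕ → R) (i : ℕ) : R :=
  if i < p then c else w (i - p)

theorem padSeq_of_lt {R : Type*} {p i : ℕ} (h : i < p) (c : R) (w : ℕ → R) :
    padSeq p c w i = c :=
  if_pos h

/-- The block-diagonal matrix `diag(c I_p, ε^{n-p}(w))`. The factors `E_{p+1}(w)` are the case
`c = 1`, and their Lax matrices the case `c = 0`. -/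
def padBidiagonal {R : Type*} [AddMonoidWithOne R] (n p : ℕ) (c : R) (w : ℕ → R) :
    Matrix (Fin n) (Fin n) R :=
  Matrix.diagonal (fun i : Fin n => padSeq p c w i) + superdiagonal n (padSeq p 0 1)

theorem padBidiagonal_congr {R : Type*} [AddMonoidWithOne R] {n p : ℕ} {c : R} {w w' : ℕ → R}
    (h : ∀ l, p + l < n → w l = w' l) : padBidiagonal n p c w = padBidiagonal n p c w' := by
  have diag_eq (i : Fin n) : padSeq p c w i = padSeq p c w' i :=
    if_ctx_congr Iff.rfl (fun _ => rfl) fun hi => h _ (by omega)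
  simp only [padBidiagonal, diag_eq]

theorem padBidiagonal_self_zero {R : Type*} [AddMonoidWithOne R] (n : ℕ) (w : ℕ → R) :
    padBidiagonal n n 0 w = 0 := by
  ext i j
  simp [padBidiagonal, superdiagonal_apply, padSeq_of_lt]

theorem eps_eq_padBidiagonal {n : ℕ} (d : ℕ → ℝ) :
    eps (fun i : Fin n => d i) = padBidiagonal n 0 0 d := by
  ext i j
  simp only [eps, padBidiagonal, padSeq, Pi.one_apply, superdiagonal_apply,
    Matrix.diagonal_apply, Matrix.add_apply, Matrix.of_apply, Fin.ext_iff]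
  grind

theorem Emat_eq_padBidiagonal {n : ℕ} (p : ℕ) (w : ℕ → ℝ) :
    Emat (n := n) p w = padBidiagonal n p 1 w := by
  ext i j
  simp only [Emat, padBidiagonal, padSeq, Pi.one_apply, superdiagonal_apply,
    Matrix.diagonal_apply, Matrix.add_apply, Matrix.of_apply, Fin.ext_iff]
  grind

theorem padBidiagonal_mul_sub_mul_padBidiagonal {R : Type*} [CommRing R] (n p : ℕ) (v w : ℕ → R) :
    padBidiagonal n p 0 (fun l => v l + if l = 0 then 0 else w l) * padBidiagonal n p 1 w -
        padBidiagonal n p 1 w * padBidiagonal n (p + 1) 0 (fun l => v l + w (l + 1)) =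
      Matrix.diagonal fun i : Fin n =>
        padSeq p 0 (fun l => w l * (v l - if l = 0 then 0 else v (l - 1))) i := by
  refine (bidiagonal_mul_sub_mul_bidiagonal (fun i => ?first) (fun i => ?second)).trans
    (congrArg Matrix.diagonal (funext fun i => ?diag))
  case first =>
    -- In row `p + l` both sides equal `v l + w (l + 1)`, plus `w l` if `l ≠ 0`.
    simp only [padSeq, Pi.one_apply]
    grind
  case second =>
    simp only [padSeq, Pi.one_apply]
    grind
  case diag =>
    simp only [padSeq]
    grind

theorem hasDerivWithinAt_padBidiagonal {𝕜 : Type*} [NontriviallyNormedField 𝕜] {n p : ℕ} {c : 𝕜}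
    {w : 𝕜 → ℕ → 𝕜} {w' : ℕ → 𝕜} {S : Set 𝕜} {t : 𝕜}
    (h : ∀ l, p + l < n → HasDerivWithinAt (fun s => w s l) (w' l) S t) :
    HasDerivWithinAt (fun s => padBidiagonal n p c (w s))
      (Matrix.diagonal fun i : Fin n => padSeq p 0 w' i) S t := by
  have diag (i : Fin n) :
      HasDerivWithinAt (fun s => padSeq p c (w s) i) (padSeq p 0 w' i) S t := by
    unfold padSeq
    split_ifs with hi
    · exact hasDerivWithinAt_const t S c
    · exact h _ (by omega)
  refine hasDerivWithinAt_matrix.2 fun i j => HasDerivWithinAt.add_const _ ?_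
  by_cases hij : i = j
  · subst hij
    simpa only [Matrix.diagonal_apply_eq] using diag i
  · simpa only [Matrix.diagonal_apply_ne _ hij] using hasDerivWithinAt_const t S (0 : 𝕜)

end PadBidiagonal

section GeometricRSK

/-- The system (dyn-rsk) at time `t`: `v m i` stands for the derivative of `x^m_i` and `η' i` for
that of the `i`-th driving coordinate. -/
structure IsGeometricRSKAt (n : ℕ) (η' : ℕ → ℝ) (x : ℕ → ℕ → ℝ → ℝ) (v : ℕ → ℕ → ℝ) (t : ℝ) :
    Prop where
  one_one : v 1 1 = η' 1
  diag : ∀ m, 2 ≤ m → m ≤ n → v m m = η' m - Real.exp (x m m t - x (m - 1) (m - 1) t)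
  first : ∀ m, 2 ≤ m → m ≤ n → v m 1 = v (m - 1) 1 + Real.exp (x m 2 t - x (m - 1) 1 t)
  interior : ∀ m i, 1 < i → i < m → m ≤ n →
    v m i = v (m - 1) i + Real.exp (x m (i + 1) t - x (m - 1) i t)
      - Real.exp (x m i t - x (m - 1) (i - 1) t)

/-- The matrix `A_{p+1}` of the Lax equation for the factor `E_{p+1}(w^{p+1})`, where `v m i` stands
for the derivative of `x^m_i`. -/
noncomputable def laxMatrix (n : ℕ) (x : ℕ → ℕ → ℝ → ℝ) (v : ℕ → ℕ → ℝ) (t : ℝ) (p : ℕ) :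
    Matrix (Fin n) (Fin n) ℝ :=
  padBidiagonal n p 0 fun l =>
    v (p + 1 + l) (l + 1) + if l = 0 then 0 else wfun x (p + 1) (l + 1) t

variable {n : ℕ} {η' : ℕ → ℝ} {x : ℕ → ℕ → ℝ → ℝ} {v : ℕ → ℕ → ℝ} {t : ℝ}

theorem wfun_one (x : ℕ → ℕ → ℝ → ℝ) (m : ℕ) (t : ℝ) : wfun x m 1 t = Real.exp (x m 1 t) :=
  if_pos rfl

theorem wfun_add_two (x : ℕ → ℕ → ℝ → ℝ) (m l : ℕ) (t : ℝ) :
    wfun x m (l + 2) t = Real.exp (x (m + l + 1) (l + 2) t - x (m + l) (l + 1) t) :=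
  if_neg (by omega)

namespace IsGeometricRSKAt

theorem diag_add_wfun (hv : IsGeometricRSKAt n η' x v t) {l : ℕ} (hl : l + 1 ≤ n) :
    v (l + 1) (l + 1) + (if l = 0 then 0 else wfun x 1 (l + 1) t) = η' (l + 1) := by
  rcases l with _ | l
  · simpa using hv.one_one
  · simp [hv.diag (l + 2) (by omega) hl, wfun_add_two, add_comm 1]

theorem row_succ_add_wfun (hv : IsGeometricRSKAt n η' x v t) {m l : ℕ} (hm : 1 ≤ m)
    (hl : m + l + 1 ≤ n) :
    v (m + 1 + l) (l + 1) + (if l = 0 then 0 else wfun x (m + 1) (l + 1) t) =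
      v (m + l) (l + 1) + wfun x m (l + 2) t := by
  rcases l with _ | l
  · simp [hv.first (m + 1) (by omega) hl, wfun_add_two]
  · rw [add_right_comm m 1, hv.interior (m + (l + 1) + 1) (l + 2) (by omega) (by omega) hl]
    simp [wfun_add_two, add_right_comm m 1, ← add_assoc]

theorem laxMatrix_zero (hv : IsGeometricRSKAt n η' x v t) :
    laxMatrix n x v t 0 = eps fun i : Fin n => η' (i + 1) := by
  rw [eps_eq_padBidiagonal fun i => η' (i + 1)]
  refine padBidiagonal_congr fun l hl => ?_
  simpa only [zero_add, add_comm 1 l] using hv.diag_add_wfun (by omega)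

theorem laxMatrix_succ (hv : IsGeometricRSKAt n η' x v t) (p : ℕ) :
    laxMatrix n x v t (p + 1) =
      padBidiagonal n (p + 1) 0 fun l => v (p + 1 + l) (l + 1) + wfun x (p + 1) (l + 2) t :=
  padBidiagonal_congr fun _ hl => hv.row_succ_add_wfun (by omega) (by omega)

end IsGeometricRSKAt

theorem laxMatrix_self (n : ℕ) (x : ℕ → ℕ → ℝ → ℝ) (v : ℕ → ℕ → ℝ) (t : ℝ) :
    laxMatrix n x v t n = 0 :=
  padBidiagonal_self_zero n _

variable {S : Set ℝ}

theorem hasDerivWithinAt_wfun {m l : ℕ}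
    (hx : ∀ m i, 1 ≤ i → i ≤ m → m ≤ n → HasDerivWithinAt (x m i) (v m i) S t)
    (hm : 1 ≤ m) (hl : m + l ≤ n) :
    HasDerivWithinAt (wfun x m (l + 1))
      (wfun x m (l + 1) t * (v (m + l) (l + 1) - if l = 0 then 0 else v (m + (l - 1)) (l - 1 + 1)))
      S t := by
  rcases l with _ | l
  · simpa [funext (wfun_one x m)] using (hx m 1 le_rfl hm hl).exp
  · simpa [funext (wfun_add_two x m l), ← add_assoc] using
      ((hx (m + l + 1) (l + 2) (by omega) (by omega) hl).fun_sub
        (hx (m + l) (l + 1) (by omega) (by omega) (by omega))).exp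

theorem hasDerivWithinAt_Emat
    (hx : ∀ m i, 1 ≤ i → i ≤ m → m ≤ n → HasDerivWithinAt (x m i) (v m i) S t)
    (hv : IsGeometricRSKAt n η' x v t) (p : ℕ) :
    HasDerivWithinAt (fun s => Emat (n := n) p fun l => wfun x (p + 1) (l + 1) s)
      (laxMatrix n x v t p * Emat p (fun l => wfun x (p + 1) (l + 1) t) -
        Emat p (fun l => wfun x (p + 1) (l + 1) t) * laxMatrix n x v t (p + 1)) S t := by
  simp only [hv.laxMatrix_succ, Emat_eq_padBidiagonal]
  rw [laxMatrix, padBidiagonal_mul_sub_mul_padBidiagonal n p (fun l => v (p + 1 + l) (l + 1))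
    fun l => wfun x (p + 1) (l + 1) t]
  exact hasDerivWithinAt_padBidiagonal fun l hl =>
    hasDerivWithinAt_wfun hx (by omega) (by omega)

open scoped Matrix.Norms.Operator in
theorem hasDerivWithinAt_bMat
    (hx : ∀ m i, 1 ≤ i → i ≤ m → m ≤ n → HasDerivWithinAt (x m i) (v m i) S t)
    (hv : IsGeometricRSKAt n η' x v t) :
    HasDerivWithinAt (bMat n x) ((eps fun i : Fin n => η' (i + 1)) * bMat n x t) S t := by
  have telescoped : HasDerivWithinAt (bMat n x)
      (laxMatrix n x v t 0 * bMat n x t - bMat n x t * laxMatrix n x v t n) S t :=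
    hasDerivWithinAt_prod_finRange_of_lax (A := fun p : Fin (n + 1) => laxMatrix n x v t p)
      fun p => hasDerivWithinAt_Emat hx hv p
  rwa [hv.laxMatrix_zero, laxMatrix_self, mul_zero, sub_zero] at telescoped

end GeometricRSK

/-- If the triangle `(x^m_i)` evolves by the geometric RSK dynamics
(dyn-rsk) driven by a smooth path `η`, then the matrix
`b(t) = E_1(w^1(t)) ⋯ E_n(w^n(t))` satisfies `b'(t) = ε_{η'(t)} b(t)` for `t ≥ 0`. -/
theorem stmt3 (n : ℕ) (η η' : ℝ → ℕ → ℝ) (x x' : ℕ → ℕ → ℝ → ℝ)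
    (hη : ∀ i t, 1 ≤ i → i ≤ n → t ∈ Set.Ici (0 : ℝ) →
      HasDerivWithinAt (fun s => η s i) (η' t i) (Set.Ici 0) t)
    (hx : ∀ m i t, 1 ≤ i → i ≤ m → m ≤ n → t ∈ Set.Ici (0 : ℝ) →
      HasDerivWithinAt (x m i) (x' m i t) (Set.Ici 0) t)
    (h11 : ∀ t ∈ Set.Ici (0 : ℝ), x' 1 1 t = η' t 1)
    (hmm : ∀ m, 2 ≤ m → m ≤ n → ∀ t ∈ Set.Ici (0 : ℝ),
      x' m m t = η' t m - Real.exp (x m m t - x (m - 1) (m - 1) t))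
    (hm1 : ∀ m, 2 ≤ m → m ≤ n → ∀ t ∈ Set.Ici (0 : ℝ),
      x' m 1 t = x' (m - 1) 1 t + Real.exp (x m 2 t - x (m - 1) 1 t))
    (hmi : ∀ m i, 1 < i → i < m → m ≤ n → ∀ t ∈ Set.Ici (0 : ℝ),
      x' m i t = x' (m - 1) i t + Real.exp (x m (i + 1) t - x (m - 1) i t)
        - Real.exp (x m i t - x (m - 1) (i - 1) t)) :
    ∀ t ∈ Set.Ici (0 : ℝ), ∀ p q : Fin n,
      HasDerivWithinAt (fun s => bMat n x s p q)
        ((eps (fun i : Fin n => η' t ((i : ℕ) + 1)) * bMat n x t) p q) (Set.Ici 0) t := by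
  intro t ht
  exact hasDerivWithinAt_matrix.1 <| hasDerivWithinAt_bMat
    (fun m i hi him hm => hx m i t hi him hm ht)
    ⟨h11 t ht, fun m h2 hm => hmm m h2 hm t ht, fun m h2 hm => hm1 m h2 hm t ht,
      fun m i hi him hm => hmi m i hi him hm t ht⟩
end

section
/- Let n ≥ 1, let ξ = (ξ^m_i)_{1≤i≤m≤n} be a triangle of size n, and let η : [0,∞) → ℝ^n be smooth with η(0) = 0. Define μ_1 = ξ^1_1 and μ_m = Σ_{i=1}^m ξ^m_i − Σ_{i=1}^{m−1} ξ^{m−1}_i for 2 ≤ m ≤ n; set π_m(t) = η_m(t) + μ_m; and for 2 ≤ k ≤ m ≤ n set r^m_k = Σ_{i=1}^{k−1} ξ^{m−1}_i − Σ_{i=1}^{k−1} ξ^m_i. Define functions x^m_i on [0,∞) recursively by: x^1_1(t) = π_1(t); for 2 ≤ m ≤ n, writing y^m_m := π_m, x^m_m(t) = π_m(t) − log[e^{−r^m_m} + ∫_0^t e^{π_m(s) − x^{m−1}_{m−1}(s)} ds]; for 1 < k < m, x^m_k(t) = y^m_k(t) − log[e^{−r^m_k} + ∫_0^t e^{y^m_k(s)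 − x^{m−1}_{k−1}(s)} ds] where y^m_k(t) = x^{m−1}_k(t) + log[e^{−r^m_{k+1}} + ∫_0^t e^{y^m_{k+1}(s) − x^{m−1}_k(s)} ds]; and x^m_1(t) = x^{m−1}_1(t) + log[e^{−r^m_2} + ∫_0^t e^{y^m_2(s) − x^{m−1}_1(s)} ds]. Then x^m_i(0) = ξ^m_i for all 1 ≤ i ≤ m ≤ n, and the functions x^m_i are differentiable and satisfy the system (dyn-rsk) driven by η on [0,∞). -/
/-!
The logarithm `L` of `e^{-c} + ∫₀ᵗ e^f` solves `L' = e^{f - L}` with `L(0) = -c`. Let `L^m_k` be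
this logarithm for `c = r^m_k` and `f = y^m_k - x^{m-1}_{k-1}`. The recursion says that
`x^m_k = y^m_k - L^m_k` and `y^m_k = x^{m-1}_k + L^m_{k+1}`. The first identity turns the equation
for `L` into `(L^m_k)' = e^{x^m_k - x^{m-1}_{k-1}}`; eliminating `y` gives, for `1 < k < m`,
`x^m_k = x^{m-1}_k + L^m_{k+1} - L^m_k`, whose derivative is the dynamics. At `t = 0` the same
identity reads `x^m_k = ξ^{m-1}_k - r^m_{k+1} + r^m_k`, and the partial sums in `r` telescope.
-/

open Set
open scoped Topology

theorem hasDerivWithinAt_integral_Ici {E : Type*} [NormedAddCommGroup E] [NormedSpace ℝ E]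
    [CompleteSpace E] {f : ℝ → E} {a t : ℝ} (hf : ContinuousOn f (Ici a)) (ht : t ∈ Ici a) :
    HasDerivWithinAt (fun u ↦ ∫ s in a..u, f s) (f t) (Ici a) t := by
  have htI : t ∈ Icc a (t + 1) := ⟨ht, (lt_add_one t).le⟩
  have hfI : ContinuousOn f (Icc a (t + 1)) := hf.mono Icc_subset_Ici_self
  have hf_int : IntervalIntegrable f MeasureTheory.volume a t :=
    (hf.mono Icc_subset_Ici_self).intervalIntegrable_of_Icc ht
  have hIcc : Icc a (t + 1) ∈ 𝓝[Ici a] t := inter_mem_nhdsWithin _ (Iic_mem_nhds (lt_add_one t))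
  have : Fact (t ∈ Icc a (t + 1)) := ⟨htI⟩
  have hderiv : HasDerivWithinAt (fun u ↦ ∫ s in a..u, f s) (f t) (Icc a (t + 1)) t :=
    intervalIntegral.integral_hasDerivWithinAt_right hf_int
      (hfI.stronglyMeasurableAtFilter_nhdsWithin measurableSet_Icc t) (hfI t htI)
  exact hderiv.mono_of_mem_nhdsWithin hIcc

/-- The logarithm of the partition function `e^{-c} + ∫₀ᵗ e^{f(s)} ds`, the building block of the
integral formulas for geometric RSK. -/
noncomputable def logPartition (c : ℝ) (f : ℝ → ℝ) (t : ℝ) : ℝ :=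
  Real.log (Real.exp (-c) + ∫ s in (0 : ℝ)..t, Real.exp (f s))

theorem logPartition_zero (c : ℝ) (f : ℝ → ℝ) : logPartition c f 0 = -c := by
  simp [logPartition]

theorem hasDerivWithinAt_logPartition (c : ℝ) {f : ℝ → ℝ} (hf : ContinuousOn f (Ici 0)) {t : ℝ}
    (ht : t ∈ Ici 0) :
    HasDerivWithinAt (logPartition c f) (Real.exp (f t - logPartition c f t)) (Ici 0) t := by
  have hpos : 0 < Real.exp (-c) + ∫ s in (0 : ℝ)..t, Real.exp (f s) :=
    add_pos_of_pos_of_nonneg (Real.exp_pos _)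
      (intervalIntegral.integral_nonneg ht fun s _ ↦ (Real.exp_pos _).le)
  have hderiv := ((hasDerivWithinAt_integral_Ici hf.rexp ht).const_add (Real.exp (-c))).log hpos.ne'
  rwa [← Real.exp_log hpos, ← Real.exp_sub] at hderiv

/-- One step of geometric RSK: the path `π` is inserted into the row `u 1, …, u (m - 1)`, which
produces the row `x 1, …, x m` through the auxiliary paths `y 2, …, y m`. Indices are 1-based,
`y m` is another name for `π`, and the integral formulas are required on `[0, ∞)` only. -/
structure IsRowInsertion (m : ℕ) (u : ℕ → ℝ → ℝ) (π : ℝ → ℝ) (r : ℕ → ℝ) (x y : ℕ → ℝ → ℝ) :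
    Prop where
  y_last : y m = π
  y_mid : ∀ k, 1 < k → k < m → EqOn (y k) (u k + logPartition (r (k + 1)) (y (k + 1) - u k)) (Ici 0)
  x_last : EqOn (x m) (π - logPartition (r m) (π - u (m - 1))) (Ici 0)
  x_mid : ∀ k, 1 < k → k < m → EqOn (x k) (y k - logPartition (r k) (y k - u (k - 1))) (Ici 0)
  x_one : EqOn (x 1) (u 1 + logPartition (r 2) (y 2 - u 1)) (Ici 0)

namespace IsRowInsertion

variable {m k : ℕ} {u x y : ℕ → ℝ → ℝ} {π : ℝ → ℝ} {r : ℕ → ℝ} {t : ℝ}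

theorem x_of_one_lt (h : IsRowInsertion m u π r x y) (hk : 1 < k) (hkm : k ≤ m) :
    EqOn (x k) (y k - logPartition (r k) (y k - u (k - 1))) (Ici 0) := by
  rcases hkm.eq_or_lt with rfl | hlt
  · rw [h.y_last]
    exact h.x_last
  · exact h.x_mid k hk hlt

theorem y_apply_zero (h : IsRowInsertion m u π r x y) {ζ ξ : ℕ → ℝ}
    (hu : ∀ i, 1 ≤ i → i < m → u i 0 = ζ i)
    (hπ : π 0 = ∑ i ∈ Finset.Icc 1 m, ξ i - ∑ i ∈ Finset.Icc 1 (m - 1), ζ i)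
    (hr : ∀ k, 2 ≤ k → k ≤ m →
      r k = ∑ i ∈ Finset.Icc 1 (k - 1), ζ i - ∑ i ∈ Finset.Icc 1 (k - 1), ξ i)
    (hk : 1 < k) (hkm : k ≤ m) : y k 0 = ξ k - r k := by
  have sum_Icc_eq (a : ℕ → ℝ) :
      ∑ i ∈ Finset.Icc 1 k, a i = ∑ i ∈ Finset.Icc 1 (k - 1), a i + a k := by
    obtain ⟨j, rfl⟩ : ∃ j, k = j + 1 := ⟨k - 1, by omega⟩
    exact Finset.sum_Icc_succ_top (by omega) a
  rcases hkm.eq_or_lt with rfl | hlt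
  · rw [h.y_last, hπ, hr k hk le_rfl, sum_Icc_eq ξ]
    ring
  · have hr_succ : r (k + 1) = r k + ζ k - ξ k := by
      rw [hr (k + 1) (by omega) hlt, hr k hk hkm, Nat.add_sub_cancel, sum_Icc_eq ζ, sum_Icc_eq ξ]
      ring
    rw [h.y_mid k hk hlt self_mem_Ici, Pi.add_apply, logPartition_zero, hu k hk.le hlt, hr_succ]
    ring

theorem x_apply_zero (h : IsRowInsertion m u π r x y) (hm : 1 < m) {ζ ξ : ℕ → ℝ}
    (hu : ∀ i, 1 ≤ i → i < m → u i 0 = ζ i)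
    (hπ : π 0 = ∑ i ∈ Finset.Icc 1 m, ξ i - ∑ i ∈ Finset.Icc 1 (m - 1), ζ i)
    (hr : ∀ k, 2 ≤ k → k ≤ m →
      r k = ∑ i ∈ Finset.Icc 1 (k - 1), ζ i - ∑ i ∈ Finset.Icc 1 (k - 1), ξ i)
    (hk : 1 ≤ k) (hkm : k ≤ m) : x k 0 = ξ k := by
  rcases hk.eq_or_lt with rfl | hlt
  · rw [h.x_one self_mem_Ici, Pi.add_apply, logPartition_zero, hu 1 le_rfl hm, hr 2 le_rfl hm]
    simp
  · rw [h.x_of_one_lt hlt hkm self_mem_Ici, Pi.sub_apply, logPartition_zero,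
      h.y_apply_zero hu hπ hr hlt hkm]
    ring

theorem continuousOn_y (h : IsRowInsertion m u π r x y)
    (hu : ∀ i, 1 ≤ i → i < m → ContinuousOn (u i) (Ici 0)) (hπ : ContinuousOn π (Ici 0))
    (hk : 1 < k) (hkm : k ≤ m) : ContinuousOn (y k) (Ici 0) := by
  induction hkm using Nat.decreasingInduction with
  | self => exact h.y_last.symm ▸ hπ
  | of_succ k hlt ih =>
    have hL : ContinuousOn (logPartition (r (k + 1)) (y (k + 1) - u k)) (Ici 0) := fun t ht ↦
      (hasDerivWithinAt_logPartition _ ((ih (by omega)).sub (hu k hk.le hlt)) ht).continuousWithinAt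
    exact ((hu k hk.le hlt).add hL).congr (h.y_mid k hk hlt)

theorem hasDerivWithinAt_logPartition_sub (h : IsRowInsertion m u π r x y)
    (hu : ∀ i, 1 ≤ i → i < m → ContinuousOn (u i) (Ici 0)) (hπ : ContinuousOn π (Ici 0))
    (hk : 1 < k) (hkm : k ≤ m) (ht : t ∈ Ici 0) :
    HasDerivWithinAt (logPartition (r k) (y k - u (k - 1)))
      (Real.exp (x k t - u (k - 1) t)) (Ici 0) t := by
  have hcont : ContinuousOn (y k - u (k - 1)) (Ici 0) :=
    (h.continuousOn_y hu hπ hk hkm).sub (hu (k - 1) (by omega) (by omega))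
  convert hasDerivWithinAt_logPartition (r k) hcont ht using 2
  rw [h.x_of_one_lt hk hkm ht, Pi.sub_apply, Pi.sub_apply, sub_right_comm]

theorem hasDerivWithinAt_x_last (h : IsRowInsertion m u π r x y) (hm : 1 < m)
    (hu : ∀ i, 1 ≤ i → i < m → ContinuousOn (u i) (Ici 0)) (hπ : ContinuousOn π (Ici 0))
    (ht : t ∈ Ici 0) {π' : ℝ} (hπ' : HasDerivWithinAt π π' (Ici 0) t) :
    HasDerivWithinAt (x m) (π' - Real.exp (x m t - u (m - 1) t)) (Ici 0) t := by
  have hL := h.hasDerivWithinAt_logPartition_sub hu hπ hm le_rfl ht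
  rw [h.y_last] at hL
  exact (hπ'.sub hL).congr_of_mem h.x_last ht

theorem hasDerivWithinAt_x_one (h : IsRowInsertion m u π r x y) (hm : 1 < m)
    (hu : ∀ i, 1 ≤ i → i < m → ContinuousOn (u i) (Ici 0)) (hπ : ContinuousOn π (Ici 0))
    (ht : t ∈ Ici 0) {u' : ℝ} (hu' : HasDerivWithinAt (u 1) u' (Ici 0) t) :
    HasDerivWithinAt (x 1) (u' + Real.exp (x 2 t - u 1 t)) (Ici 0) t :=
  (hu'.add (h.hasDerivWithinAt_logPartition_sub hu hπ one_lt_two hm ht)).congr_of_mem h.x_one ht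

theorem hasDerivWithinAt_x_mid (h : IsRowInsertion m u π r x y)
    (hu : ∀ i, 1 ≤ i → i < m → ContinuousOn (u i) (Ici 0)) (hπ : ContinuousOn π (Ici 0))
    (hk : 1 < k) (hkm : k < m) (ht : t ∈ Ici 0) {u' : ℝ}
    (hu' : HasDerivWithinAt (u k) u' (Ici 0) t) :
    HasDerivWithinAt (x k)
      (u' + Real.exp (x (k + 1) t - u k t) - Real.exp (x k t - u (k - 1) t)) (Ici 0) t := by
  have hL := h.hasDerivWithinAt_logPartition_sub hu hπ hk hkm.le ht
  have hL_succ := h.hasDerivWithinAt_logPartition_sub hu hπ (k := k + 1) (by omega) hkm ht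
  refine ((hu'.add hL_succ).sub hL).congr_of_mem ?_ ht
  intro s hs
  rw [h.x_mid k hk hkm hs, Pi.sub_apply, Pi.sub_apply, h.y_mid k hk hkm hs,
    Nat.add_sub_cancel]

theorem differentiableOn_x (h : IsRowInsertion m u π r x y) (hm : 1 < m)
    (hu : ∀ i, 1 ≤ i → i < m → DifferentiableOn ℝ (u i) (Ici 0))
    (hπ : DifferentiableOn ℝ π (Ici 0)) (hk : 1 ≤ k) (hkm : k ≤ m) :
    DifferentiableOn ℝ (x k) (Ici 0) := by
  intro t ht
  have hu_cont (i : ℕ) (hi : 1 ≤ i) (him : i < m) := (hu i hi him).continuousOn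
  rcases hkm.eq_or_lt with rfl | hlt
  · exact (h.hasDerivWithinAt_x_last hm hu_cont hπ.continuousOn ht
      (hπ t ht).hasDerivWithinAt).differentiableWithinAt
  have hu' := (hu k hk hlt t ht).hasDerivWithinAt
  rcases hk.eq_or_lt with rfl | hk
  · exact (h.hasDerivWithinAt_x_one hm hu_cont hπ.continuousOn ht hu').differentiableWithinAt
  · exact (h.hasDerivWithinAt_x_mid hu_cont hπ.continuousOn hk hlt ht hu').differentiableWithinAt

end IsRowInsertion

/-- The integral formulas of geometric RSK: the triangle of paths `x` of size `n` arises by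
inserting the paths `π 1, …, π n` one after another, row `m` being built from row `m - 1` with the
constants `r m`. -/
structure IsGeometricRSK (n : ℕ) (π : ℕ → ℝ → ℝ) (r : ℕ → ℕ → ℝ) (x y : ℕ → ℕ → ℝ → ℝ) :
    Prop where
  x_one_one : EqOn (x 1 1) (π 1) (Ici 0)
  isRowInsertion : ∀ m, 2 ≤ m → m ≤ n → IsRowInsertion m (x (m - 1)) (π m) (r m) (x m) (y m)

/-- The system (dyn-rsk) on `[0, ∞)` for a triangle `x` of paths with derivatives `x'`, driven by a
path with derivative `η'`. Derivatives are one-sided at `0`. -/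
def IsDynRSKSolution (n : ℕ) (η' : ℝ → ℕ → ℝ) (x x' : ℕ → ℕ → ℝ → ℝ) : Prop :=
  (∀ m i, 1 ≤ i → i ≤ m → m ≤ n → ∀ t ∈ Ici (0 : ℝ),
    HasDerivWithinAt (x m i) (x' m i t) (Ici 0) t) ∧
  (∀ t ∈ Ici (0 : ℝ), x' 1 1 t = η' t 1) ∧
  (∀ m, 2 ≤ m → m ≤ n → ∀ t ∈ Ici (0 : ℝ),
    x' m m t = η' t m - Real.exp (x m m t - x (m - 1) (m - 1) t) ∧
    x' m 1 t = x' (m - 1) 1 t + Real.exp (x m 2 t - x (m - 1) 1 t)) ∧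
  (∀ m i, 1 < i → i < m → m ≤ n → ∀ t ∈ Ici (0 : ℝ),
    x' m i t = x' (m - 1) i t + Real.exp (x m (i + 1) t - x (m - 1) i t)
      - Real.exp (x m i t - x (m - 1) (i - 1) t))

namespace IsGeometricRSK

variable {n m k : ℕ} {π : ℕ → ℝ → ℝ} {r : ℕ → ℕ → ℝ} {x y : ℕ → ℕ → ℝ → ℝ}

theorem apply_zero (h : IsGeometricRSK n π r x y) {ξ : ℕ → ℕ → ℝ} (hπ1 : π 1 0 = ξ 1 1)
    (hπ : ∀ m, 2 ≤ m → m ≤ n →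
      π m 0 = ∑ i ∈ Finset.Icc 1 m, ξ m i - ∑ i ∈ Finset.Icc 1 (m - 1), ξ (m - 1) i)
    (hr : ∀ m k, 2 ≤ k → k ≤ m → m ≤ n →
      r m k = ∑ i ∈ Finset.Icc 1 (k - 1), ξ (m - 1) i - ∑ i ∈ Finset.Icc 1 (k - 1), ξ m i)
    (hk : 1 ≤ k) (hkm : k ≤ m) (hmn : m ≤ n) : x m k 0 = ξ m k := by
  induction m, hk.trans hkm using Nat.le_induction generalizing k with
  | base =>
    obtain rfl : k = 1 := by omega
    rw [h.x_one_one self_mem_Ici, hπ1]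
  | succ m hm ih =>
    exact (h.isRowInsertion (m + 1) (by omega) hmn).x_apply_zero (by omega)
      (fun i hi him ↦ ih hi (by omega) (by omega)) (hπ (m + 1) (by omega) hmn)
      (fun j hj hjm ↦ hr (m + 1) j hj hjm hmn) hk hkm

theorem differentiableOn (h : IsGeometricRSK n π r x y)
    (hπ : ∀ m, 1 ≤ m → m ≤ n → DifferentiableOn ℝ (π m) (Ici 0))
    (hk : 1 ≤ k) (hkm : k ≤ m) (hmn : m ≤ n) : DifferentiableOn ℝ (x m k) (Ici 0) := by
  induction m, hk.trans hkm using Nat.le_induction generalizing k with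
  | base =>
    obtain rfl : k = 1 := by omega
    exact (hπ 1 le_rfl hmn).congr h.x_one_one
  | succ m hm ih =>
    exact (h.isRowInsertion (m + 1) (by omega) hmn).differentiableOn_x (by omega)
      (fun i hi him ↦ ih hi (by omega) (by omega)) (hπ (m + 1) (by omega) hmn) hk hkm

theorem isDynRSKSolution (h : IsGeometricRSK n π r x y) {π' : ℝ → ℕ → ℝ} (hn : 1 ≤ n)
    (hπ : ∀ m, 1 ≤ m → m ≤ n → ∀ t ∈ Ici (0 : ℝ), HasDerivWithinAt (π m) (π' t m) (Ici 0) t) :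
    IsDynRSKSolution n π' x fun m i ↦ derivWithin (x m i) (Ici 0) := by
  have hx (m i : ℕ) (hi : 1 ≤ i) (him : i ≤ m) (hmn : m ≤ n) :
      DifferentiableOn ℝ (x m i) (Ici 0) :=
    h.differentiableOn (fun j hj hjn t ht ↦ (hπ j hj hjn t ht).differentiableWithinAt) hi him hmn
  have hx' (m i : ℕ) (hi : 1 ≤ i) (him : i ≤ m) (hmn : m ≤ n) (t : ℝ) (ht : t ∈ Ici (0 : ℝ)) :
      HasDerivWithinAt (x m i) (derivWithin (x m i) (Ici 0) t) (Ici 0) t :=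
    (hx m i hi him hmn t ht).hasDerivWithinAt
  have hrow (m : ℕ) (hmn : m ≤ n) (i : ℕ) (hi : 1 ≤ i) (him : i < m) :
      ContinuousOn (x (m - 1) i) (Ici 0) :=
    (hx (m - 1) i hi (by omega) (by omega)).continuousOn
  have hπ_cont (m : ℕ) (hm : 1 ≤ m) (hmn : m ≤ n) : ContinuousOn (π m) (Ici 0) :=
    fun t ht ↦ (hπ m hm hmn t ht).continuousWithinAt
  have huniq (t : ℝ) (ht : t ∈ Ici 0) := uniqueDiffOn_Ici (0 : ℝ) t ht
  refine ⟨hx', fun t ht ↦ ?_, fun m hm hmn t ht ↦ ⟨?_, ?_⟩, fun m i hi him hmn t ht ↦ ?_⟩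
  · exact ((hπ 1 le_rfl hn t ht).congr_of_mem h.x_one_one ht).derivWithin (huniq t ht)
  · exact ((h.isRowInsertion m hm hmn).hasDerivWithinAt_x_last hm (hrow m hmn)
      (hπ_cont m (by omega) hmn) ht (hπ m (by omega) hmn t ht)).derivWithin (huniq t ht)
  · exact ((h.isRowInsertion m hm hmn).hasDerivWithinAt_x_one hm (hrow m hmn)
      (hπ_cont m (by omega) hmn) ht
      (hx' (m - 1) 1 le_rfl (by omega) (by omega) t ht)).derivWithin (huniq t ht)
  · exact ((h.isRowInsertion m (by omega) hmn).hasDerivWithinAt_x_mid (hrow m hmn)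
      (hπ_cont m (by omega) hmn) hi him ht
      (hx' (m - 1) i hi.le (by omega) (by omega) t ht)).derivWithin (huniq t ht)

end IsGeometricRSK

theorem stmt4_general {n : ℕ} (hn : 1 ≤ n) {ξ : ℕ → ℕ → ℝ} {η η' : ℝ → ℕ → ℝ}
    (hη : ∀ m, 1 ≤ m → m ≤ n → ∀ t ∈ Ici (0 : ℝ),
      HasDerivWithinAt (fun s ↦ η s m) (η' t m) (Ici 0) t)
    (hη0 : ∀ m, 1 ≤ m → m ≤ n → η 0 m = 0)
    {x y : ℕ → ℕ → ℝ → ℝ} {μ : ℕ → ℝ} {π : ℕ → ℝ → ℝ} {r : ℕ → ℕ → ℝ}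
    (hμ1 : μ 1 = ξ 1 1)
    (hμ : ∀ m, 2 ≤ m → m ≤ n →
      μ m = ∑ i ∈ Finset.Icc 1 m, ξ m i - ∑ i ∈ Finset.Icc 1 (m - 1), ξ (m - 1) i)
    (hπ : ∀ m t, π m t = η t m + μ m)
    (hr : ∀ m k, 2 ≤ k → k ≤ m → m ≤ n →
      r m k = ∑ i ∈ Finset.Icc 1 (k - 1), ξ (m - 1) i - ∑ i ∈ Finset.Icc 1 (k - 1), ξ m i)
    (h : IsGeometricRSK n π r x y) :
    (∀ m i, 1 ≤ i → i ≤ m → m ≤ n → x m i 0 = ξ m i) ∧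
      ∃ x' : ℕ → ℕ → ℝ → ℝ, IsDynRSKSolution n η' x x' := by
  have hπ0 (m : ℕ) (hm : 1 ≤ m) (hmn : m ≤ n) : π m 0 = μ m := by
    rw [hπ, hη0 m hm hmn, zero_add]
  have hπ' (m : ℕ) (hm : 1 ≤ m) (hmn : m ≤ n) (t : ℝ) (ht : t ∈ Ici (0 : ℝ)) :
      HasDerivWithinAt (π m) (η' t m) (Ici 0) t := by
    rw [funext (hπ m)]
    exact (hη m hm hmn t ht).add_const _
  exact ⟨fun m i ↦ h.apply_zero ((hπ0 1 le_rfl hn).trans hμ1)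
      (fun j hj hjn ↦ (hπ0 j (by omega) hjn).trans (hμ j hj hjn)) hr,
    _, h.isDynRSKSolution hn hπ'⟩

/-- The explicit integral formulas defining `Π^ξ η` produce functions
`x^m_i` with `x^m_i(0) = ξ^m_i` which are differentiable and satisfy the geometric RSK
dynamics (dyn-rsk) driven by `η` on `[0, ∞)`.  All indices are 1-based. -/
theorem stmt4 (n : ℕ) (hn : 1 ≤ n) (ξ : ℕ → ℕ → ℝ) (η : ℝ → ℕ → ℝ)
    (hη : ∀ i, ContDiff ℝ (⊤ : ℕ∞) (fun s => η s i)) (hη0 : ∀ i, η 0 i = 0)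
    (x y : ℕ → ℕ → ℝ → ℝ) (μ : ℕ → ℝ) (π : ℕ → ℝ → ℝ) (r : ℕ → ℕ → ℝ)
    (hμ1 : μ 1 = ξ 1 1)
    (hμ : ∀ m, 2 ≤ m → m ≤ n →
      μ m = ∑ i ∈ Finset.Icc 1 m, ξ m i - ∑ i ∈ Finset.Icc 1 (m - 1), ξ (m - 1) i)
    (hπ : ∀ m t, π m t = η t m + μ m)
    (hr : ∀ m k, 2 ≤ k → k ≤ m → m ≤ n →
      r m k = ∑ i ∈ Finset.Icc 1 (k - 1), ξ (m - 1) i - ∑ i ∈ Finset.Icc 1 (k - 1), ξ m i)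
    (hx11 : ∀ t, x 1 1 t = π 1 t)
    (hymm : ∀ m, y m m = π m)
    (hxmm : ∀ m, 2 ≤ m → m ≤ n → ∀ t, x m m t = π m t -
      Real.log (Real.exp (-(r m m)) +
        ∫ s in (0:ℝ)..t, Real.exp (π m s - x (m - 1) (m - 1) s)))
    (hy : ∀ m k, 1 < k → k < m → m ≤ n → ∀ t, y m k t = x (m - 1) k t +
      Real.log (Real.exp (-(r m (k + 1))) +
        ∫ s in (0:ℝ)..t, Real.exp (y m (k + 1) s - x (m - 1) k s)))
    (hxk : ∀ m k, 1 < k → k < m → m ≤ n → ∀ t, x m k t = y m k t -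
      Real.log (Real.exp (-(r m k)) +
        ∫ s in (0:ℝ)..t, Real.exp (y m k s - x (m - 1) (k - 1) s)))
    (hx1 : ∀ m, 2 ≤ m → m ≤ n → ∀ t, x m 1 t = x (m - 1) 1 t +
      Real.log (Real.exp (-(r m 2)) +
        ∫ s in (0:ℝ)..t, Real.exp (y m 2 s - x (m - 1) 1 s))) :
    (∀ m i, 1 ≤ i → i ≤ m → m ≤ n → x m i 0 = ξ m i) ∧
    ∃ x' : ℕ → ℕ → ℝ → ℝ,
      (∀ m i, 1 ≤ i → i ≤ m → m ≤ n → ∀ t ∈ Set.Ici (0 : ℝ),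
        HasDerivWithinAt (x m i) (x' m i t) (Set.Ici 0) t) ∧
      (∀ t ∈ Set.Ici (0 : ℝ), x' 1 1 t = deriv (fun s => η s 1) t) ∧
      (∀ m, 2 ≤ m → m ≤ n → ∀ t ∈ Set.Ici (0 : ℝ),
        x' m m t = deriv (fun s => η s m) t - Real.exp (x m m t - x (m - 1) (m - 1) t) ∧
        x' m 1 t = x' (m - 1) 1 t + Real.exp (x m 2 t - x (m - 1) 1 t)) ∧
      (∀ m i, 1 < i → i < m → m ≤ n → ∀ t ∈ Set.Ici (0 : ℝ),
        x' m i t = x' (m - 1) i t + Real.exp (x m (i + 1) t - x (m - 1) i t)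
          - Real.exp (x m i t - x (m - 1) (i - 1) t)) := by
  exact stmt4_general hn
    (fun m _ _ t _ ↦ ((hη m).differentiable (by simp) t).hasDerivAt.hasDerivWithinAt)
    (fun m _ _ ↦ hη0 m) hμ1 hμ hπ hr
    ⟨fun t _ ↦ hx11 t, fun m hm hmn ↦
      ⟨hymm m, fun k hk hkm t _ ↦ hy m k hk hkm hmn t, fun t _ ↦ hxmm m hm hmn t,
        fun k hk hkm t _ ↦ hxk m k hk hkm hmn t, fun t _ ↦ hx1 m hm hmn t⟩⟩
end

section
/- Let η : [0,∞) → ℝ^n be smooth, and let b, L, R : [0,∞) → GL(n,ℝ) be differentiable matrix-valued functions such that b'(t) = ε_{η'(t)} · b(t), L(t) is lower unitriangular, R(t) is upper triangular and invertible, and b(t)·w̄_0 = L(t)·R(t) for all t ≥ 0. Then L'(t) = L(t)·Π_−(L(t)^{−1} ε_{η'(t)} L(t)) and R'(t) = ε_{d(t)} · R(t), where d(t) ∈ ℝ^n has components d_i(t) = R_{ii}'(t)/R_{ii}(t). -/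
/-- `Π₋(A)`: the strictly lower triangular part of `A`. -/
def lowerPart {n : ℕ} (A : Matrix (Fin n) (Fin n) ℝ) : Matrix (Fin n) (Fin n) ℝ :=
  Matrix.of fun i j : Fin n => if j < i then A i j else 0

/-- `w̄_0`: the matrix with entry `(−1)^{n−i}` in position `(i, n+1−i)` (1-based). -/
def wbar (n : ℕ) : Matrix (Fin n) (Fin n) ℝ :=
  Matrix.of fun i j : Fin n =>
    if (j : ℕ) = n - 1 - (i : ℕ) then (-1 : ℝ) ^ (n - 1 - (i : ℕ)) else 0

/-!
Differentiating `b w = L R` gives `L' R + L R' = ε L R`, that is, `L⁻¹ ε L = L⁻¹ L' + R' R⁻¹`.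
Since the diagonal of `L` is constant, `L⁻¹ L'` is strictly lower triangular, whereas `R' R⁻¹` is
upper triangular, so the two summands are the corresponding parts of `L⁻¹ ε L`. Conjugating a lower
Hessenberg matrix by a lower unitriangular one does not change its entries above the diagonal,
hence above the diagonal `R' R⁻¹` agrees with `ε`.
-/

section TriangularMatrices

variable {ι α β : Type*}

/-- Lower unitriangular matrices, the class of the factor `L` in a Gauss decomposition. -/
structure IsLowerUnitriangular [LT ι] [Zero α] [One α] (L : Matrix ι ι α) : Prop where
  isLowerTriangular : L.IsLowerTriangular
  apply_self : ∀ i, L i i = 1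

/-- Lower Hessenberg matrices: all entries beyond the first superdiagonal vanish. The positions
beyond the superdiagonal are described as those `(i, k)` for which an index lies strictly between
`i` and `k`, so that the index type may be any linear order. -/
def IsLowerHessenberg [LT ι] [Zero α] (A : Matrix ι ι α) : Prop :=
  ∀ ⦃i j k : ι⦄, i < j → j < k → A i k = 0

variable [Fintype ι]

theorem blockTriangular_mul_apply_self [LinearOrder β] [NonUnitalNonAssocSemiring α]
    {A B : Matrix ι ι α} {f : ι → β} (hf : f.Injective) (hA : A.BlockTriangular f)
    (hB : B.BlockTriangular f) (i : ι) : (A * B) i i = A i i * B i i := by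
  rw [Matrix.mul_apply]
  refine Fintype.sum_eq_single i fun k hki => ?_
  rcases (hf.ne hki).lt_or_gt with hk | hk
  · rw [hA hk, zero_mul]
  · rw [hB hk, mul_zero]

theorem blockTriangular_inv_apply_self_mul [DecidableEq ι] [LinearOrder β] [CommRing α]
    {A : Matrix ι ι α} [Invertible A] {f : ι → β} (hf : f.Injective) (hA : A.BlockTriangular f)
    (i : ι) : A⁻¹ i i * A i i = 1 := by
  rw [← blockTriangular_mul_apply_self hf (Matrix.blockTriangular_inv_of_blockTriangular hA) hA,
    Matrix.inv_mul_of_invertible, Matrix.one_apply_eq]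

variable [LinearOrder ι]

namespace IsLowerUnitriangular

variable [CommRing α] {L : Matrix ι ι α}

theorem isUnit (hL : IsLowerUnitriangular L) : IsUnit L := by
  rw [Matrix.isUnit_iff_isUnit_det, Matrix.det_of_isLowerTriangular L hL.isLowerTriangular]
  simp only [hL.apply_self, Finset.prod_const_one, isUnit_one]

theorem inv (hL : IsLowerUnitriangular L) : IsLowerUnitriangular L⁻¹ where
  isLowerTriangular :=
    let := hL.isUnit.invertible
    Matrix.blockTriangular_inv_of_blockTriangular hL.isLowerTriangular
  apply_self i := by
    let := hL.isUnit.invertible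
    simpa only [hL.apply_self, mul_one] using
      blockTriangular_inv_apply_self_mul OrderDual.toDual.injective hL.isLowerTriangular i

end IsLowerUnitriangular

namespace IsLowerHessenberg

theorem mul_apply_of_lt [NonAssocSemiring α] {A L : Matrix ι ι α} (hA : IsLowerHessenberg A)
    (hL : IsLowerUnitriangular L) {i j : ι} (hij : i < j) : (A * L) i j = A i j := by
  rw [Matrix.mul_apply, Fintype.sum_eq_single j, hL.apply_self, mul_one]
  intro k hkj
  rcases hkj.lt_or_gt with hk | hk
  · rw [hL.isLowerTriangular hk, mul_zero]
  · rw [hA hij hk, zero_mul]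

theorem unitriangular_mul_apply_of_lt [NonAssocSemiring α] {A L : Matrix ι ι α}
    (hA : IsLowerHessenberg A) (hL : IsLowerUnitriangular L) {i j : ι} (hij : i < j) :
    (L * A) i j = A i j := by
  rw [Matrix.mul_apply, Fintype.sum_eq_single i, hL.apply_self, one_mul]
  intro k hki
  rcases hki.lt_or_gt with hk | hk
  · rw [hA hk hij, mul_zero]
  · rw [hL.isLowerTriangular hk, zero_mul]

theorem unitriangular_mul [NonAssocSemiring α] {A L : Matrix ι ι α} (hA : IsLowerHessenberg A)
    (hL : IsLowerUnitriangular L) : IsLowerHessenberg (L * A) := fun _ _ _ hij hjk => by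
  rw [hA.unitriangular_mul_apply_of_lt hL (hij.trans hjk), hA hij hjk]

theorem conj_apply_of_lt [CommRing α] {A L : Matrix ι ι α} (hA : IsLowerHessenberg A)
    (hL : IsLowerUnitriangular L) {i j : ι} (hij : i < j) : (L⁻¹ * A * L) i j = A i j := by
  rw [(hA.unitriangular_mul hL.inv).mul_apply_of_lt hL hij,
    hA.unitriangular_mul_apply_of_lt hL.inv hij]

end IsLowerHessenberg

end TriangularMatrices

section Eps

variable {n : ℕ} {lam mu : Fin n → ℝ}

theorem eps_apply_self (i : Fin n) : eps lam i i = lam i := if_pos rfl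

theorem eps_apply_of_lt {i j : Fin n} (hij : i < j) :
    eps lam i j = if (j : ℕ) = i + 1 then 1 else 0 :=
  if_neg (Fin.val_ne_of_ne hij.ne')

theorem eps_isUpperTriangular : (eps lam).IsUpperTriangular := fun i j (hij : j < i) => by
  simp only [eps, Matrix.of_apply]
  rw [if_neg (by omega), if_neg (by omega)]

theorem eps_isLowerHessenberg : IsLowerHessenberg (eps lam) := fun _ _ _ hij hjk => by
  rw [eps_apply_of_lt (hij.trans hjk), if_neg (by omega)]

theorem eq_eps_of_isUpperTriangular {S : Matrix (Fin n) (Fin n) ℝ} (hS : S.IsUpperTriangular)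
    (hdiag : ∀ i, S i i = mu i) (habove : ∀ i j, i < j → S i j = eps lam i j) : S = eps mu := by
  ext i j
  rcases lt_trichotomy i j with hij | rfl | hji
  · rw [habove i j hij, eps_apply_of_lt hij, eps_apply_of_lt hij]
  · rw [hdiag, eps_apply_self]
  · rw [hS hji, eps_isUpperTriangular hji]

end Eps

section GaussDecomposition

theorem inv_mul_mul_eq_add_of_mul_add_mul_eq {ι α : Type*} [Fintype ι] [DecidableEq ι]
    [CommRing α] {A L R L' R' : Matrix ι ι α} [Invertible L] [Invertible R]
    (h : L' * R + L * R' = A * (L * R)) : L⁻¹ * A * L = L⁻¹ * L' + R' * R⁻¹ :=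
  calc L⁻¹ * A * L = L⁻¹ * (A * (L * R)) * R⁻¹ := by
        simp only [← Matrix.mul_assoc, Matrix.mul_inv_cancel_right_of_invertible]
    _ = L⁻¹ * (L' * R + L * R') * R⁻¹ := by rw [h]
    _ = L⁻¹ * L' + R' * R⁻¹ := by
        rw [Matrix.mul_add, Matrix.add_mul, ← Matrix.mul_assoc,
          Matrix.mul_inv_cancel_right_of_invertible, Matrix.inv_mul_cancel_left_of_invertible]

variable {n : ℕ} {A L R L' R' : Matrix (Fin n) (Fin n) ℝ}

theorem lowerPart_add_eq_left {X S : Matrix (Fin n) (Fin n) ℝ} (hX : X.IsLowerTriangular)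
    (hX_diag : ∀ i, X i i = 0) (hS : S.IsUpperTriangular) : lowerPart (X + S) = X := by
  ext i j
  simp only [lowerPart, Matrix.of_apply, Matrix.add_apply]
  rcases lt_trichotomy i j with hij | rfl | hji
  · rw [if_neg hij.not_gt, hX hij]
  · rw [if_neg (lt_irrefl i), hX_diag]
  · rw [if_pos hji, hS hji, add_zero]

theorem lower_factor_deriv_eq (hL : IsLowerUnitriangular L) (hR : R.IsUpperTriangular)
    (hR_unit : IsUnit R) (hL' : L'.IsLowerTriangular) (hL'_diag : ∀ i, L' i i = 0)
    (hR' : R'.IsUpperTriangular) (h : L' * R + L * R' = A * (L * R)) :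
    L' = L * lowerPart (L⁻¹ * A * L) := by
  let := hL.isUnit.invertible
  let := hR_unit.invertible
  have hX_diag (i : Fin n) : (L⁻¹ * L') i i = 0 := by
    rw [blockTriangular_mul_apply_self OrderDual.toDual.injective hL.inv.isLowerTriangular hL',
      hL'_diag, mul_zero]
  have hS : (R' * R⁻¹).IsUpperTriangular :=
    hR'.mul (Matrix.blockTriangular_inv_of_blockTriangular hR)
  rw [inv_mul_mul_eq_add_of_mul_add_mul_eq h,
    lowerPart_add_eq_left (hL.inv.isLowerTriangular.mul hL') hX_diag hS,
    Matrix.mul_inv_cancel_left_of_invertible]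

theorem upper_factor_deriv_eq {lam : Fin n → ℝ} (hL : IsLowerUnitriangular L)
    (hR : R.IsUpperTriangular) (hR_unit : IsUnit R) (hL' : L'.IsLowerTriangular)
    (hR' : R'.IsUpperTriangular) (h : L' * R + L * R' = eps lam * (L * R)) :
    R' = eps (fun i => R' i i / R i i) * R := by
  let := hL.isUnit.invertible
  let := hR_unit.invertible
  have hR_inv : R⁻¹.IsUpperTriangular := Matrix.blockTriangular_inv_of_blockTriangular hR
  have hS_diag (i : Fin n) : (R' * R⁻¹) i i = R' i i / R i i := by
    rw [blockTriangular_mul_apply_self Function.injective_id hR' hR_inv, div_eq_mul_inv,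
      eq_inv_of_mul_eq_one_left
        (blockTriangular_inv_apply_self_mul Function.injective_id hR i)]
  have hS_above (i j : Fin n) (hij : i < j) : (R' * R⁻¹) i j = eps lam i j := by
    rw [← eps_isLowerHessenberg.conj_apply_of_lt hL hij, inv_mul_mul_eq_add_of_mul_add_mul_eq h,
      Matrix.add_apply, (hL.inv.isLowerTriangular.mul hL') hij, zero_add]
  rw [← eq_eps_of_isUpperTriangular (hR'.mul hR_inv) hS_diag hS_above,
    Matrix.inv_mul_cancel_right_of_invertible]

end GaussDecomposition

section Derivatives

variable {𝕜 : Type*} [NontriviallyNormedField 𝕜] {s : Set 𝕜} {t : 𝕜}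

theorem hasDerivWithinAt_unique_of_eqOn {F : Type*} [NormedAddCommGroup F] [NormedSpace 𝕜 F]
    {f g : 𝕜 → F} {f' g' : F} (hs : UniqueDiffWithinAt 𝕜 s t) (ht : t ∈ s)
    (hf : HasDerivWithinAt f f' s t) (hg : HasDerivWithinAt g g' s t) (hfg : Set.EqOn f g s) :
    f' = g' :=
  hs.eq_deriv s hf (hg.congr hfg (hfg ht))

theorem hasDerivWithinAt_matrix_mul_apply {l m p 𝔸 : Type*} [Fintype m] [NormedRing 𝔸]
    [NormedAlgebra 𝕜 𝔸] {A : 𝕜 → Matrix l m 𝔸} {B : 𝕜 → Matrix m p 𝔸}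
    {A' : Matrix l m 𝔸} {B' : Matrix m p 𝔸}
    (hA : ∀ i j, HasDerivWithinAt (fun x => A x i j) (A' i j) s t)
    (hB : ∀ i j, HasDerivWithinAt (fun x => B x i j) (B' i j) s t) (i : l) (j : p) :
    HasDerivWithinAt (fun x => (A x * B x) i j) ((A' * B t + A t * B') i j) s t := by
  simp only [Matrix.mul_apply, Matrix.add_apply, ← Finset.sum_add_distrib]
  exact HasDerivWithinAt.fun_sum fun k _ => (hA i k).fun_mul (hB k j)

end Derivatives

theorem stmt5_general {n : ℕ} {s : Set ℝ} {t : ℝ} (hs : UniqueDiffWithinAt ℝ s t) (ht : t ∈ s)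
    {lam : Fin n → ℝ} {w : Matrix (Fin n) (Fin n) ℝ} {b L R : ℝ → Matrix (Fin n) (Fin n) ℝ}
    {b' L' R' : Matrix (Fin n) (Fin n) ℝ}
    (hb : ∀ i j, HasDerivWithinAt (fun x => b x i j) (b' i j) s t)
    (hL : ∀ i j, HasDerivWithinAt (fun x => L x i j) (L' i j) s t)
    (hR : ∀ i j, HasDerivWithinAt (fun x => R x i j) (R' i j) s t)
    (hODE : b' = eps lam * b t)
    (hL_tri : ∀ x ∈ s, IsLowerUnitriangular (L x))
    (hR_tri : ∀ x ∈ s, (R x).IsUpperTriangular) (hR_unit : IsUnit (R t))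
    (hfact : ∀ x ∈ s, b x * w = L x * R x) :
    L' = L t * lowerPart ((L t)⁻¹ * eps lam * L t) ∧
      R' = eps (fun i => R' i i / R t i i) * R t := by
  have hL'_diag (i : Fin n) : L' i i = 0 :=
    hasDerivWithinAt_unique_of_eqOn hs ht (hL i i) (hasDerivWithinAt_const t s 1)
      fun x hx => (hL_tri x hx).apply_self i
  have hL'_tri : L'.IsLowerTriangular := fun i j hij =>
    hasDerivWithinAt_unique_of_eqOn hs ht (hL i j) (hasDerivWithinAt_const t s 0)
      fun x hx => (hL_tri x hx).isLowerTriangular hij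
  have hR'_tri : R'.IsUpperTriangular := fun i j hij =>
    hasDerivWithinAt_unique_of_eqOn hs ht (hR i j) (hasDerivWithinAt_const t s 0)
      fun x hx => hR_tri x hx hij
  have hfact' : b' * w + b t * 0 = L' * R t + L t * R' := by
    ext i j
    exact hasDerivWithinAt_unique_of_eqOn hs ht
      (hasDerivWithinAt_matrix_mul_apply hb (fun _ _ => hasDerivWithinAt_const t s (w _ _)) i j)
      (hasDerivWithinAt_matrix_mul_apply hL hR i j) fun x hx => congr_fun₂ (hfact x hx) i j
  have hsum : L' * R t + L t * R' = eps lam * (L t * R t) := by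
    rw [← hfact', hODE, ← hfact t ht, Matrix.mul_zero, add_zero, Matrix.mul_assoc]
  exact ⟨lower_factor_deriv_eq (hL_tri t ht) (hR_tri t ht) hR_unit hL'_tri hL'_diag hR'_tri hsum,
    upper_factor_deriv_eq (hL_tri t ht) (hR_tri t ht) hR_unit hL'_tri hR'_tri hsum⟩

/-- If `b' = ε_{η'} b` and `b·w̄_0 = L·R` is a Gauss decomposition with
`L` lower unitriangular and `R` upper triangular invertible, then
`L' = L·Π₋(L⁻¹ ε_{η'} L)` and `R' = ε_d · R` where `d_i = R_{ii}'/R_{ii}`. -/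
theorem stmt5 (n : ℕ) (η : ℝ → Fin n → ℝ) (hη : ∀ i, ContDiff ℝ (⊤ : ℕ∞) (fun s => η s i))
    (b L R b' L' R' : ℝ → Matrix (Fin n) (Fin n) ℝ)
    (hbd : ∀ t ∈ Set.Ici (0 : ℝ), ∀ i j : Fin n,
      HasDerivWithinAt (fun s => b s i j) (b' t i j) (Set.Ici 0) t)
    (hLd : ∀ t ∈ Set.Ici (0 : ℝ), ∀ i j : Fin n,
      HasDerivWithinAt (fun s => L s i j) (L' t i j) (Set.Ici 0) t)
    (hRd : ∀ t ∈ Set.Ici (0 : ℝ), ∀ i j : Fin n,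
      HasDerivWithinAt (fun s => R s i j) (R' t i j) (Set.Ici 0) t)
    (hODE : ∀ t ∈ Set.Ici (0 : ℝ),
      b' t = eps (fun i => deriv (fun s => η s i) t) * b t)
    (hL1 : ∀ t ∈ Set.Ici (0 : ℝ), ∀ i : Fin n, L t i i = 1)
    (hL0 : ∀ t ∈ Set.Ici (0 : ℝ), ∀ i j : Fin n, i < j → L t i j = 0)
    (hR0 : ∀ t ∈ Set.Ici (0 : ℝ), ∀ i j : Fin n, j < i → R t i j = 0)
    (hRinv : ∀ t ∈ Set.Ici (0 : ℝ), IsUnit (R t))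
    (hfact : ∀ t ∈ Set.Ici (0 : ℝ), b t * wbar n = L t * R t) :
    ∀ t ∈ Set.Ici (0 : ℝ),
      L' t = L t * lowerPart ((L t)⁻¹ * eps (fun i => deriv (fun s => η s i) t) * L t) ∧
      R' t = eps (fun i : Fin n => R' t i i / R t i i) * R t := by
  intro t ht
  exact stmt5_general (uniqueDiffOn_Ici 0 t ht) ht (hbd t ht) (hLd t ht) (hRd t ht)
    (hODE t ht) (fun x hx => ⟨hL0 x hx, hL1 x hx⟩) hR0 (hRinv t ht) hfact
end

section
/- Let n ≥ 2, λ ∈ ℝ^n, and let x^m_i : [0,∞) → ℝ (1 ≤ i ≤ m ≤ n) be differentiable functions satisfying the system (dyn). If the triangle X(0) = (x^m_i(0)) belongs to T_λ, then X(t) = (x^m_i(t)) belongs to T_λ for every t ≥ 0. -/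
/-- The triangle `X = (x^m_i)` (1-based, `1 ≤ i ≤ m ≤ n`) belongs to `T_λ`:
`λ_m + l^m_i(X) = λ_{m+1} + r^m_i(X)` for all `1 ≤ i ≤ m < n`, where
`l^m_i = e^{x^{m+1}_{i+1}−x^m_i} + e^{x^{m−1}_i−x^m_i}` (`i < m`),
`l^m_m = e^{x^{m+1}_{m+1}−x^m_m}`,
`r^m_i = e^{x^m_i−x^{m+1}_i} + e^{x^m_i−x^{m−1}_{i−1}}` (`i > 1`), and
`r^m_1 = e^{x^m_1−x^{m+1}_1}`. -/
noncomputable def inTlam (n : ℕ) (lam : ℕ → ℝ) (X : ℕ → ℕ → ℝ) : Prop :=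
  ∀ m i, 1 ≤ i → i ≤ m → m < n →
    lam m + (if i < m then
        Real.exp (X (m + 1) (i + 1) - X m i) + Real.exp (X (m - 1) i - X m i)
      else Real.exp (X (m + 1) (m + 1) - X m m)) =
    lam (m + 1) + (if 1 < i then
        Real.exp (X m i - X (m + 1) i) + Real.exp (X m i - X (m - 1) (i - 1))
      else Real.exp (X m 1 - X (m + 1) 1))

/-! The defects `d^m_i = λ_m + l^m_i − λ_{m+1} − r^m_i` solve a homogeneous linear system: with the
exponentials completed by zero outside the triangle,
`(d^m_i)' = −(e^{x^{m+1}_{i+1}−x^m_i} + e^{x^m_i−x^{m+1}_i}) d^m_i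
  + e^{x^{m−1}_i−x^m_i} d^{m−1}_i + e^{x^m_i−x^{m−1}_{i−1}} d^{m−1}_{i−1}`,
because the products of exponentials along the two paths around a rhombus of the triangle agree.
Since row `m` only feels itself and row `m − 1`, uniqueness for scalar linear equations shows row by
row that defects which vanish at one time vanish at all times. -/

open Set

section LinearODE

variable {E : Type*} [NormedAddCommGroup E] [NormedSpace ℝ E]
  {s : Set ℝ} {c : ℝ → ℝ} {f : ℝ → E} {a b : ℝ}

lemma eq_zero_of_hasDerivWithinAt_smul_of_le (hs : s.OrdConnected) (hc : ContinuousOn c s)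
    (hf : ∀ t ∈ s, HasDerivWithinAt f (c t • f t) s t) (ha : a ∈ s) (hfa : f a = 0)
    (hb : b ∈ s) (hab : a ≤ b) : f b = 0 := by
  have hsub : Icc a b ⊆ s := hs.out ha hb
  obtain ⟨K, hK⟩ := isCompact_Icc.exists_bound_of_continuousOn (hc.mono hsub)
  have hderiv : ∀ t ∈ Ico a b, HasDerivWithinAt f (c t • f t) (Ici t) t := fun t ht =>
    (hf t (hsub (Ico_subset_Icc_self ht))).mono_of_mem_nhdsWithin
      (Filter.mem_of_superset (Icc_mem_nhdsGE ht.2) ((Icc_subset_Icc_left ht.1).trans hsub))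
  have hbound : ∀ t ∈ Ico a b, ‖c t • f t‖ ≤ K * ‖f t‖ := fun t ht => by
    rw [norm_smul]
    gcongr
    exact hK t (Ico_subset_Icc_self ht)
  exact eq_zero_of_abs_deriv_le_mul_abs_self_of_eq_zero_right
    (fun t ht => ((hf t (hsub ht)).mono hsub).continuousWithinAt) hderiv hfa hbound b
    (right_mem_Icc.2 hab)

lemma eq_zero_of_hasDerivWithinAt_smul (hs : s.OrdConnected) (hc : ContinuousOn c s)
    (hf : ∀ t ∈ s, HasDerivWithinAt f (c t • f t) s t) (ha : a ∈ s) (hfa : f a = 0)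
    (hb : b ∈ s) : f b = 0 := by
  rcases le_total a b with hab | hba
  · exact eq_zero_of_hasDerivWithinAt_smul_of_le hs hc hf ha hfa hb hab
  · have hneg : MapsTo Neg.neg (-s) s := fun _ ht => ht
    have hrev : ∀ t ∈ -s, HasDerivWithinAt (fun u => f (-u)) (-c (-t) • f (-t)) (-s) t :=
      fun t ht => by
        simpa [Function.comp_def] using (hf (-t) ht).scomp t (hasDerivWithinAt_neg t (-s)) hneg
    have hrev_ord : (-s).OrdConnected :=
      ⟨fun _ hx _ hy _ hz => hs.out hy hx ⟨neg_le_neg hz.2, neg_le_neg hz.1⟩⟩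
    simpa using eq_zero_of_hasDerivWithinAt_smul_of_le hrev_ord
      (hc.comp continuousOn_neg hneg).neg hrev (a := -a) (b := -b)
      (by simpa using ha) (by simpa using hfa) (by simpa using hb) (neg_le_neg hba)

end LinearODE

/-- The exponential `e^{x^m_i − x^{m+1}_i}`, which drives `x^{m+1}_i` upwards in (dyn). It is
indexed by its position `(m, i)` in the upper of the two rows `m`, `m + 1`, and set to zero unless
`1 ≤ i ≤ m`, so that the boundary cases of (dyn) and of `T_λ` need no separate formulas. -/
noncomputable def pushUp (X : ℕ → ℕ → ℝ) (m i : ℕ) : ℝ :=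
  if 1 ≤ i ∧ i ≤ m then Real.exp (X m i - X (m + 1) i) else 0

/-- The exponential `e^{x^{m+1}_{i+1} − x^m_i}`, which drives `x^{m+1}_{i+1}` downwards in (dyn);
indexed and extended by zero in the same way as `pushUp`. -/
noncomputable def pushDown (X : ℕ → ℕ → ℝ) (m i : ℕ) : ℝ :=
  if 1 ≤ i ∧ i ≤ m then Real.exp (X (m + 1) (i + 1) - X m i) else 0

/-- The right-hand side of (dyn) for `x^m_i`, in one formula for all `1 ≤ i ≤ m`. -/
noncomputable def drift (lam : ℕ → ℝ) (X : ℕ → ℕ → ℝ) (m i : ℕ) : ℝ :=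
  lam m + pushUp X (m - 1) i - pushDown X (m - 1) (i - 1)

/-- The defect `λ_m + l^m_i − λ_{m+1} − r^m_i` of the equation of `T_λ` at `(m, i)`. -/
noncomputable def defect (lam : ℕ → ℝ) (X : ℕ → ℕ → ℝ) (m i : ℕ) : ℝ :=
  lam m + (pushDown X m i + pushUp X (m - 1) i)
    - (lam (m + 1) + (pushUp X m i + pushDown X (m - 1) (i - 1)))

/-- The time-dependent triangle `X` of size `n` solves (dyn) on the set of times `s`. -/
def IsDynSolution (n : ℕ) (lam : ℕ → ℝ) (X : ℝ → ℕ → ℕ → ℝ) (s : Set ℝ) : Prop :=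
  ∀ m i, 1 ≤ i → i ≤ m → m ≤ n → ∀ t ∈ s,
    HasDerivWithinAt (fun u => X u m i) (drift lam (X t) m i) s t

section Weights

variable (lam : ℕ → ℝ) (X : ℕ → ℕ → ℝ) (m i : ℕ)

/- In the triangle both sides are `e^{x^{m+1}_{i+1} − x^{m+1}_i}`, read along the two paths around
the rhombus with top `(m, i)` and bottom `(m + 2, i + 1)`. -/
lemma pushUp_mul_pushDown_rhombus :
    pushUp X (m + 1) (i + 1) * pushDown X (m + 1) i = pushUp X m i * pushDown X m i := by
  by_cases h : 1 ≤ i ∧ i ≤ m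
  · rw [pushUp, pushDown, pushUp, pushDown, if_pos (by omega), if_pos (by omega), if_pos h,
      if_pos h, ← Real.exp_add, ← Real.exp_add]
    ring_nf
  · have h' : ¬ ((1 ≤ i + 1 ∧ i + 1 ≤ m + 1) ∧ 1 ≤ i ∧ i ≤ m + 1) := by omega
    rcases not_and_or.1 h' with hu | hd
    · simp only [pushUp, if_neg h, if_neg hu, zero_mul]
    · simp only [pushUp, pushDown, if_neg h, if_neg hd, mul_zero]

lemma drift_sub_drift_succ :
    drift lam X m i - drift lam X (m + 1) i
      = defect lam X m i - pushDown X m i + pushDown X m (i - 1) := by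
  simp only [drift, defect, Nat.add_sub_cancel]
  ring

lemma drift_succ_succ_sub_drift :
    drift lam X (m + 1) (i + 1) - drift lam X m i
      = -defect lam X m i - pushUp X m i + pushUp X m (i + 1) := by
  simp only [drift, defect, Nat.add_sub_cancel]
  ring

end Weights

lemma inTlam_iff_defect_eq_zero {n : ℕ} {lam : ℕ → ℝ} {X : ℕ → ℕ → ℝ} :
    inTlam n lam X ↔ ∀ m i, 1 ≤ i → i ≤ m → m < n → defect lam X m i = 0 := by
  refine forall₅_congr fun m i hi him _ => ?_
  obtain ⟨m, rfl⟩ : ∃ k, m = k + 1 := Nat.exists_eq_add_one.2 (by omega)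
  obtain ⟨i, rfl⟩ : ∃ k, i = k + 1 := Nat.exists_eq_add_one.2 hi
  have hl : (if i + 1 < m + 1 then
        Real.exp (X (m + 1 + 1) (i + 1 + 1) - X (m + 1) (i + 1))
          + Real.exp (X (m + 1 - 1) (i + 1) - X (m + 1) (i + 1))
      else Real.exp (X (m + 1 + 1) (m + 1 + 1) - X (m + 1) (m + 1)))
      = pushDown X (m + 1) (i + 1) + pushUp X m (i + 1) := by
    rcases him.lt_or_eq with h | h
    · simp [pushDown, pushUp, h, him, Nat.succ_le_of_lt (Nat.lt_of_succ_lt_succ h)]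
    · obtain rfl : i = m := by omega
      simp [pushDown, pushUp]
  have hr : (if 1 < i + 1 then
        Real.exp (X (m + 1) (i + 1) - X (m + 1 + 1) (i + 1))
          + Real.exp (X (m + 1) (i + 1) - X (m + 1 - 1) (i + 1 - 1))
      else Real.exp (X (m + 1) 1 - X (m + 1 + 1) 1))
      = pushUp X (m + 1) (i + 1) + pushDown X m i := by
    rcases Nat.eq_zero_or_pos i with rfl | h
    · simp [pushDown, pushUp]
    · simp [pushDown, pushUp, h, Nat.succ_le_iff, him, Nat.le_of_succ_le_succ him]
  rw [hl, hr, defect, sub_eq_zero]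
  simp only [Nat.add_sub_cancel]

lemma isDynSolution_of_cases {n : ℕ} {lam : ℕ → ℝ} {X : ℝ → ℕ → ℕ → ℝ} {s : Set ℝ}
    (h11 : ∀ t ∈ s, HasDerivWithinAt (fun u => X u 1 1) (lam 1) s t)
    (h1 : ∀ m, 2 ≤ m → m ≤ n → ∀ t ∈ s,
      HasDerivWithinAt (fun u => X u m 1)
        (lam m + Real.exp (X t (m - 1) 1 - X t m 1)) s t)
    (hmm : ∀ m, 2 ≤ m → m ≤ n → ∀ t ∈ s,
      HasDerivWithinAt (fun u => X u m m)
        (lam m - Real.exp (X t m m - X t (m - 1) (m - 1))) s t)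
    (hmi : ∀ m i, 1 < i → i < m → m ≤ n → ∀ t ∈ s,
      HasDerivWithinAt (fun u => X u m i)
        (lam m + Real.exp (X t (m - 1) i - X t m i)
          - Real.exp (X t m i - X t (m - 1) (i - 1))) s t) :
    IsDynSolution n lam X s := by
  intro m i hi him hmn t ht
  obtain ⟨m, rfl⟩ : ∃ k, m = k + 1 := Nat.exists_eq_add_one.2 (by omega)
  obtain ⟨i, rfl⟩ : ∃ k, i = k + 1 := Nat.exists_eq_add_one.2 hi
  rcases him.lt_or_eq with hlt | heq <;> rcases Nat.eq_zero_or_pos i with rfl | hpos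
  · refine (h1 (m + 1) hlt hmn t ht).congr_deriv ?_
    simp [drift, pushUp, pushDown, Nat.succ_le_of_lt (Nat.lt_of_succ_lt_succ hlt)]
  · refine (hmi (m + 1) (i + 1) (by omega) hlt hmn t ht).congr_deriv ?_
    simp [drift, pushUp, pushDown, Nat.succ_le_of_lt (Nat.lt_of_succ_lt_succ hlt),
      Nat.le_of_succ_le_succ him, Nat.succ_le_of_lt hpos]
  · obtain rfl : m = 0 := by omega
    refine (h11 t ht).congr_deriv ?_
    simp [drift, pushUp, pushDown]
  · obtain rfl : i = m := by omega
    refine (hmm (i + 1) (by omega) hmn t ht).congr_deriv ?_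
    simp [drift, pushUp, pushDown, Nat.succ_le_of_lt hpos]

namespace IsDynSolution

variable {n : ℕ} {lam : ℕ → ℝ} {X : ℝ → ℕ → ℕ → ℝ} {s : Set ℝ} {m : ℕ} {t : ℝ}

lemma hasDerivWithinAt_pushUp (hX : IsDynSolution n lam X s) (hm : m < n) (i : ℕ) (ht : t ∈ s) :
    HasDerivWithinAt (fun u => pushUp (X u) m i)
      (pushUp (X t) m i * (defect lam (X t) m i - pushDown (X t) m i + pushDown (X t) m (i - 1)))
      s t := by
  rw [← drift_sub_drift_succ]
  by_cases h : 1 ≤ i ∧ i ≤ m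
  · simpa only [pushUp, if_pos h] using
      ((hX m i h.1 h.2 hm.le t ht).fun_sub (hX (m + 1) i h.1 (by omega) hm t ht)).exp
  · simpa only [pushUp, if_neg h, zero_mul] using hasDerivWithinAt_const t s (0 : ℝ)

lemma hasDerivWithinAt_pushDown (hX : IsDynSolution n lam X s) (hm : m < n) (i : ℕ) (ht : t ∈ s) :
    HasDerivWithinAt (fun u => pushDown (X u) m i)
      (pushDown (X t) m i * (-defect lam (X t) m i - pushUp (X t) m i + pushUp (X t) m (i + 1)))
      s t := by
  rw [← drift_succ_succ_sub_drift]
  by_cases h : 1 ≤ i ∧ i ≤ m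
  · simpa only [pushDown, if_pos h] using
      ((hX (m + 1) (i + 1) (by omega) (by omega) hm t ht).fun_sub
        (hX m i h.1 h.2 hm.le t ht)).exp
  · simpa only [pushDown, if_neg h, zero_mul] using hasDerivWithinAt_const t s (0 : ℝ)

lemma hasDerivWithinAt_defect (hX : IsDynSolution n lam X s) (hm : m + 1 < n) (i : ℕ)
    (ht : t ∈ s) :
    HasDerivWithinAt (fun u => defect lam (X u) (m + 1) (i + 1))
      (-(pushDown (X t) (m + 1) (i + 1) + pushUp (X t) (m + 1) (i + 1))
          * defect lam (X t) (m + 1) (i + 1)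
        + pushUp (X t) m (i + 1) * defect lam (X t) m (i + 1)
        + pushDown (X t) m i * defect lam (X t) m i) s t := by
  have hl := (hX.hasDerivWithinAt_pushDown hm (i + 1) ht).fun_add
    (hX.hasDerivWithinAt_pushUp (Nat.lt_of_succ_lt hm) (i + 1) ht)
  have hr := (hX.hasDerivWithinAt_pushUp hm (i + 1) ht).fun_add
    (hX.hasDerivWithinAt_pushDown (Nat.lt_of_succ_lt hm) i ht)
  refine ((hl.const_add (lam (m + 1))).fun_sub (hr.const_add (lam (m + 2)))).congr_deriv ?_
  simp only [Nat.add_sub_cancel]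
  linear_combination pushUp_mul_pushDown_rhombus (X t) m (i + 1)
    - pushUp_mul_pushDown_rhombus (X t) m i

lemma defect_succ_eq_zero (hX : IsDynSolution n lam X s) (hs : s.OrdConnected) (hm : m + 1 < n)
    (hrow : ∀ t ∈ s, ∀ i, 1 ≤ i → i ≤ m → defect lam (X t) m i = 0) {i : ℕ} {t₀ : ℝ}
    (ht₀ : t₀ ∈ s) (h₀ : defect lam (X t₀) (m + 1) (i + 1) = 0) (ht : t ∈ s) :
    defect lam (X t) (m + 1) (i + 1) = 0 := by
  have hup : ∀ u ∈ s, ∀ j, pushUp (X u) m j * defect lam (X u) m j = 0 := fun u hu j => by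
    by_cases h : 1 ≤ j ∧ j ≤ m
    · rw [hrow u hu j h.1 h.2, mul_zero]
    · rw [pushUp, if_neg h, zero_mul]
  have hdown : ∀ u ∈ s, ∀ j, pushDown (X u) m j * defect lam (X u) m j = 0 := fun u hu j => by
    by_cases h : 1 ≤ j ∧ j ≤ m
    · rw [hrow u hu j h.1 h.2, mul_zero]
    · rw [pushDown, if_neg h, zero_mul]
  have hcont : ContinuousOn
      (fun u => -(pushDown (X u) (m + 1) (i + 1) + pushUp (X u) (m + 1) (i + 1))) s :=
    fun u hu => ((hX.hasDerivWithinAt_pushDown hm (i + 1) hu).fun_add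
      (hX.hasDerivWithinAt_pushUp hm (i + 1) hu)).fun_neg.continuousWithinAt
  refine eq_zero_of_hasDerivWithinAt_smul (f := fun u => defect lam (X u) (m + 1) (i + 1))
    hs hcont (fun u hu => ?_) ht₀ h₀ ht
  simpa only [hup u hu, hdown u hu, add_zero, smul_eq_mul] using
    hX.hasDerivWithinAt_defect hm i hu

end IsDynSolution

theorem stmt6_general {n : ℕ} {lam : ℕ → ℝ} {X : ℝ → ℕ → ℕ → ℝ} {s : Set ℝ}
    (hs : s.OrdConnected) (hX : IsDynSolution n lam X s) {t₀ : ℝ} (ht₀ : t₀ ∈ s)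
    (h₀ : inTlam n lam (X t₀)) : ∀ t ∈ s, inTlam n lam (X t) := by
  suffices hrow : ∀ m < n, ∀ t ∈ s, ∀ i, 1 ≤ i → i ≤ m → defect lam (X t) m i = 0 from
    fun t ht => inTlam_iff_defect_eq_zero.2 fun m i hi him hm => hrow m hm t ht i hi him
  intro m
  induction m with
  | zero => intro _ _ _ i hi hi0; omega
  | succ m ih =>
    intro hm t ht i hi him
    obtain ⟨i, rfl⟩ : ∃ k, i = k + 1 := Nat.exists_eq_add_one.2 hi
    exact hX.defect_succ_eq_zero hs hm (ih (Nat.lt_of_succ_lt hm)) ht₀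
      (inTlam_iff_defect_eq_zero.1 h₀ (m + 1) (i + 1) hi him hm) ht

/-- The set `T_λ` is invariant under the flow (dyn):
if `X(0) ∈ T_λ` and `X(t)` evolves by (dyn), then `X(t) ∈ T_λ` for all `t ≥ 0`. -/
theorem stmt6 (n : ℕ) (hn : 2 ≤ n) (lam : ℕ → ℝ) (x : ℕ → ℕ → ℝ → ℝ)
    (h11 : ∀ t ∈ Set.Ici (0 : ℝ), HasDerivWithinAt (x 1 1) (lam 1) (Set.Ici 0) t)
    (h1 : ∀ m, 2 ≤ m → m ≤ n → ∀ t ∈ Set.Ici (0 : ℝ),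
      HasDerivWithinAt (x m 1)
        (lam m + Real.exp (x (m - 1) 1 t - x m 1 t)) (Set.Ici 0) t)
    (hmm : ∀ m, 2 ≤ m → m ≤ n → ∀ t ∈ Set.Ici (0 : ℝ),
      HasDerivWithinAt (x m m)
        (lam m - Real.exp (x m m t - x (m - 1) (m - 1) t)) (Set.Ici 0) t)
    (hmi : ∀ m i, 1 < i → i < m → m ≤ n → ∀ t ∈ Set.Ici (0 : ℝ),
      HasDerivWithinAt (x m i)
        (lam m + Real.exp (x (m - 1) i t - x m i t)
          - Real.exp (x m i t - x (m - 1) (i - 1) t)) (Set.Ici 0) t)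
    (h0 : inTlam n lam (fun m i => x m i 0)) :
    ∀ t ∈ Set.Ici (0 : ℝ), inTlam n lam (fun m i => x m i t) := by
  exact stmt6_general ordConnected_Ici (isDynSolution_of_cases h11 h1 hmm hmi) self_mem_Ici h0
end

section
/- Let n ≥ 2, λ ∈ ℝ^n, and let X = (x^m_i) be a triangle of size n belonging to T_λ. Define real numbers v^m_i for 1 ≤ i ≤ m ≤ n recursively by: v^1_1 = λ_1; v^m_m = λ_m − e^{x^m_m−x^{m−1}_{m−1}} and v^m_1 = v^{m−1}_1 + e^{x^m_2−x^{m−1}_1} for 2 ≤ m ≤ n; and v^m_i = v^{m−1}_i + e^{x^m_{i+1}−x^{m−1}_i} − e^{x^m_i−x^{m−1}_{i−1}} for 1 < i < m ≤ n. Then for all 2 ≤ m ≤ n: v^m_1 = λ_m + e^{x^{m−1}_1−x^m_1}, and v^m_i = λ_m + e^{x^{m−1}_i−x^m_i} − e^{x^m_i−x^{m−1}_{i−1}} for 1 < i < m. (Hence on triangles in T_λ the vector fields of the flows (dyn-rsk) and (dyn) coincide.) -/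
/-!
The membership equation of `T_λ` at `(m, i)` says exactly that the (dyn) velocity `w` satisfies
`w^m_i + e^{x^{m+1}_{i+1} − x^m_i} = λ_{m+1} + e^{x^m_i − x^{m+1}_i}`: the part of `r^m_i` coming
from row `m - 1` cancels against the left push in `w^m_i`. Subtracting
`e^{x^{m+1}_i − x^m_{i−1}}` turns this into the (dyn-rsk) recursion for `w`, whose solution is
unique.
-/

section

open Real

/-- The leftward push `e^{x^m_i − x^{m−1}_{i−1}}` exerted on `x^m_i` by row `m - 1`, with the
convention `x^{m−1}_0 = +∞`. -/
noncomputable def leftPush (X : ℕ → ℕ → ℝ) (m i : ℕ) : ℝ :=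
  if 1 < i then exp (X m i - X (m - 1) (i - 1)) else 0

/-- The rightward push `e^{x^{m−1}_i − x^m_i}` exerted on `x^m_i` by row `m - 1`, with the
convention `x^{m−1}_m = −∞`. -/
noncomputable def rightPush (X : ℕ → ℕ → ℝ) (m i : ℕ) : ℝ :=
  if i < m then exp (X (m - 1) i - X m i) else 0

/-- The vector field of the flow (dyn) at the triangle `X`. -/
noncomputable def dynVelocity (lam : ℕ → ℝ) (X : ℕ → ℕ → ℝ) (m i : ℕ) : ℝ :=
  lam m + rightPush X m i - leftPush X m i

/-- `v` is the vector field of the flow (dyn-rsk) at the triangle `X` of size `n`. The convention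
on `leftPush` merges the cases `i = 1` and `1 < i` of the recursion, and `v^1_1 = λ_1` with
the formula for `v^m_m`. -/
structure IsRskVelocity (n : ℕ) (lam : ℕ → ℝ) (X v : ℕ → ℕ → ℝ) : Prop where
  diag : ∀ m, 1 ≤ m → m ≤ n → v m m = lam m - leftPush X m m
  succ : ∀ m i, 1 ≤ i → i ≤ m → m < n →
    v (m + 1) i = v m i + exp (X (m + 1) (i + 1) - X m i) - leftPush X (m + 1) i

variable {n m i : ℕ} {lam : ℕ → ℝ} {X v w : ℕ → ℕ → ℝ}

lemma leftPush_one (X : ℕ → ℕ → ℝ) (m : ℕ) : leftPush X m 1 = 0 :=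
  if_neg (lt_irrefl 1)

lemma leftPush_of_one_lt (X : ℕ → ℕ → ℝ) (m : ℕ) (hi : 1 < i) :
    leftPush X m i = exp (X m i - X (m - 1) (i - 1)) :=
  if_pos hi

lemma rightPush_self (X : ℕ → ℕ → ℝ) (m : ℕ) : rightPush X m m = 0 :=
  if_neg (lt_irrefl m)

lemma rightPush_of_lt (X : ℕ → ℕ → ℝ) (him : i < m) :
    rightPush X m i = exp (X (m - 1) i - X m i) :=
  if_pos him

lemma inTlam.push_balance (hX : inTlam n lam X) (hi : 1 ≤ i) (him : i ≤ m) (hmn : m < n) :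
    lam m + (exp (X (m + 1) (i + 1) - X m i) + rightPush X m i) =
      lam (m + 1) + (rightPush X (m + 1) i + leftPush X m i) := by
  have balance := hX m i hi him hmn
  rw [rightPush_of_lt X (Nat.lt_add_one_of_le him), Nat.add_sub_cancel]
  rcases him.lt_or_eq with him | rfl <;> rcases hi.lt_or_eq with hi | rfl <;>
    simpa [leftPush, rightPush, *] using balance

lemma inTlam.dynVelocity_add_exp (hX : inTlam n lam X) (hi : 1 ≤ i) (him : i ≤ m) (hmn : m < n) :
    dynVelocity lam X m i + exp (X (m + 1) (i + 1) - X m i) =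
      lam (m + 1) + rightPush X (m + 1) i := by
  have balance := hX.push_balance hi him hmn
  rw [dynVelocity]
  linarith

lemma dynVelocity_self (lam : ℕ → ℝ) (X : ℕ → ℕ → ℝ) (m : ℕ) :
    dynVelocity lam X m m = lam m - leftPush X m m := by
  rw [dynVelocity, rightPush_self, add_zero]

lemma inTlam.isRskVelocity_dynVelocity (hX : inTlam n lam X) :
    IsRskVelocity n lam X (dynVelocity lam X) where
  diag m _ _ := dynVelocity_self lam X m
  succ m i hi him hmn := by
    rw [hX.dynVelocity_add_exp hi him hmn, dynVelocity]

theorem IsRskVelocity.unique (hv : IsRskVelocity n lam X v) (hw : IsRskVelocity n lam X w)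
    (hi : 1 ≤ i) (him : i ≤ m) (hmn : m ≤ n) : v m i = w m i := by
  induction m, him using Nat.le_induction with
  | base => rw [hv.diag i hi hmn, hw.diag i hi hmn]
  | succ m him ih =>
    rw [hv.succ m i hi him hmn, hw.succ m i hi him hmn, ih (Nat.le_of_succ_le hmn)]

theorem IsRskVelocity.eq_dynVelocity (hv : IsRskVelocity n lam X v) (hX : inTlam n lam X)
    (hi : 1 ≤ i) (him : i ≤ m) (hmn : m ≤ n) : v m i = dynVelocity lam X m i :=
  hv.unique hX.isRskVelocity_dynVelocity hi him hmn

lemma IsRskVelocity.of_recursion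
    (hv11 : v 1 1 = lam 1)
    (hvmm : ∀ m, 2 ≤ m → m ≤ n → v m m = lam m - exp (X m m - X (m - 1) (m - 1)))
    (hvm1 : ∀ m, 2 ≤ m → m ≤ n → v m 1 = v (m - 1) 1 + exp (X m 2 - X (m - 1) 1))
    (hvmi : ∀ m i, 1 < i → i < m → m ≤ n →
      v m i = v (m - 1) i + exp (X m (i + 1) - X (m - 1) i) - exp (X m i - X (m - 1) (i - 1))) :
    IsRskVelocity n lam X v where
  diag m hm hmn := by
    rcases hm.lt_or_eq with hm | rfl
    · rw [hvmm m hm hmn, leftPush_of_one_lt X m hm]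
    · rw [hv11, leftPush_one, sub_zero]
  succ m i hi him hmn := by
    rcases hi.lt_or_eq with hi | rfl
    · rw [hvmi (m + 1) i hi (Nat.lt_add_one_of_le him) hmn, leftPush_of_one_lt X _ hi,
        Nat.add_sub_cancel]
    · rw [hvm1 (m + 1) (Nat.succ_le_succ him) hmn, leftPush_one, sub_zero,
        Nat.add_sub_cancel]

end

/-- On a triangle `X ∈ T_λ`, the (dyn-rsk) recursion for the velocities
`v^m_i` yields the (dyn) expressions: for `2 ≤ m ≤ n`,
`v^m_1 = λ_m + e^{x^{m−1}_1−x^m_1}` and, for `1 < i < m`,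
`v^m_i = λ_m + e^{x^{m−1}_i−x^m_i} − e^{x^m_i−x^{m−1}_{i−1}}`. -/
theorem stmt7 (n : ℕ) (hn : 2 ≤ n) (lam : ℕ → ℝ) (X : ℕ → ℕ → ℝ)
    (hX : inTlam n lam X) (v : ℕ → ℕ → ℝ)
    (hv11 : v 1 1 = lam 1)
    (hvmm : ∀ m, 2 ≤ m → m ≤ n →
      v m m = lam m - Real.exp (X m m - X (m - 1) (m - 1)))
    (hvm1 : ∀ m, 2 ≤ m → m ≤ n →
      v m 1 = v (m - 1) 1 + Real.exp (X m 2 - X (m - 1) 1))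
    (hvmi : ∀ m i, 1 < i → i < m → m ≤ n →
      v m i = v (m - 1) i + Real.exp (X m (i + 1) - X (m - 1) i)
        - Real.exp (X m i - X (m - 1) (i - 1))) :
    ∀ m, 2 ≤ m → m ≤ n →
      v m 1 = lam m + Real.exp (X (m - 1) 1 - X m 1) ∧
      ∀ i, 1 < i → i < m →
        v m i = lam m + Real.exp (X (m - 1) i - X m i)
          - Real.exp (X m i - X (m - 1) (i - 1)) := by
  have hv : IsRskVelocity n lam X v := .of_recursion hv11 hvmm hvm1 hvmi
  intro m hm hmn
  refine ⟨?_, fun i hi him => ?_⟩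
  · rw [hv.eq_dynVelocity hX le_rfl (Nat.le_of_succ_le hm) hmn, dynVelocity,
      rightPush_of_lt X hm, leftPush_one, sub_zero]
  · rw [hv.eq_dynVelocity hX hi.le him.le hmn, dynVelocity,
      rightPush_of_lt X him, leftPush_of_one_lt X m hi]
end

section
/- Let n ≥ 2, λ ∈ ℝ^n, and let X be a triangle of size n belonging to T_λ. Then h(X) · g_λ(X) = ε_λ · h(X); equivalently, since h(X) is lower unitriangular and hence invertible, g_λ(X) = h(X)^{−1} · ε_λ · h(X). -/
/-- `l_{p+1}(a) = I_n + a f_{p+1}` (1-based index `i = p+1`). -/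
def lmat {n : ℕ} (p : ℕ) (a : ℝ) : Matrix (Fin n) (Fin n) ℝ :=
  1 + Matrix.of (fun i j : Fin n => if (i : ℕ) = p + 1 ∧ (j : ℕ) = p then a else 0)

/-- `L_m(u) = l_m(u_m) l_{m−1}(u_{m−1}) ⋯ l_1(u_1)`, where `u p` is the entry `u_{p+1}`. -/
def Lmat {n : ℕ} (m : ℕ) (u : ℕ → ℝ) : Matrix (Fin n) (Fin n) ℝ :=
  (((List.range m).reverse).map (fun p => lmat (n := n) p (u p))).prod

/-- `h(X) = L_1(u^1) ⋯ L_{n−1}(u^{n−1})` with `u^m_i = e^{x^{m+1}_{i+1} − x^m_i}`. -/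
noncomputable def hmat (n : ℕ) (X : ℕ → ℕ → ℝ) : Matrix (Fin n) (Fin n) ℝ :=
  ((List.range (n - 1)).map (fun q => Lmat (n := n) (q + 1) (fun p =>
    Real.exp (X (q + 2) (p + 2) - X (q + 1) (p + 1))))).prod

/-- `g_λ(X)`: the tridiagonal (Lax) matrix (Lean row `i` is row `i+1` of the paper). -/
noncomputable def gmat (n : ℕ) (lam : ℕ → ℝ) (X : ℕ → ℕ → ℝ) : Matrix (Fin n) (Fin n) ℝ :=
  Matrix.of fun i j : Fin n =>
    if (j : ℕ) = (i : ℕ) + 1 then 1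
    else if (i : ℕ) = (j : ℕ) + 1 then -Real.exp (X n ((i : ℕ) + 1) - X n (i : ℕ))
    else if i = j then
      (if (i : ℕ) = 0 then lam n + Real.exp (X (n - 1) 1 - X n 1)
       else if (i : ℕ) = n - 1 then lam n - Real.exp (X n n - X (n - 1) (n - 1))
       else lam n + Real.exp (X (n - 1) ((i : ℕ) + 1) - X n ((i : ℕ) + 1))
         - Real.exp (X n ((i : ℕ) + 1) - X (n - 1) (i : ℕ)))
    else 0

/-!
Put `u_i = e^{x^{m+1}_{i+1} - x^m_i}` and `r_i = e^{x^m_i - x^{m+1}_i}`, let `B` be lower bidiagonal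
with diagonal `1` and subdiagonal `-u_i`, and let `C` be upper bidiagonal with diagonal `r_i` and
superdiagonal `1`. The Lax matrix of level `m + 1` is `λ_{m+1} + B C`, and the equations defining
`T_λ` say precisely that the Lax matrix of level `m`, extended to size `n` by the corresponding part
of `ε_λ`, is `λ_{m+1} + C B`. Since `L_m(u) = B⁻¹`, conjugation by `L_m(u)` exchanges the two.
Composing these Darboux transformations for `m = 1, …, n - 1` leads from level `n`, which is
`g_λ(X)`, down to level `1`, which is `ε_λ`.
-/

theorem semiconjBy_list_range_prod {M : Type*} [Monoid M] (f A : ℕ → M) (k : ℕ)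
    (h : ∀ m < k, SemiconjBy (f m) (A (m + 1)) (A m)) :
    SemiconjBy ((List.range k).map f).prod (A k) (A 0) := by
  induction k with
  | zero => simp
  | succ k ih =>
    rw [List.range_succ, List.map_append, List.prod_append, List.map_singleton,
      List.prod_singleton]
    exact (ih fun m hm => h m (by omega)).mul_left (h k (by omega))

theorem semiconjBy_smul_one_add_mul_comm {R A : Type*} [CommSemiring R] [Semiring A] [Algebra R A]
    {l b : A} (hlb : l * b = 1) (hbl : b * l = 1) (c : R) (r : A) :
    SemiconjBy l (c • 1 + b * r) (c • 1 + r * b) := by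
  have hscalar : SemiconjBy l (c • 1) (c • 1) := by simp [SemiconjBy]
  have hmul : SemiconjBy l (b * r) (r * b) := by
    rw [SemiconjBy, ← mul_assoc, hlb, one_mul, mul_assoc, hbl, mul_one]
  exact hscalar.add_right hmul

section Bidiagonal

variable {R : Type*} (n : ℕ)

section Semiring

variable [Semiring R]

/-- The square matrix with subdiagonal `u` and zeros elsewhere. Sequences are indexed by `ℕ` so that
they do not depend on the size of the matrix, and `u` is indexed by the column. -/
def subdiag (u : ℕ → R) : Matrix (Fin n) (Fin n) R :=
  Matrix.of fun i j => if (i : ℕ) = j + 1 then u j else 0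

variable (R) in
/-- The upper shift matrix: ones on the superdiagonal and zeros elsewhere. -/
def upShift : Matrix (Fin n) (Fin n) R :=
  Matrix.of fun i j => if (j : ℕ) = i + 1 then 1 else 0

theorem subdiag_add (u v : ℕ → R) : subdiag n (u + v) = subdiag n u + subdiag n v := by
  ext i j
  simp only [subdiag, Matrix.add_apply, Matrix.of_apply, Pi.add_apply]
  split_ifs <;> simp

theorem subdiag_mul_subdiag_eq_zero {u v : ℕ → R} (h : ∀ j, u (j + 1) * v j = 0) :
    subdiag n u * subdiag n v = 0 := by
  ext i j
  rw [Matrix.mul_apply, Matrix.zero_apply]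
  refine Finset.sum_eq_zero fun k _ => ?_
  simp only [subdiag, Matrix.of_apply]
  grind

theorem subdiag_mul_diagonal (u r : ℕ → R) :
    subdiag n u * Matrix.diagonal (fun i : Fin n => r i) = subdiag n (fun j => u j * r j) := by
  ext i j
  simp [subdiag]

theorem diagonal_mul_subdiag (r u : ℕ → R) :
    Matrix.diagonal (fun i : Fin n => r i) * subdiag n u =
      subdiag n (fun j => r (j + 1) * u j) := by
  ext i j
  simp only [subdiag, Matrix.diagonal_mul, Matrix.of_apply]
  grind

theorem subdiag_mul_upShift (u : ℕ → R) :
    subdiag n u * upShift R n =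
      Matrix.diagonal (fun i : Fin n => if (i : ℕ) = 0 then 0 else u (i - 1)) := by
  ext ⟨i, hi⟩ j
  simp only [subdiag, upShift, Matrix.mul_apply, Matrix.diagonal_apply, Matrix.of_apply]
  rcases i with _ | i
  · simp
  · rw [Finset.sum_eq_single (⟨i, by omega⟩ : Fin n)] <;> grind

theorem upShift_mul_subdiag {u : ℕ → R} (hu : u (n - 1) = 0) :
    upShift R n * subdiag n u = Matrix.diagonal (fun i : Fin n => u i) := by
  ext ⟨i, hi⟩ j
  simp only [subdiag, upShift, Matrix.mul_apply, Matrix.diagonal_apply, Matrix.of_apply]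
  by_cases hlast : i + 1 < n
  · rw [Finset.sum_eq_single (⟨i + 1, hlast⟩ : Fin n)] <;> grind
  · have hui : u i = 0 := by rwa [show i = n - 1 by omega]
    rw [hui, ite_self]
    exact Finset.sum_eq_zero fun k _ => by grind

end Semiring

section Ring

variable [Ring R]

/-- The lower bidiagonal factor `B` of a Darboux transformation, with unit diagonal and
subdiagonal `-u`. -/
def lowerBidiag (u : ℕ → R) : Matrix (Fin n) (Fin n) R :=
  1 - subdiag n u

/-- The upper bidiagonal factor `C` of a Darboux transformation, with diagonal `r` and unit
superdiagonal. -/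
def upperBidiag (r : ℕ → R) : Matrix (Fin n) (Fin n) R :=
  Matrix.diagonal (fun i : Fin n => r i) + upShift R n

/-- The tridiagonal matrix with diagonal `a`, unit superdiagonal and subdiagonal `-b`; the sign is
that of the Lax matrix `gmat`. -/
def tridiag (a b : ℕ → R) : Matrix (Fin n) (Fin n) R :=
  Matrix.diagonal (fun i : Fin n => a i) + upShift R n - subdiag n b

theorem subdiag_neg (u : ℕ → R) : subdiag n (-u) = -subdiag n u := by
  ext i j
  simp only [subdiag, Matrix.neg_apply, Matrix.of_apply, Pi.neg_apply]
  split_ifs <;> simp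

theorem lowerBidiag_mul_upperBidiag (u r : ℕ → R) :
    lowerBidiag n u * upperBidiag n r =
      tridiag n (fun i => r i - if i = 0 then 0 else u (i - 1)) (fun j => u j * r j) := by
  rw [lowerBidiag, upperBidiag, tridiag, sub_mul, one_mul, mul_add, subdiag_mul_diagonal,
    subdiag_mul_upShift, ← Matrix.diagonal_sub]
  abel

theorem upperBidiag_mul_lowerBidiag {u : ℕ → R} (hu : u (n - 1) = 0) (r : ℕ → R) :
    upperBidiag n r * lowerBidiag n u =
      tridiag n (fun i => r i - u i) (fun j => r (j + 1) * u j) := by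
  rw [lowerBidiag, upperBidiag, tridiag, mul_sub, mul_one, add_mul, diagonal_mul_subdiag,
    upShift_mul_subdiag n hu, ← Matrix.diagonal_sub]
  abel

theorem smul_one_add_tridiag (c : R) (a b : ℕ → R) :
    c • 1 + tridiag n a b = tridiag n (fun i => c + a i) b := by
  rw [tridiag, tridiag, Matrix.smul_one_eq_diagonal, ← Matrix.diagonal_add]
  abel

end Ring

end Bidiagonal

section ElementaryFactors

variable (n : ℕ)

theorem lmat_eq_one_add_subdiag (p : ℕ) (a : ℝ) :
    lmat (n := n) p a = 1 + subdiag n (Pi.single p a) := by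
  ext i j
  simp only [lmat, subdiag, Matrix.add_apply, Matrix.of_apply, Pi.single_apply]
  grind

theorem lmat_mul_lmat_neg (p : ℕ) (a : ℝ) : lmat (n := n) p a * lmat p (-a) = 1 := by
  have hsq : subdiag n (Pi.single p a) * subdiag n (Pi.single p a) = 0 :=
    subdiag_mul_subdiag_eq_zero n fun j => by simp only [Pi.single_apply]; grind
  rw [lmat_eq_one_add_subdiag, lmat_eq_one_add_subdiag, Pi.single_neg, subdiag_neg,
    add_mul, one_mul, mul_add, mul_one, mul_neg, hsq]
  abel

theorem Lmat_succ (m : ℕ) (u : ℕ → ℝ) :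
    Lmat (n := n) (m + 1) u = lmat m (u m) * Lmat m u := by
  simp [Lmat, List.range_succ]

theorem lowerBidiag_indicator_Iio_succ (m : ℕ) (u : ℕ → ℝ) :
    lowerBidiag n ((Set.Iio (m + 1)).indicator u) =
      lowerBidiag n ((Set.Iio m).indicator u) * lmat m (-u m) := by
  have hsplit : (Set.Iio (m + 1)).indicator u = (Set.Iio m).indicator u + Pi.single m (u m) := by
    ext j
    simp only [Set.indicator_apply, Set.mem_Iio, Pi.add_apply, Pi.single_apply]
    grind
  have hmul : subdiag n ((Set.Iio m).indicator u) * subdiag n (Pi.single m (u m)) = 0 :=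
    subdiag_mul_subdiag_eq_zero n fun j => by
      simp only [Set.indicator_apply, Set.mem_Iio, Pi.single_apply]
      grind
  rw [hsplit, lmat_eq_one_add_subdiag, Pi.single_neg, subdiag_neg, lowerBidiag, lowerBidiag,
    subdiag_add, sub_mul, one_mul, mul_add, mul_one, mul_neg, hmul]
  abel

theorem Lmat_mul_lowerBidiag (m : ℕ) (u : ℕ → ℝ) :
    Lmat m u * lowerBidiag n ((Set.Iio m).indicator u) = 1 := by
  induction m with
  | zero =>
    ext i j
    simp [Lmat, lowerBidiag, subdiag]
  | succ m ih =>
    rw [Lmat_succ, lowerBidiag_indicator_Iio_succ, mul_assoc, ← mul_assoc (Lmat m u), ih, one_mul,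
      lmat_mul_lmat_neg]

theorem isUnit_Lmat (m : ℕ) (u : ℕ → ℝ) : IsUnit (Lmat (n := n) m u) :=
  .of_mul_eq_one _ (Lmat_mul_lowerBidiag n m u)

theorem isUnit_hmat (X : ℕ → ℕ → ℝ) : IsUnit (hmat n X) := by
  refine List.prod_isUnit fun A hA => ?_
  obtain ⟨q, -, rfl⟩ := List.mem_map.mp hA
  exact isUnit_Lmat n _ _

end ElementaryFactors

section Lax

/-- The vector `u^m` of the paper, with `lowerWeight X m j` standing for `u^m_{j+1}`; only the
entries `j < m` are meaningful. -/
noncomputable def lowerWeight (X : ℕ → ℕ → ℝ) (m j : ℕ) : ℝ :=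
  Real.exp (X (m + 1) (j + 2) - X m (j + 1))

/-- The diagonal of the upper bidiagonal factor at level `m`. The entries `i < m` are
`e^{x^m_{i+1} - x^{m+1}_{i+1}}`; the others are chosen so that `lam (m + 1)` plus the entry is
the diagonal entry `lam (i + 1)` of `eps`. -/
noncomputable def upperWeight (lam : ℕ → ℝ) (X : ℕ → ℕ → ℝ) (m i : ℕ) : ℝ :=
  if i < m then Real.exp (X m (i + 1) - X (m + 1) (i + 1)) else lam (i + 1) - lam (m + 1)

/-- The Lax matrix of the first `m + 1` rows of the triangle, extended to size `n` by the
corresponding part of `eps`, in factorised form. -/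
noncomputable def laxMat (n : ℕ) (lam : ℕ → ℝ) (X : ℕ → ℕ → ℝ) (m : ℕ) :
    Matrix (Fin n) (Fin n) ℝ :=
  lam (m + 1) • 1 +
    lowerBidiag n ((Set.Iio m).indicator (lowerWeight X m)) * upperBidiag n (upperWeight lam X m)

theorem lowerWeight_mul_upperWeight (lam : ℕ → ℝ) (X : ℕ → ℕ → ℝ) {m j : ℕ} (hj : j < m) :
    lowerWeight X m j * upperWeight lam X m j =
      Real.exp (X (m + 1) (j + 2) - X (m + 1) (j + 1)) := by
  rw [lowerWeight, upperWeight, if_pos hj, ← Real.exp_add, sub_add_sub_cancel]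

theorem upperWeight_succ_mul_lowerWeight (lam : ℕ → ℝ) (X : ℕ → ℕ → ℝ) {m j : ℕ}
    (hj : j + 1 < m) :
    upperWeight lam X m (j + 1) * lowerWeight X m j = Real.exp (X m (j + 2) - X m (j + 1)) := by
  rw [lowerWeight, upperWeight, if_pos hj, ← Real.exp_add, sub_add_sub_cancel]

theorem upperWeight_self (lam : ℕ → ℝ) (X : ℕ → ℕ → ℝ) (m : ℕ) : upperWeight lam X m m = 0 := by
  simp [upperWeight]

variable (n : ℕ) (lam : ℕ → ℝ) (X : ℕ → ℕ → ℝ)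

theorem laxMat_eq_tridiag (m : ℕ) :
    laxMat n lam X m =
      tridiag n
        (fun i => lam (m + 1) + (upperWeight lam X m i -
          if i = 0 then 0 else (Set.Iio m).indicator (lowerWeight X m) (i - 1)))
        (fun j => (Set.Iio m).indicator (lowerWeight X m) j * upperWeight lam X m j) := by
  rw [laxMat, lowerBidiag_mul_upperBidiag, smul_one_add_tridiag]

theorem laxMat_zero : laxMat n lam X 0 = eps (fun i : Fin n => lam (i + 1)) := by
  rw [laxMat_eq_tridiag]
  ext i j
  simp only [tridiag, subdiag, upShift, upperWeight, eps, Matrix.sub_apply, Matrix.add_apply,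
    Matrix.diagonal_apply, Matrix.of_apply, Set.indicator_apply, Set.mem_Iio]
  grind

theorem laxMat_eq_gmat {m : ℕ} (hm : 1 ≤ m) :
    laxMat (m + 1) lam X m = gmat (m + 1) lam X := by
  rw [laxMat_eq_tridiag]
  ext i j
  simp only [tridiag, subdiag, upShift, gmat, Matrix.sub_apply, Matrix.add_apply,
    Matrix.diagonal_apply, Matrix.of_apply, Set.indicator_apply, Set.mem_Iio]
  have hsub (k : ℕ) := lowerWeight_mul_upperWeight lam X (m := m) (j := k)
  simp only [upperWeight, lowerWeight] at hsub ⊢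
  grind

variable {n lam X}

theorem inTlam.weight_balance (hX : inTlam n lam X) {m : ℕ} (hm : m + 1 < n) (i : ℕ) :
    lam (m + 1) + (Set.Iio (m + 1)).indicator (lowerWeight X (m + 1)) i + upperWeight lam X m i =
      lam (m + 2) + upperWeight lam X (m + 1) i +
        if i = 0 then 0 else (Set.Iio m).indicator (lowerWeight X m) (i - 1) := by
  simp only [Set.indicator_apply, Set.mem_Iio]
  rcases lt_or_ge m i with hi | hi
  · simp only [upperWeight]
    grind
  · have h := hX (m + 1) (i + 1) (by omega) (by omega) hm
    simp only [upperWeight, lowerWeight]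
    grind

theorem indicator_lowerWeight_mul_upperWeight (m j : ℕ) :
    (Set.Iio m).indicator (lowerWeight X m) j * upperWeight lam X m j =
      upperWeight lam X (m + 1) (j + 1) *
        (Set.Iio (m + 1)).indicator (lowerWeight X (m + 1)) j := by
  simp only [Set.indicator_apply, Set.mem_Iio]
  rcases lt_trichotomy j m with hj | rfl | hj
  · rw [if_pos hj, if_pos (by omega), lowerWeight_mul_upperWeight lam X hj,
      upperWeight_succ_mul_lowerWeight lam X (by omega)]
  · simp [upperWeight_self]
  · rw [if_neg (by omega), if_neg (by omega), zero_mul, mul_zero]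

theorem inTlam.laxMat_eq_smul_one_add (hX : inTlam n lam X) {m : ℕ} (hm : m + 1 < n) :
    laxMat n lam X m =
      lam (m + 2) • 1 + upperBidiag n (upperWeight lam X (m + 1)) *
        lowerBidiag n ((Set.Iio (m + 1)).indicator (lowerWeight X (m + 1))) := by
  have hlast : (Set.Iio (m + 1)).indicator (lowerWeight X (m + 1)) (n - 1) = 0 :=
    Set.indicator_of_notMem (by simp only [Set.mem_Iio]; omega) _
  rw [laxMat_eq_tridiag, upperBidiag_mul_lowerBidiag n hlast, smul_one_add_tridiag]
  congr 1
  · funext i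
    linarith [hX.weight_balance hm i]
  · funext j
    exact indicator_lowerWeight_mul_upperWeight m j

theorem inTlam.semiconjBy_Lmat (hX : inTlam n lam X) {m : ℕ} (hm : m + 1 < n) :
    SemiconjBy (Lmat (m + 1) (lowerWeight X (m + 1))) (laxMat n lam X (m + 1))
      (laxMat n lam X m) := by
  have hinv := Lmat_mul_lowerBidiag n (m + 1) (lowerWeight X (m + 1))
  rw [hX.laxMat_eq_smul_one_add hm]
  exact semiconjBy_smul_one_add_mul_comm hinv (mul_eq_one_comm.mp hinv) _ _

theorem inTlam.semiconjBy_hmat (hX : inTlam n lam X) (hn : 2 ≤ n) :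
    SemiconjBy (hmat n X) (gmat n lam X) (eps fun i : Fin n => lam (i + 1)) := by
  obtain ⟨m, rfl⟩ : ∃ m, n = m + 1 := ⟨n - 1, by omega⟩
  rw [← laxMat_eq_gmat lam X (by omega), ← laxMat_zero (m + 1) lam X]
  exact semiconjBy_list_range_prod _ (laxMat (m + 1) lam X) m
    fun q hq => hX.semiconjBy_Lmat (by omega)

end Lax

/-- (Kostant-type factorisation.) For `X ∈ T_λ`,
`h(X)·g_λ(X) = ε_λ·h(X)`; equivalently `g_λ(X) = h(X)⁻¹ ε_λ h(X)`. -/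
theorem stmt8 (n : ℕ) (hn : 2 ≤ n) (lam : ℕ → ℝ) (X : ℕ → ℕ → ℝ)
    (hX : inTlam n lam X) :
    hmat n X * gmat n lam X = eps (fun i : Fin n => lam ((i : ℕ) + 1)) * hmat n X ∧
    gmat n lam X = (hmat n X)⁻¹ * (eps (fun i : Fin n => lam ((i : ℕ) + 1)) * hmat n X) := by
  have hconj : hmat n X * gmat n lam X = eps (fun i : Fin n => lam ((i : ℕ) + 1)) * hmat n X :=
    hX.semiconjBy_hmat hn
  have hdet : IsUnit (hmat n X).det := (Matrix.isUnit_iff_isUnit_det _).mp (isUnit_hmat n X)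
  exact ⟨hconj, by rw [← hconj, Matrix.nonsing_inv_mul_cancel_left _ _ hdet]⟩
end

section
/- Let n ≥ 2, λ ∈ ℝ^n, I an open interval, and let x^m_i : I → ℝ (1 ≤ i ≤ m ≤ n) be differentiable functions satisfying the system (dyn) such that the triangle X(t) = (x^m_i(t)) belongs to T_λ for every t ∈ I. Then the functions x_i := x^n_i are twice differentiable on I and satisfy the opposite-sign Toda equations: x_1'' = −e^{x_2−x_1}, x_n'' = e^{x_n−x_{n−1}}, and x_i'' = −e^{x_{i+1}−x_i} + e^{x_i−x_{i−1}} for 1 < i < n. -/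
/-!
On the locus `T_λ` the velocity of the row `y = x^{n-1}` can be expressed through the row `x = x^n`
instead of `x^{n-2}`. With `A_i = e^{y_i - x_i}` and `B_i = e^{x_i - y_{i-1}}`, read as zero where
they leave the triangle, the two rows then move by `x_i' = λ_n + A_i - B_i` and
`y_i' = λ_n + A_i - B_{i+1}`. Hence `A_i' = A_i (B_i - B_{i+1})` and `B_i' = B_i (A_i - A_{i-1})`,
the products `A_i B_i` cancel in `x_i''`, and `A_i B_{i+1} = e^{x_{i+1} - x_i}` is what remains.
-/

open Filter Topology

theorem hasDerivAt_deriv_of_eventually {𝕜 F : Type*} [NontriviallyNormedField 𝕜]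
    [NormedAddCommGroup F] [NormedSpace 𝕜 F] {f g : 𝕜 → F} {g' : F} {t : 𝕜}
    (hf : ∀ᶠ u in 𝓝 t, HasDerivAt f (g u) u) (hg : HasDerivAt g g' t) :
    HasDerivAt (deriv f) g' t :=
  hg.congr_of_eventuallyEq (hf.mono fun _ hu => hu.deriv)

/-- The term `A_i = e^{y_i - x_i}` by which a row `y` of length `n - 1` acts on the next row `x`,
of length `n`. It is zero at `i = n`, where `y_i` does not exist. -/
noncomputable def leftBond (n : ℕ) (y x : ℕ → ℝ) (i : ℕ) : ℝ :=
  if i < n then Real.exp (y i - x i) else 0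

/-- The term `B_i = e^{x_i - y_{i-1}}` by which a row `y` acts on the next row `x`. It is zero at
`i = 1`, where `y_{i-1}` does not exist. -/
noncomputable def rightBond (y x : ℕ → ℝ) (i : ℕ) : ℝ :=
  if 1 < i then Real.exp (x i - y (i - 1)) else 0

/-- The interaction `e^{x_{i+1} - x_i}` of neighbouring particles in the open Toda chain
`x_1, …, x_n`, equal to zero at both ends `i = 0` and `i = n`. -/
noncomputable def todaBond (n : ℕ) (x : ℕ → ℝ) (i : ℕ) : ℝ :=
  if 1 ≤ i ∧ i < n then Real.exp (x (i + 1) - x i) else 0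

theorem leftBond_mul_rightBond_succ (n : ℕ) (y x : ℕ → ℝ) (i : ℕ) :
    leftBond n y x i * rightBond y x (i + 1) = todaBond n x i := by
  rcases i.eq_zero_or_pos with rfl | hi
  · simp [rightBond, todaBond]
  · by_cases hin : i < n <;>
      simp [leftBond, rightBond, todaBond, hi, Nat.succ_le_of_lt hi, hin, ← Real.exp_add]

/-- The rows `y` and `x`, of lengths `n - 1` and `n`, evolve on `s` by the first-order system that
forms a Bäcklund transformation between two Toda chains, with parameter `c`. -/
structure IsBacklundPair (n : ℕ) (c : ℝ) (s : Set ℝ) (y x : ℕ → ℝ → ℝ) : Prop where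
  hasDerivAt_upper : ∀ i, 1 ≤ i → i < n → ∀ t ∈ s,
    HasDerivAt (y i) (c + leftBond n (y · t) (x · t) i - rightBond (y · t) (x · t) (i + 1)) t
  hasDerivAt_lower : ∀ i, 1 ≤ i → i ≤ n → ∀ t ∈ s,
    HasDerivAt (x i) (c + leftBond n (y · t) (x · t) i - rightBond (y · t) (x · t) i) t

namespace IsBacklundPair

variable {n : ℕ} {c : ℝ} {s : Set ℝ} {y x : ℕ → ℝ → ℝ} {i : ℕ} {t : ℝ}

theorem hasDerivAt_leftBond (h : IsBacklundPair n c s y x) (hi : 1 ≤ i) (ht : t ∈ s) :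
    HasDerivAt (fun u => leftBond n (y · u) (x · u) i)
      (leftBond n (y · t) (x · t) i *
        (rightBond (y · t) (x · t) i - rightBond (y · t) (x · t) (i + 1))) t := by
  by_cases hin : i < n
  · have hA (u : ℝ) : leftBond n (y · u) (x · u) i = Real.exp (y i u - x i u) := if_pos hin
    have hd := ((h.hasDerivAt_upper i hi hin t ht).sub (h.hasDerivAt_lower i hi hin.le t ht)).exp
    simp only [hA] at hd ⊢
    exact hd.congr_deriv (by simp only [Pi.sub_apply]; ring)
  · simpa only [leftBond, if_neg hin, zero_mul] using hasDerivAt_const t (0 : ℝ)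

theorem hasDerivAt_rightBond_succ (h : IsBacklundPair n c s y x) (hi : i < n) (ht : t ∈ s) :
    HasDerivAt (fun u => rightBond (y · u) (x · u) (i + 1))
      (rightBond (y · t) (x · t) (i + 1) *
        (leftBond n (y · t) (x · t) (i + 1) - leftBond n (y · t) (x · t) i)) t := by
  rcases i.eq_zero_or_pos with rfl | hpos
  · simpa [rightBond] using hasDerivAt_const t (0 : ℝ)
  · have hB (u : ℝ) : rightBond (y · u) (x · u) (i + 1) = Real.exp (x (i + 1) u - y i u) :=
      if_pos (Nat.lt_add_of_pos_left hpos)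
    have hd := ((h.hasDerivAt_lower (i + 1) i.succ_pos hi t ht).sub
      (h.hasDerivAt_upper i hpos hi t ht)).exp
    simp only [hB] at hd ⊢
    exact hd.congr_deriv (by simp only [Pi.sub_apply]; ring)

theorem hasDerivAt_deriv_lower (h : IsBacklundPair n c s y x) (hs : IsOpen s) (hi : 1 ≤ i)
    (hin : i ≤ n) (ht : t ∈ s) :
    HasDerivAt (deriv (x i)) (todaBond n (x · t) (i - 1) - todaBond n (x · t) i) t := by
  obtain ⟨j, rfl⟩ := Nat.exists_eq_add_of_le' hi
  refine hasDerivAt_deriv_of_eventually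
    (eventually_of_mem (hs.mem_nhds ht) (h.hasDerivAt_lower (j + 1) hi hin)) ?_
  refine (((h.hasDerivAt_leftBond hi ht).const_add c).sub
    (h.hasDerivAt_rightBond_succ hin ht)).congr_deriv ?_
  rw [Nat.add_sub_cancel, ← leftBond_mul_rightBond_succ n (y · t),
    ← leftBond_mul_rightBond_succ n (y · t)]
  ring

end IsBacklundPair

/-- The system (dyn) for a triangle `x` of size `n` with parameter `lam`, on the set `s` of times.
The bonds vanish at the edges, so that one equation covers the four cases of (dyn). -/
def IsDynOn (n : ℕ) (lam : ℕ → ℝ) (s : Set ℝ) (x : ℕ → ℕ → ℝ → ℝ) : Prop :=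
  ∀ m i, 1 ≤ i → i ≤ m → m ≤ n → ∀ t ∈ s, HasDerivAt (x m i)
    (lam m + leftBond m (x (m - 1) · t) (x m · t) i - rightBond (x (m - 1) · t) (x m · t) i) t

theorem isDynOn_of_hasDerivAt {n : ℕ} {lam : ℕ → ℝ} {s : Set ℝ} {x : ℕ → ℕ → ℝ → ℝ}
    (h11 : ∀ t ∈ s, HasDerivAt (x 1 1) (lam 1) t)
    (h1 : ∀ m, 2 ≤ m → m ≤ n → ∀ t ∈ s,
      HasDerivAt (x m 1) (lam m + Real.exp (x (m - 1) 1 t - x m 1 t)) t)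
    (hmm : ∀ m, 2 ≤ m → m ≤ n → ∀ t ∈ s,
      HasDerivAt (x m m) (lam m - Real.exp (x m m t - x (m - 1) (m - 1) t)) t)
    (hmi : ∀ m i, 1 < i → i < m → m ≤ n → ∀ t ∈ s,
      HasDerivAt (x m i)
        (lam m + Real.exp (x (m - 1) i t - x m i t)
          - Real.exp (x m i t - x (m - 1) (i - 1) t)) t) :
    IsDynOn n lam s x := by
  intro m i hi him hmn t ht
  rcases hi.eq_or_lt with rfl | hi <;> rcases him.eq_or_lt with rfl | him
  · simpa [leftBond, rightBond] using h11 t ht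
  · simpa [leftBond, rightBond, him] using h1 m him hmn t ht
  · simpa [leftBond, rightBond, hi] using hmm i hi hmn t ht
  · simpa [leftBond, rightBond, hi, him] using hmi m i hi him hmn t ht

theorem inTlam.velocity_eq {n : ℕ} {lam : ℕ → ℝ} {X : ℕ → ℕ → ℝ} (hX : inTlam n lam X) {m i : ℕ}
    (hi : 1 ≤ i) (him : i ≤ m) (hmn : m < n) :
    lam m + leftBond m (X (m - 1)) (X m) i - rightBond (X (m - 1)) (X m) i =
      lam (m + 1) + leftBond (m + 1) (X m) (X (m + 1)) i
        - rightBond (X m) (X (m + 1)) (i + 1) := by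
  have hA : leftBond (m + 1) (X m) (X (m + 1)) i = Real.exp (X m i - X (m + 1) i) :=
    if_pos (Nat.lt_succ_of_le him)
  have hB : rightBond (X m) (X (m + 1)) (i + 1) = Real.exp (X (m + 1) (i + 1) - X m i) :=
    if_pos (Nat.lt_succ_of_le hi)
  have h := hX m i hi him hmn
  rw [hA, hB, leftBond, rightBond]
  rcases hi.eq_or_lt with rfl | hi <;> rcases him.eq_or_lt with rfl | him <;>
    simp only [*, lt_irrefl, if_true, if_false] at h ⊢ <;> linarith

theorem IsDynOn.isBacklundPair {n : ℕ} {lam : ℕ → ℝ} {s : Set ℝ} {x : ℕ → ℕ → ℝ → ℝ}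
    (h : IsDynOn n lam s x) (hT : ∀ t ∈ s, inTlam n lam (fun m i => x m i t)) {m : ℕ}
    (hm : m < n) : IsBacklundPair (m + 1) (lam (m + 1)) s (x m) (x (m + 1)) where
  hasDerivAt_upper i hi him t ht :=
    (h m i hi (Nat.le_of_lt_succ him) hm.le t ht).congr_deriv
      ((hT t ht).velocity_eq hi (Nat.le_of_lt_succ him) hm)
  hasDerivAt_lower i hi him t ht := h (m + 1) i hi him hm t ht

theorem stmt9_general {n : ℕ} (hn : 2 ≤ n) {c : ℝ} {s : Set ℝ} (hs : IsOpen s)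
    {y x : ℕ → ℝ → ℝ} (h : IsBacklundPair n c s y x) :
    ∀ t ∈ s,
      HasDerivAt (fun u => deriv (x 1) u) (-Real.exp (x 2 t - x 1 t)) t ∧
      HasDerivAt (fun u => deriv (x n) u) (Real.exp (x n t - x (n - 1) t)) t ∧
      ∀ i, 1 < i → i < n →
        HasDerivAt (fun u => deriv (x i) u)
          (-Real.exp (x (i + 1) t - x i t) + Real.exp (x i t - x (i - 1) t)) t := by
  intro t ht
  have toda {i : ℕ} (hi : 1 ≤ i) (hin : i ≤ n) := h.hasDerivAt_deriv_lower hs hi hin ht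
  refine ⟨(toda le_rfl (by lia)).congr_deriv ?_, (toda (by lia) le_rfl).congr_deriv ?_,
    fun i hi hin => (toda hi.le hin.le).congr_deriv ?_⟩
  · simp [todaBond, show 1 < n by lia]
  · simp [todaBond, show 1 ≤ n - 1 ∧ n - 1 < n by lia, show n - 1 + 1 = n by lia]
  · simp [todaBond, show 1 ≤ i - 1 ∧ i - 1 < n by lia, show 1 ≤ i ∧ i < n by lia,
      show i - 1 + 1 = i by lia, neg_add_eq_sub]

/-- If a triangle evolves by (dyn) and stays in `T_λ` on an open
interval `I`, then its bottom row solves the opposite-sign Toda lattice on `I`. -/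
theorem stmt9 (n : ℕ) (hn : 2 ≤ n) (lam : ℕ → ℝ) (a b : ℝ) (x : ℕ → ℕ → ℝ → ℝ)
    (h11 : ∀ t ∈ Set.Ioo a b, HasDerivAt (x 1 1) (lam 1) t)
    (h1 : ∀ m, 2 ≤ m → m ≤ n → ∀ t ∈ Set.Ioo a b,
      HasDerivAt (x m 1) (lam m + Real.exp (x (m - 1) 1 t - x m 1 t)) t)
    (hmm : ∀ m, 2 ≤ m → m ≤ n → ∀ t ∈ Set.Ioo a b,
      HasDerivAt (x m m) (lam m - Real.exp (x m m t - x (m - 1) (m - 1) t)) t)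
    (hmi : ∀ m i, 1 < i → i < m → m ≤ n → ∀ t ∈ Set.Ioo a b,
      HasDerivAt (x m i)
        (lam m + Real.exp (x (m - 1) i t - x m i t)
          - Real.exp (x m i t - x (m - 1) (i - 1) t)) t)
    (hT : ∀ t ∈ Set.Ioo a b, inTlam n lam (fun m i => x m i t)) :
    ∀ t ∈ Set.Ioo a b,
      HasDerivAt (fun s => deriv (x n 1) s) (-Real.exp (x n 2 t - x n 1 t)) t ∧
      HasDerivAt (fun s => deriv (x n n) s) (Real.exp (x n n t - x n (n - 1) t)) t ∧
      ∀ i, 1 < i → i < n →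
        HasDerivAt (fun s => deriv (x n i) s)
          (-Real.exp (x n (i + 1) t - x n i t) + Real.exp (x n i t - x n (i - 1) t)) t := by
  obtain ⟨m, rfl⟩ := Nat.exists_eq_add_of_le' hn
  exact stmt9_general hn isOpen_Ioo
    ((isDynOn_of_hasDerivAt h11 h1 hmm hmi).isBacklundPair hT (m + 1).lt_succ_self)
end
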